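/- arXiv:2010.14837 — 3 statements merged into one kernel-verified Lean document; each statement's English description precedes it below -/
import Mathlib

section
/- Let n ≥ 1 and let s be an element of odd order in the symplectic group Sp_{2n}(F_2). Then for every natural number k, the elements s and s^(2^k) are conjugate in Sp_{2n}(F_2). -/
open Polynomial in
lemma frob_simple {M : Type*} [AddCommGroup M] [Module (ZMod 2)[X] M]
    [IsSimpleModule (ZMod 2)[X] M] : ∃ g : M →+ M, (∀ v, g v = 0 → v = 0) ∧
      (∀ v, g ((X : (ZMod 2)[X]) • v) = (X ^ 2 : (ZMod 2)[X]) • g v) ∧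
      (∀ v, (X : (ZMod 2)[X]) • v = v → g v = v) := by
  obtain ⟨I, hI, ⟨e⟩⟩ := isSimpleModule_iff_quot_maximal.mp
    (inferInstance : IsSimpleModule (ZMod 2)[X] M)
  let _ := Ideal.Quotient.field I
  have : CharP ((ZMod 2)[X] ⧸ I) 2 := charP_of_injective_algebraMap
    (algebraMap (ZMod 2) ((ZMod 2)[X] ⧸ I)).injective 2
  have hsm : ∀ (p : (ZMod 2)[X]) (y : (ZMod 2)[X] ⧸ I),
      p • y = Ideal.Quotient.mk I p * y := fun p y => by
    rw [Algebra.smul_def]; rfl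
  refine ⟨(e.symm.toAddMonoidHom.comp (frobenius ((ZMod 2)[X] ⧸ I) 2).toAddMonoidHom).comp
    e.toAddMonoidHom, ?_, ?_, ?_⟩
  · intro v hv
    simpa [frobenius_def] using hv
  · intro v
    have : frobenius _ 2 (e ((X : (ZMod 2)[X]) • v)) = (X ^ 2 : (ZMod 2)[X]) • frobenius _ 2 (e v) := by
      rw [map_smul, hsm, hsm, map_mul, map_pow, frobenius_def, frobenius_def]
    change e.symm (frobenius _ 2 (e _)) = _ • e.symm (frobenius _ 2 (e _))
    rw [this, map_smul]
  · intro v hv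
    change e.symm (frobenius _ 2 (e v)) = v
    rw [LinearEquiv.symm_apply_eq, frobenius_def]
    have h1 : (X : (ZMod 2)[X]) • e v = e v := by rw [← map_smul, hv]
    rw [hsm] at h1
    by_cases h0 : e v = 0
    · rw [h0]; simp
    have h2 : Ideal.Quotient.mk I X = 1 := by
      exact mul_right_cancel₀ h0 (by rw [h1, one_mul])
    obtain ⟨p, hp⟩ := Ideal.Quotient.mk_surjective (e v)
    have h3 : ∀ q : (ZMod 2)[X], Ideal.Quotient.mk I q = Ideal.Quotient.mk I (C (q.eval 1)) := by
      intro q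
      rw [Ideal.Quotient.eq]
      have : (X - 1 : (ZMod 2)[X]) ∣ q - C (q.eval 1) := by
        simpa using X_sub_C_dvd_sub_C_eval (p := q) (a := 1)
      refine Ideal.mem_of_dvd _ this ?_
      rw [← Ideal.Quotient.eq, h2, map_one]
    rw [← hp, h3 p, ← map_pow, ← map_pow]
    congr 2
    generalize p.eval 1 = c
    revert c; decide

open Polynomial in
lemma frob_semisimple {M : Type*} [AddCommGroup M] [Module (ZMod 2)[X] M]
    [IsSemisimpleModule (ZMod 2)[X] M] : ∃ g : M →+ M, (∀ v, g v = 0 → v = 0) ∧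
      (∀ v, g ((X : (ZMod 2)[X]) • v) = (X ^ 2 : (ZMod 2)[X]) • g v) ∧
      (∀ v, (X : (ZMod 2)[X]) • v = v → g v = v) := by
  obtain ⟨S, e, -, hS⟩ := IsSemisimpleModule.exists_linearEquiv_dfinsupp (ZMod 2)[X] M
  have := fun m : S => (haveI := hS m; frob_simple (M := m.1))
  choose G h1 h2 h3 using this
  refine ⟨(e.symm.toAddMonoidHom.comp (DFinsupp.mapRange.addMonoidHom G)).comp
    e.toAddMonoidHom, ?_, ?_, ?_⟩
  · intro v hv
    change e.symm (DFinsupp.mapRange.addMonoidHom G (e v)) = 0 at hv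
    rw [LinearEquiv.map_eq_zero_iff] at hv
    rw [← e.map_eq_zero_iff]
    ext1 i
    exact h1 i _ (DFunLike.congr_fun hv i)
  · intro v
    change e.symm (DFinsupp.mapRange.addMonoidHom G (e _)) =
      _ • e.symm (DFinsupp.mapRange.addMonoidHom G (e v))
    rw [← map_smul]
    congr 1
    ext1 i
    rw [map_smul]
    exact h2 i (e v i)
  · intro v hv
    change e.symm (DFinsupp.mapRange.addMonoidHom G (e _)) = v
    rw [LinearEquiv.symm_apply_eq]
    ext1 i
    refine h3 i (e v i) ?_
    rw [← DFinsupp.smul_apply, ← map_smul, hv]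

open Polynomial in
lemma exists_frob_matrix {ι : Type*} [Fintype ι] [DecidableEq ι] (s : Matrix ι ι (ZMod 2))
    (m : ℕ) (hm : Odd m) (hs : s ^ m = 1) : ∃ g : Matrix ι ι (ZMod 2), IsUnit g ∧
      g * s = s ^ 2 * g ∧ ∀ e, s * e = e → g * e = e := by
  have hss : Module.End.IsSemisimple (Matrix.toLin' s) := by
    apply Module.End.isSemisimple_of_squarefree_aeval_eq_zero (p := X ^ m - 1)
    · apply Polynomial.Separable.squarefree
      rw [X_pow_sub_one_separable_iff]
      obtain ⟨j, rfl⟩ := hm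
      have : (2 : ZMod 2) = 0 := by decide
      push_cast; rw [this]; simp
    · simp only [map_sub, map_pow, aeval_X, map_one]
      rw [← Matrix.toLin'_pow, hs, Matrix.toLin'_one, sub_eq_zero]; rfl
  have : IsSemisimpleModule (ZMod 2)[X] (Module.AEval' (Matrix.toLin' s)) := hss
  obtain ⟨g, h1, h2, h3⟩ := frob_semisimple (M := Module.AEval' (Matrix.toLin' s))
  let o := Module.AEval'.of (Matrix.toLin' s)
  let G : (ι → ZMod 2) →+ (ι → ZMod 2) :=
    (o.symm.toAddMonoidHom.comp g).comp o.toAddMonoidHom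
  let L : (ι → ZMod 2) →ₗ[ZMod 2] (ι → ZMod 2) := G.toZModLinearMap 2
  have hL : ∀ v, L v = o.symm (g (o v)) := fun v => rfl
  have hm : ∀ v, (LinearMap.toMatrix' L).mulVec v = L v := fun v => by
    rw [← Matrix.toLin'_apply, Matrix.toLin'_toMatrix']
  have hX : ∀ v, o (s.mulVec v) = (X : (ZMod 2)[X]) • o v := fun v => by
    rw [Module.AEval'.X_smul_of, Matrix.toLin'_apply]
  refine ⟨LinearMap.toMatrix' L, ?_, ?_, ?_⟩
  · rw [← Matrix.mulVec_injective_iff_isUnit]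
    refine (injective_iff_map_eq_zero (LinearMap.toMatrix' L).mulVecLin).mpr ?_
    intro v hv
    rw [Matrix.mulVecLin_apply, hm, hL, LinearEquiv.map_eq_zero_iff] at hv
    exact o.map_eq_zero_iff.mp (h1 _ hv)
  · apply Matrix.ext_of_mulVec_single
    intro i
    simp only [← Matrix.mulVec_mulVec, hm, pow_two]
    rw [hL, hL, hX, h2, pow_two, mul_smul, LinearEquiv.symm_apply_eq, hX, hX, LinearEquiv.apply_symm_apply]
  · intro e he
    apply Matrix.ext_of_mulVec_single
    intro i
    rw [← Matrix.mulVec_mulVec, hm, hL, LinearEquiv.symm_apply_eq]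
    apply h3
    rw [← hX, Matrix.mulVec_mulVec, he]

lemma step_nilp {R : Type*} [Ring R] [CharP R 2] (σ : R →+ R)
    (hm : ∀ x y, σ (x * y) = σ y * σ x) (hi : ∀ x, σ (σ x) = x) (s e a : R)
    (ha : Commute a s) (hbs : Commute (σ a) s) (hab : Commute a (σ a))
    (hae : a + σ a = 1 + e) (k : ℕ) : ∀ N, Commute N s → Commute N a → Commute N (σ a) →
      σ N = N → N * e = 0 → N ^ (2 ^ k) = 0 → ∃ c, Commute c s ∧ σ c * (1 + N) * c = 1 := by
  have h1 : σ 1 = 1 := by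
    have := hm (σ 1) 1
    rw [mul_one, hi, mul_one] at this
    exact this.symm
  induction k with
  | zero =>
    intro N _ _ _ _ _ h
    simp at h
    exact ⟨1, Commute.one_left _, by simp [h, h1]⟩
  | succ k ih =>
    intro N hNs hNa hNb hN hNe hp
    set b := σ a with hb
    have hσc : σ (1 + a * N) = 1 + N * b := by rw [map_add, hm, hN, h1]
    have h2 : ∀ x : R, x + x = 0 := CharTwo.add_self_eq_zero
    obtain ⟨N', hN'⟩ : ∃ N', N' = N ^ 2 * (1 + a * b * (1 + N)) := ⟨_, rfl⟩
    have key : (1 + N * b) * (1 + N) * (1 + a * N) = 1 + N' := by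
      have e1 : N * b + N * a = N := by
        rw [← mul_add, add_comm b a, hae, mul_add, hNe, mul_one, add_zero]
      have e2 : (1 + N * b) * (1 + N) * (1 + a * N) = (1 + N) * ((1 + N * b) * (1 + N * a)) := by
        rw [← hNa.eq]
        have : Commute (1 + N * b) (1 + N) := by
          refine Commute.add_left (Commute.one_left _) (Commute.add_right (Commute.one_right _) ?_)
          exact (Commute.refl N).mul_left hNb.symm
        rw [this.eq, mul_assoc]
      have e3 : (1 + N * b) * (1 + N * a) = 1 + N + N ^ 2 * (a * b) := by
        have : N * b * (N * a) = N ^ 2 * (a * b) := by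
          rw [hab.eq, mul_assoc, ← mul_assoc b, ← hNb.eq, pow_two]; simp only [mul_assoc]
        rw [mul_add, add_mul 1 _ (N * a), this, mul_one, one_mul]
        have e6 : 1 + N * b + (N * a + N ^ 2 * (a * b)) = 1 + (N * b + N * a) + N ^ 2 * (a * b) := by abel
        rw [e6, e1]
      rw [e2, e3, hN']
      have e4 : (a * b) * N = N * (a * b) := (hNa.mul_right hNb).symm.eq
      have e5 : (1 + N) * (1 + N + N ^ 2 * (a * b))
          = 1 + N ^ 2 * (1 + (a * b + N * (a * b))) + (N + N) := by
        simp only [mul_add, add_mul, mul_one, one_mul, pow_two, mul_assoc]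
        abel
      rw [e5, h2, mul_add (a * b), e4, mul_one, add_zero]
    have hNab : Commute N (a * b) := hNa.mul_right hNb
    have hNu : Commute N (1 + a * b * (1 + N)) :=
      (Commute.one_right _).add_right
        (hNab.mul_right ((Commute.one_right _).add_right (Commute.refl _)))
    have comm : ∀ y, Commute N y → Commute a y → Commute b y → Commute N' y := by
      intro y h1 h2 h3
      rw [hN']
      exact (h1.pow_left 2).mul_left ((Commute.one_left _).add_left
        ((h2.mul_left h3).mul_left ((Commute.one_left _).add_left h1)))
    obtain ⟨c, hc, hc'⟩ := ih N' (comm s hNs ha hbs) (comm a hNa (Commute.refl _) hab.symm)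
      (comm b hNb hab (Commute.refl _)) (by
        have : σ (1 + N') = 1 + N' := by
          rw [← key, ← hσc, hm, hm, hi, map_add σ 1 N, h1, hN, mul_assoc]
        rw [map_add, h1] at this
        exact add_left_cancel this) (by
        rw [hN', (hNu.pow_left 2).eq, mul_assoc, pow_two, mul_assoc N, hNe, mul_zero, mul_zero]) (by
        rw [hN', (hNu.pow_left 2).mul_pow, ← pow_mul, ← pow_succ', hp, zero_mul])
    refine ⟨(1 + a * N) * c, ((Commute.one_left _).add_left (ha.mul_left hNs)).mul_left hc, ?_⟩
    rw [← key] at hc'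
    rw [hm, hσc]
    simpa only [mul_assoc] using hc'

lemma exists_unitary {R : Type*} [Ring R] [CharP R 2] [Finite R] (σ : R →+ R)
    (hm : ∀ x y, σ (x * y) = σ y * σ x) (hi : ∀ x, σ (σ x) = x) (s g : R) (m : ℕ)
    (hodd : Odd m) (hsm : s ^ m = 1) (hs : σ s * s = 1) (hg : IsUnit g)
    (hgs : g * s = s ^ 2 * g) (hge : ∀ e, s * e = e → g * e = e) :
    ∃ h, σ h * h = 1 ∧ h * s = s ^ 2 * h := by
  obtain ⟨j, rfl⟩ := hodd
  have h1 : σ 1 = 1 := by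
    have := hm (σ 1) 1
    rw [mul_one, hi, mul_one] at this
    exact this.symm
  have h2 : ∀ x : R, x + x = 0 := CharTwo.add_self_eq_zero
  have hss : σ s = s ^ (2 * j) := by
    calc σ s = σ s * (s * s ^ (2 * j)) := by rw [← pow_succ', hsm, mul_one]
      _ = _ := by rw [← mul_assoc, hs, one_mul]
  have hs' : s * σ s = 1 := by rw [hss, ← pow_succ', hsm]
  have hσs : Commute (σ s) s := by rw [hss]; exact (Commute.refl s).pow_left _
  have hσpow : ∀ x n, σ (x ^ n) = σ x ^ n := by
    intro x n
    induction n with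
    | zero => simp [h1]
    | succ n ih => rw [pow_succ, hm, ih, pow_succ']
  obtain ⟨a, ha⟩ : ∃ a, a = ∑ i ∈ Finset.range j, s ^ (i + 1) := ⟨_, rfl⟩
  obtain ⟨e, he⟩ : ∃ e, e = ∑ i ∈ Finset.range (2 * j + 1), s ^ i := ⟨_, rfl⟩
  have hσa : σ a = ∑ i ∈ Finset.range j, s ^ (j + i + 1) := by
    rw [ha, map_sum, ← Finset.sum_range_reflect]
    apply Finset.sum_congr rfl
    intro i hi
    rw [Finset.mem_range] at hi
    have e1 : s ^ (j - 1 - i + 1) * s ^ (j + i + 1) = 1 := by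
      rw [← pow_add, ← hsm]; congr 1; omega
    rw [hσpow]
    calc σ s ^ (j - 1 - i + 1) = σ s ^ (j - 1 - i + 1) *
          (s ^ (j - 1 - i + 1) * s ^ (j + i + 1)) := by rw [e1, mul_one]
      _ = _ := by rw [← mul_assoc, ← hσs.mul_pow, hs, one_pow, one_mul]
  have hae : a + σ a = 1 + e := by
    rw [he, Finset.sum_range_succ', hσa, ha, pow_zero, two_mul, Finset.sum_range_add,
      add_comm (1 : R), add_assoc _ (1 : R), h2, add_zero]
  have comma : ∀ y, Commute s y → Commute a y := by
    intro y hy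
    rw [ha]
    exact Commute.sum_left _ _ _ fun i _ => hy.pow_left _
  have commb : ∀ y, Commute s y → Commute (σ a) y := by
    intro y hy
    rw [hσa]
    exact Commute.sum_left _ _ _ fun i _ => hy.pow_left _
  have comme : ∀ y, Commute s y → Commute e y := by
    intro y hy
    rw [he]
    exact Commute.sum_left _ _ _ fun i _ => hy.pow_left _
  have hσe : σ e = e := by
    have : σ (1 + e) = 1 + e := by rw [← hae, map_add, hi, add_comm]
    rw [map_add, h1] at this
    exact add_left_cancel this
  have hse : s * e = e := by
    have e1 : s * e + 1 = e + 1 := by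
      nth_rewrite 2 [← hsm]
      rw [he, ← Finset.sum_range_succ, Finset.sum_range_succ' _ (2 * j + 1), Finset.mul_sum, pow_zero]
      simp only [pow_succ']
    exact add_right_cancel e1
  have hspe : ∀ i, s ^ i * e = e := by
    intro i
    induction i with
    | zero => simp
    | succ i ih => rw [pow_succ, mul_assoc, hse, ih]
  have hee : e * e = e := by
    nth_rewrite 1 [he]
    rw [Finset.sum_mul, Finset.sum_congr rfl (fun i _ => hspe i), Finset.sum_const,
      Finset.card_range, succ_nsmul, mul_nsmul, two_nsmul, h2, nsmul_zero, zero_add]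
  obtain ⟨x, hx⟩ : ∃ x, x = σ g * g := ⟨_, rfl⟩
  have hσx : σ x = x := by rw [hx, hm, hi]
  have hgs' : σ g * s ^ 2 = s * σ g := by
    have e1 : σ s * σ g = σ g * σ s ^ 2 := by rw [← hm, hgs, hm, hσpow]
    calc σ g * s ^ 2 = (s * σ s) * σ g * s ^ 2 := by rw [hs', one_mul]
      _ = s * (σ s * σ g) * s ^ 2 := by simp only [mul_assoc]
      _ = s * σ g * (σ s ^ 2 * s ^ 2) := by rw [e1]; simp only [mul_assoc]
      _ = _ := by rw [← hσs.mul_pow, hs, one_pow, mul_one]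
  have hxs : Commute s x := by
    change s * x = x * s
    rw [hx, mul_assoc, hgs, ← mul_assoc, ← mul_assoc, hgs']
  have hge' := hge e hse
  have hge2 : e * σ g = e := by
    have := congrArg σ hge'
    rwa [hm, hσe] at this
  have hxe : x * e = e := by
    rw [← (comme x hxs).eq]
    calc e * x = e * e * x := by rw [hee]
      _ = e * (e * x) := by rw [mul_assoc]
      _ = e * (x * e) := by rw [(comme x hxs).eq]
      _ = (e * σ g) * (g * e) := by rw [hx]; simp only [mul_assoc]
      _ = e := by rw [hge2, hge', hee]
  have hxpe : ∀ i, x ^ i * e = e := by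
    intro i
    induction i with
    | zero => simp
    | succ i ih => rw [pow_succ, mul_assoc, hxe, ih]
  have hσg : IsUnit (σ g) := by
    obtain ⟨u, rfl⟩ := hg
    exact ⟨⟨σ u, σ ↑u⁻¹, by rw [← hm, Units.inv_mul, h1], by rw [← hm, Units.mul_inv, h1]⟩, rfl⟩
  have hxu : IsUnit x := by rw [hx]; exact hσg.mul hg
  obtain ⟨q, hq0, hq⟩ : ∃ q, 0 < q ∧ x ^ q = 1 := by
    obtain ⟨u, hu⟩ := hxu
    refine ⟨orderOf u, orderOf_pos u, ?_⟩
    rw [← hu, ← Units.val_pow_eq_pow_val, pow_orderOf_eq_one, Units.val_one]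
  obtain ⟨t, b, ⟨l, rfl⟩, rfl⟩ := Nat.exists_eq_two_pow_mul_odd hq0.ne'
  obtain ⟨c, hc, hc'⟩ := step_nilp σ hm hi s e a (comma s (Commute.refl s)) (commb s (Commute.refl s))
    (comma _ (commb s (Commute.refl s)).symm) hae t (1 + x ^ (2 * l + 1))
    ((Commute.one_left _).add_left (hxs.pow_right _).symm)
    ((Commute.one_left _).add_left (comma _ (hxs.pow_right _)).symm)
    ((Commute.one_left _).add_left (commb _ (hxs.pow_right _)).symm)
    (by rw [map_add, h1, hσpow, hσx]) (by rw [add_mul, hxpe, one_mul, h2])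
    (by rw [add_pow_char_pow_of_commute 2 (h := Commute.one_left _), ← pow_mul,
          mul_comm (2 * l + 1), hq, one_pow, h2])
  rw [← add_assoc, h2, zero_add] at hc'
  refine ⟨g * x ^ l * c, ?_, ?_⟩
  · rw [hm, hm, hσpow, hσx, ← hc']
    have : x ^ (2 * l + 1) = x ^ l * (σ g * g) * x ^ l := by
      rw [← hx, ← pow_succ, ← pow_add]; congr 1; omega
    rw [this]
    simp only [mul_assoc]
  · rw [mul_assoc, hc.eq, ← mul_assoc, mul_assoc g, ← (hxs.pow_right l).eq, ← mul_assoc, hgs]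
    simp only [mul_assoc]

/-- Let `n ≥ 1` and let `s` be an element of odd order in the symplectic group
`Sp_{2n}(𝔽₂)`. Then for every natural number `k`, the elements `s` and `s ^ (2 ^ k)`
are conjugate in `Sp_{2n}(𝔽₂)`. -/
theorem isConj_pow_two_pow_of_odd_orderOf (n : ℕ) (hn : 1 ≤ n)
    (s : Matrix.symplecticGroup (Fin n) (ZMod 2)) (hs : Odd (orderOf s)) (k : ℕ) :
    IsConj s (s ^ (2 ^ k)) := by
  let R := Matrix (Fin n ⊕ Fin n) (Fin n ⊕ Fin n) (ZMod 2)
  let J : R := Matrix.J (Fin n) (ZMod 2)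
  have : Nonempty (Fin n ⊕ Fin n) := ⟨Sum.inl ⟨0, hn⟩⟩
  have hchar : CharP R 2 := Matrix.charP 2
  have hneg : ∀ x : R, -x = x := CharTwo.neg_eq
  have hJJ : J * J = 1 := by
    have := Matrix.J_squared (Fin n) (ZMod 2)
    exact this.trans (hneg 1)
  have hJT : J.transpose = J := (Matrix.J_transpose (Fin n) (ZMod 2)).trans (hneg _)
  let σ : R →+ R :=
    { toFun := fun M => J * M.transpose * J
      map_zero' := by simp
      map_add' := fun x y => by rw [Matrix.transpose_add, mul_add, add_mul] }
  have hσ : ∀ M, σ M = J * M.transpose * J := fun _ => rfl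
  have hm : ∀ x y, σ (x * y) = σ y * σ x := by
    intro x y
    rw [hσ, hσ, hσ, Matrix.transpose_mul]
    calc J * (y.transpose * x.transpose) * J = J * y.transpose * 1 * x.transpose * J := by
          simp only [mul_assoc, one_mul]
      _ = _ := by rw [← hJJ]; simp only [mul_assoc]
  have hi : ∀ x, σ (σ x) = x := by
    intro x
    rw [hσ, hσ, Matrix.transpose_mul, Matrix.transpose_mul, hJT, Matrix.transpose_transpose]
    calc J * (J * (x * J)) * J = (J * J) * x * (J * J) := by simp only [mul_assoc]
      _ = x := by rw [hJJ, one_mul, mul_one]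
  have hmem : ∀ M : R, M ∈ Matrix.symplecticGroup (Fin n) (ZMod 2) ↔ σ M * M = 1 := by
    intro M
    rw [mul_eq_one_comm, SymplecticGroup.mem_iff, hσ]
    change M * J * M.transpose = J ↔ _
    constructor
    · intro h
      calc M * (J * M.transpose * J) = (M * J * M.transpose) * J := by simp only [mul_assoc]
        _ = 1 := by rw [h, hJJ]
    · intro h
      calc M * J * M.transpose = M * (J * M.transpose * J) * J := by
            simp only [mul_assoc, hJJ, mul_one]
        _ = J := by rw [h, one_mul]
  have hsm : (s : R) ^ orderOf s = 1 := by
    have := congrArg (Subtype.val) (pow_orderOf_eq_one s)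
    rwa [SubmonoidClass.coe_pow] at this
  obtain ⟨g, hg, hgs, hge⟩ := exists_frob_matrix (s : R) _ hs hsm
  obtain ⟨h, hh, hhs⟩ := exists_unitary σ hm hi (s : R) g _ hs hsm ((hmem _).mp s.2) hg hgs hge
  let H : Matrix.symplecticGroup (Fin n) (ZMod 2) := ⟨h, (hmem h).mpr hh⟩
  have hH : H * s * H⁻¹ = s ^ 2 := by
    rw [mul_inv_eq_iff_eq_mul]
    exact Subtype.ext hhs
  rw [isConj_iff]
  refine ⟨H ^ k, ?_⟩
  induction k with
  | zero => simp
  | succ k ih =>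
    calc H ^ (k + 1) * s * (H ^ (k + 1))⁻¹ = H ^ k * (H * s * H⁻¹) * (H ^ k)⁻¹ := by
          rw [pow_succ, mul_inv_rev]; simp only [mul_assoc]
      _ = (H ^ k * s * (H ^ k)⁻¹) ^ 2 := by rw [hH, conj_pow]
      _ = _ := by rw [ih, ← pow_mul, pow_succ]
end

section
/- Let n ≥ 1, let G = Sp_{2n}(F_2), and let χ be the character of a finite-dimensional irreducible complex representation of G whose degree χ(1) is odd. Let e be the exponent of G and let e' be the odd part of e (i.e. e' = e divided by the largest power of 2 dividing e). Then for every natural number m coprime to e such that m ≡ 2^k (mod e') for some natural number k, one has χ(g^m) = χ(g) for all g ∈ G. -/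
namespace SpTwo
open Polynomial

section basics
variable {V : Type} [AddCommGroup V] [Module (ZMod 2) V]

/-- Representing a bilinear form through a nondegenerate one. -/
theorem riesz [FiniteDimensional (ZMod 2) V] (B : LinearMap.BilinForm (ZMod 2) V)
    (hnd : ∀ y, (∀ x, B x y = 0) → y = 0)
    (C : LinearMap.BilinForm (ZMod 2) V) :
    ∃ K : Module.End (ZMod 2) V, ∀ x y, B x (K y) = C x y := by
  have hinj : Function.Injective B.flip := by
    rw [← LinearMap.ker_eq_bot, LinearMap.ker_eq_bot']
    intro y hy
    exact hnd y fun x => by simpa using LinearMap.congr_fun hy x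
  let e : V ≃ₗ[ZMod 2] Module.Dual (ZMod 2) V :=
    LinearEquiv.ofInjectiveOfFinrankEq B.flip hinj Subspace.dual_finrank_eq.symm
  refine ⟨e.symm.toLinearMap ∘ₗ C.flip, fun x y => ?_⟩
  have h : B.flip (e.symm (C.flip y)) = C.flip y := e.apply_symm_apply _
  simpa using LinearMap.congr_fun h x

/-- Two systems of vectors with the same Gram data are related by an isometry. -/
theorem gram [FiniteDimensional (ZMod 2) V] (B : LinearMap.BilinForm (ZMod 2) V)
    (hnd : ∀ y, (∀ x, B x y = 0) → y = 0)
    {W : Type*} [AddCommGroup W] [Module (ZMod 2) W] (π p : W →ₗ[ZMod 2] V)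
    (hπ : Function.Surjective π)
    (h : ∀ x y, B (p x) (p y) = B (π x) (π y)) :
    ∃ T : Module.End (ZMod 2) V, (∀ x, T (π x) = p x) ∧ ∀ x y, B (T x) (T y) = B x y := by
  obtain ⟨s, hs⟩ := LinearMap.exists_rightInverse_of_surjective π (LinearMap.range_eq_top.2 hπ)
  have hs' : ∀ x, π (s x) = x := fun x => LinearMap.congr_fun hs x
  have hiso : ∀ x y, B ((p ∘ₗ s) x) ((p ∘ₗ s) y) = B x y := by
    intro x y
    simp [h, hs']
  have hinj : Function.Injective (p ∘ₗ s) := by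
    rw [← LinearMap.ker_eq_bot, LinearMap.ker_eq_bot']
    intro y hy
    refine hnd y fun x => ?_
    rw [← hiso, hy, map_zero]
  have hsurj : Function.Surjective (p ∘ₗ s) := LinearMap.injective_iff_surjective.1 hinj
  refine ⟨p ∘ₗ s, fun x => ?_, hiso⟩
  have : (p ∘ₗ s) (π x) - p x = 0 := by
    refine hnd _ fun y => ?_
    obtain ⟨z, rfl⟩ := hsurj y
    simp only [LinearMap.comp_apply, map_sub, h, hs', sub_self]
  exact sub_eq_zero.1 this

theorem two_smul_zero (x : V) : x + x = 0 := by
  rw [← two_smul (ZMod 2) x, show (2 : ZMod 2) = 0 from rfl, zero_smul]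

theorem end_add_self (x : Module.End (ZMod 2) V) : x + x = 0 := by
  ext y; exact two_smul_zero _

theorem alt_symm (B : LinearMap.BilinForm (ZMod 2) V) (halt : ∀ x, B x x = 0) (x y : V) :
    B x y = B y x := by
  have h := halt (x + y)
  simp only [map_add, LinearMap.add_apply, halt, zero_add, add_zero] at h
  have := CharTwo.add_eq_zero.1 h
  exact this.symm

/-- Solving `L + c L ^ 2 = K` for nilpotent `K` in characteristic two. -/
theorem artin (c K : Module.End (ZMod 2) V) (hc : Commute c K) (n : ℕ) :
    ∃ L : Module.End (ZMod 2) V, L ∈ Algebra.adjoin (ZMod 2) {c, K} ∧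
      L + c * L ^ 2 = K + c ^ (2 ^ n - 1) * K ^ (2 ^ n) := by
  have hcomm : ∀ a ∈ Algebra.adjoin (ZMod 2) ({c, K} : Set (Module.End (ZMod 2) V)),
      ∀ b ∈ Algebra.adjoin (ZMod 2) ({c, K} : Set (Module.End (ZMod 2) V)), a * b = b * a := by
    intro a ha b hb
    refine Algebra.commute_of_mem_adjoin_of_forall_mem_commute hb ?_
    intro b' hb'
    refine (Algebra.commute_of_mem_adjoin_of_forall_mem_commute ha ?_).symm
    intro a' ha'
    simp only [Set.mem_insert_iff, Set.mem_singleton_iff] at ha' hb'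
    rcases ha' with rfl | rfl <;> rcases hb' with rfl | rfl <;>
      first | exact Commute.refl _ | exact hc | exact hc.symm
  have hcm : c ∈ Algebra.adjoin (ZMod 2) ({c, K} : Set (Module.End (ZMod 2) V)) :=
    Algebra.subset_adjoin (by simp)
  have hKm : K ∈ Algebra.adjoin (ZMod 2) ({c, K} : Set (Module.End (ZMod 2) V)) :=
    Algebra.subset_adjoin (by simp)
  induction n with
  | zero =>
    refine ⟨0, Subalgebra.zero_mem _, ?_⟩
    simp [end_add_self]
  | succ n ih =>
    obtain ⟨L, hL, h⟩ := ih
    set M := c ^ (2 ^ n - 1) * K ^ (2 ^ n) with hM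
    have hMm : M ∈ Algebra.adjoin (ZMod 2) ({c, K} : Set (Module.End (ZMod 2) V)) :=
      Subalgebra.mul_mem _ (Subalgebra.pow_mem _ hcm _) (Subalgebra.pow_mem _ hKm _)
    refine ⟨L + M, Subalgebra.add_mem _ hL hMm, ?_⟩
    have h1 : (L + M) ^ 2 = L ^ 2 + M ^ 2 := by
      rw [sq, add_mul, mul_add, mul_add, hcomm M hMm L hL, ← sq, ← sq]
      rw [add_assoc, ← add_assoc (L * M), end_add_self, zero_add]
    have h2 : c * M ^ 2 = c ^ (2 ^ (n + 1) - 1) * K ^ (2 ^ (n + 1)) := by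
      have hcK : Commute (c ^ (2 ^ n - 1)) (K ^ (2 ^ n)) := hc.pow_pow _ _
      rw [hM, hcK.mul_pow, ← mul_assoc, ← pow_mul, ← pow_mul, ← pow_succ', pow_succ 2 n]
      congr 2
      have : 1 ≤ 2 ^ n := Nat.one_le_two_pow
      omega
    rw [h1, mul_add, h2]
    have : L + M + (c * L ^ 2 + c ^ (2 ^ (n + 1) - 1) * K ^ (2 ^ (n + 1))) =
      (L + c * L ^ 2) + M + c ^ (2 ^ (n + 1) - 1) * K ^ (2 ^ (n + 1)) := by abel
    rw [this, h, add_assoc K, end_add_self, add_zero]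

/-- The basic norm equation in the centraliser of `g`. -/
theorem solveX [FiniteDimensional (ZMod 2) V] (B : LinearMap.BilinForm (ZMod 2) V)
    (hnd : ∀ y, (∀ x, B x y = 0) → y = 0)
    (g z zs c τ K : Module.End (ZMod 2) V)
    (hz : ∀ x y, B (z x) y = B x (zs y))
    (hcB : ∀ x y, B (c x) y = B x (c y))
    (hKB : ∀ x y, B (K x) y = B x (K y))
    (hgc : Commute g c) (hgK : Commute g K) (hgz : Commute g z)
    (hzc : Commute z c) (hzK : Commute z K) (hzsc : Commute zs c) (hzsK : Commute zs K)
    (hcK : Commute c K)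
    (hτ : z + zs = τ) (hτc : zs * z = τ * c) (hnil : IsNilpotent K) :
    ∃ X : Module.End (ZMod 2) V, Commute g X ∧ Function.Surjective X ∧
      ∀ x y, B (X x) (X y) = B x y + B x (τ (K y)) := by
  obtain ⟨n, hn⟩ := hnil
  obtain ⟨L, hL, h⟩ := artin c K hcK n
  have hK0 : K ^ (2 ^ n) = 0 := by
    have : n ≤ 2 ^ n := Nat.lt_two_pow_self.le
    rw [← Nat.add_sub_cancel' this, pow_add, hn, zero_mul]
  rw [hK0, mul_zero, add_zero] at h
  have hcom : ∀ a : Module.End (ZMod 2) V, Commute a c → Commute a K → Commute a L := by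
    intro a h1 h2
    refine Algebra.commute_of_mem_adjoin_of_forall_mem_commute hL ?_
    rintro b (rfl | rfl)
    · exact h1
    · exact h2
  have hLB : ∀ x y, B (L x) y = B x (L y) := by
    clear h hcom
    have hcK' : ∀ b ∈ Algebra.adjoin (ZMod 2) ({c, K} : Set (Module.End (ZMod 2) V)),
        ∀ a ∈ Algebra.adjoin (ZMod 2) ({c, K} : Set (Module.End (ZMod 2) V)), a * b = b * a := by
      intro b hb a ha
      refine Algebra.commute_of_mem_adjoin_of_forall_mem_commute hb ?_
      intro b' hb'
      refine (Algebra.commute_of_mem_adjoin_of_forall_mem_commute ha ?_).symm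
      intro a' ha'
      simp only [Set.mem_insert_iff, Set.mem_singleton_iff] at ha' hb'
      rcases ha' with rfl | rfl <;> rcases hb' with rfl | rfl <;>
        first | exact Commute.refl _ | exact hcK | exact hcK.symm
    induction hL using Algebra.adjoin_induction with
    | mem b hb =>
      rcases hb with rfl | rfl
      · exact hcB
      · exact hKB
    | algebraMap r => intro x y; simp [Module.algebraMap_end_apply]
    | add a b ha hb iha ihb =>
      intro x y
      simp only [LinearMap.add_apply, map_add]
      rw [iha, ihb]
    | mul a b ha hb iha ihb =>
      intro x y
      rw [Module.End.mul_apply, iha, ihb, hcK' b hb a ha, Module.End.mul_apply]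
  have hform : ∀ x y, B ((1 + z * L) x) ((1 + z * L) y) = B x y + B x (τ (K y)) := by
    intro x y
    have e1 : B (z (L x)) y = B x ((zs * L) y) := by
      rw [hz, hLB, ← Module.End.mul_apply, (hcom zs hzsc hzsK).eq]
    have e2 : B (z (L x)) (z (L y)) = B x ((τ * (c * L ^ 2)) y) := by
      rw [hz, hLB, ← Module.End.mul_apply, ← Module.End.mul_apply, ← Module.End.mul_apply]
      congr 2
      have e4 := ((hcom zs hzsc hzsK).mul_left (hcom z hzc hzK)).eq
      rw [← mul_assoc τ, ← hτc, sq, ← mul_assoc (zs * z), e4]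
      simp only [mul_assoc]
    have e3 : τ * K = z * L + (zs * L + τ * (c * L ^ 2)) := by
      rw [← h, mul_add, ← add_assoc, ← add_mul, hτ]
    simp only [LinearMap.add_apply, Module.End.one_apply, Module.End.mul_apply, map_add]
    rw [e1, e2]
    rw [show τ (K y) = (z * L + (zs * L + τ * (c * L ^ 2))) y by rw [← e3]; rfl]
    simp only [LinearMap.add_apply, map_add, Module.End.mul_apply]
    abel
  refine ⟨1 + z * L, ?_, ?_, hform⟩
  · exact (Commute.one_right g).add_right (hgz.mul_right (hcom g hgc hgK))
  · refine LinearMap.injective_iff_surjective.1 ?_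
    rw [← LinearMap.ker_eq_bot, LinearMap.ker_eq_bot']
    intro y hy
    have h1 : (1 + τ * K) y = 0 := by
      refine hnd _ fun x => ?_
      have := hform x y
      rw [hy, map_zero] at this
      simpa using this.symm
    have hcomm : Commute τ K := by rw [← hτ]; exact hzK.add_left hzsK
    have hnilp : IsNilpotent (τ * K) := ⟨n, by rw [hcomm.mul_pow, hn, mul_zero]⟩
    obtain ⟨a, ha⟩ := hnilp.isUnit_one_add
    have := congrArg (fun w => (↑a⁻¹ : Module.End (ZMod 2) V) w) h1
    simp only [map_zero] at this
    rw [← ha, ← Module.End.mul_apply, Units.inv_mul] at this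
    simpa using this

/-- The part on which `g + g⁻¹` is invertible. -/
theorem oth [FiniteDimensional (ZMod 2) V] (B : LinearMap.BilinForm (ZMod 2) V)
    (halt : ∀ x, B x x = 0) (hnd : ∀ y, (∀ x, B x y = 0) → y = 0)
    (g g' s : Module.End (ZMod 2) V) (hgg : g * g' = 1) (hgg' : g' * g = 1)
    (hg : ∀ x y, B (g x) (g y) = B x y)
    (hs : s * (g + g') = 1) (hs' : (g + g') * s = 1)
    (m : ℕ) (T₀ : Module.End (ZMod 2) V) (hT₀ : Function.Injective T₀)
    (hTg : T₀ * g = g ^ m * T₀) :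
    ∃ T : Module.End (ZMod 2) V, T * g = g ^ m * T ∧ ∀ x y, B (T x) (T y) = B x y := by
  have hsym := alt_symm B halt
  have hadj : ∀ x y, B (g x) y = B x (g' y) := by
    intro x y
    rw [← hg x, ← Module.End.mul_apply, hgg]; rfl
  have hadj' : ∀ x y, B (g' x) y = B x (g y) := by
    intro x y
    rw [hsym, ← hadj, hsym]
  have hadjm : ∀ (n : ℕ) x y, B ((g ^ n) x) ((g ^ n) y) = B x y := by
    intro n
    induction n with
    | zero => simp
    | succ n ih => intro x y; rw [pow_succ', Module.End.mul_apply, Module.End.mul_apply, hg, ih]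
  obtain ⟨H, hH⟩ := riesz B hnd ((B.comp T₀ T₀))
  simp only [LinearMap.BilinForm.comp_apply] at hH
  have hHB : ∀ x y, B (H x) y = B x (H y) := by
    intro x y
    rw [hsym, hH, hH, hsym]
  have hHg : Commute g H := by
    ext y
    refine sub_eq_zero.1 (hnd _ fun x => ?_)
    rw [map_sub, Module.End.mul_apply, Module.End.mul_apply, hH, ← hadj', hH]
    have e : T₀ (g y) = (g ^ m) (T₀ y) := LinearMap.congr_fun hTg y
    have e' : T₀ x = (g ^ m) (T₀ (g' x)) := by
      have := LinearMap.congr_fun hTg (g' x)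
      simp only [Module.End.mul_apply] at this
      rw [← this, ← Module.End.mul_apply g g', hgg]; rfl
    rw [e, e', hadjm, sub_self]
  have hHinj : Function.Injective H := by
    rw [← LinearMap.ker_eq_bot, LinearMap.ker_eq_bot']
    intro y hy
    apply hT₀
    rw [map_zero]
    refine hnd _ fun x => ?_
    obtain ⟨x, rfl⟩ := LinearMap.injective_iff_surjective.1 hT₀ x
    rw [← hH, hy, map_zero]
  have hHu : IsUnit H := by
    rw [Module.End.isUnit_iff]
    exact ⟨hHinj, LinearMap.injective_iff_surjective.1 hHinj⟩
  obtain ⟨h, rfl⟩ := hHu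
  haveI : Finite V := Module.finite_of_finite (ZMod 2)
  haveI : Finite (Module.End (ZMod 2) V) := Module.finite_of_finite (ZMod 2)
  have hord : 0 < orderOf h := orderOf_pos h
  obtain ⟨a, o, ho, hao⟩ := Nat.exists_eq_two_pow_mul_odd hord.ne'
  obtain ⟨i, rfl⟩ := ho
  set H : Module.End (ZMod 2) V := ↑h with hHdef
  have hpow : (H ^ (2 * i + 1)) ^ (2 ^ a) = 1 := by
    rw [← pow_mul, mul_comm, ← hao, hHdef, ← Units.val_pow_eq_pow_val, pow_orderOf_eq_one]; rfl
  set K := H ^ (2 * i + 1) + 1 with hK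
  haveI : CharP (Module.End (ZMod 2) V) 2 ∨ Subsingleton V := by
    by_cases hV : Subsingleton V
    · exact Or.inr hV
    · left
      haveI := not_subsingleton_iff_nontrivial.1 hV
      exact charP_of_injective_algebraMap (algebraMap (ZMod 2) (Module.End (ZMod 2) V)).injective 2
  have hnil : IsNilpotent K := by
    rcases this with hch | hss
    · refine ⟨2 ^ a, ?_⟩
      rw [hK, add_pow_char_pow_of_commute _ _ (Commute.one_right _), hpow, one_pow, end_add_self]
    · exact ⟨1, Subsingleton.elim _ _⟩
  have hHpB : ∀ (n : ℕ) x y, B ((H ^ n) x) y = B x ((H ^ n) y) := by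
    intro n
    induction n with
    | zero => simp
    | succ n ih =>
      intro x y
      rw [pow_succ, Module.End.mul_apply, ih, hHB, ← Module.End.mul_apply, ← pow_succ', ← pow_succ]
  have hKB : ∀ x y, B (K x) y = B x (K y) := by
    intro x y
    simp only [hK, LinearMap.add_apply, map_add, Module.End.one_apply, hHpB]
  have hgK : Commute g K := (hHg.pow_right _).add_right (Commute.one_right _)
  have hg'K : Commute g' K := by
    have : g' * (g * K) * g' = g' * (K * g) * g' := by rw [hgK.eq]
    rw [← mul_assoc, hgg', one_mul, mul_assoc, mul_assoc, hgg, mul_one] at this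
    exact this.symm
  have hgt : Commute g (g + g') := (Commute.refl g).add_right (by rw [Commute, SemiconjBy, hgg, hgg'])
  have hg't : Commute g' (g + g') :=
    (show Commute g' g by rw [Commute, SemiconjBy, hgg, hgg']).add_right (Commute.refl g')
  have htK : Commute (g + g') K := hgK.add_left hg'K
  have inv_comm : ∀ b : Module.End (ZMod 2) V, Commute b (g + g') → Commute b s := by
    intro b hb
    have : s * (b * (g + g')) * s = s * ((g + g') * b) * s := by rw [hb.eq]
    rw [← mul_assoc s (g + g'), hs, one_mul, mul_assoc, mul_assoc, hs', mul_one] at this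
    exact this.symm
  have hsg := inv_comm g hgt
  have hsg' := inv_comm g' hg't
  have hsK := inv_comm K htK.symm
  have hsB : ∀ x y, B (s x) y = B x (s y) := by
    intro x y
    have e1 : y = (g + g') (s y) := by rw [← Module.End.mul_apply, hs']; rfl
    have e2 : (g + g') (s x) = x := by rw [← Module.End.mul_apply, hs']; rfl
    conv_lhs => rw [e1]
    conv_rhs => rw [← e2]
    simp only [LinearMap.add_apply, map_add, hadj, hadj']
    rw [add_comm]
  have hss : Commute s s := Commute.refl s
  obtain ⟨X, hXg, hXs, hXB⟩ := solveX B hnd g (g * s) (g' * s) (s * s) 1 K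
    (by
      intro x y
      rw [Module.End.mul_apply, hadj, hsB, ← Module.End.mul_apply, hsg'.eq])
    (by
      intro x y
      rw [Module.End.mul_apply, hsB, hsB, Module.End.mul_apply])
    hKB (hsg.mul_right hsg) hgK ((Commute.refl g).mul_right hsg)
    ((hsg.mul_left hss).mul_right (hsg.mul_left hss))
    (hgK.mul_left hsK.symm)
    ((hsg'.mul_left hss).mul_right (hsg'.mul_left hss))
    (hg'K.mul_left hsK.symm) (hsK.symm.mul_left hsK.symm)
    (by rw [← add_mul, hs'])
    (by rw [mul_assoc, ← mul_assoc s, ← hsg.eq, mul_assoc, ← mul_assoc g' g, hgg', one_mul])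
    hnil
  obtain ⟨T, hT, hTB⟩ := gram B hnd X (T₀ * H ^ i) hXs (by
    intro x y
    rw [Module.End.mul_apply, Module.End.mul_apply, ← hH, hHpB, hXB, ← Module.End.mul_apply,
      ← Module.End.mul_apply, ← pow_succ, ← pow_add, show i + 1 + i = 2 * i + 1 by ring]
    rw [show H ^ (2 * i + 1) = K + 1 by rw [hK, add_assoc, end_add_self, add_zero]]
    simp only [LinearMap.add_apply, map_add, Module.End.one_apply]
    rw [add_comm])
  refine ⟨T, ?_, hTB⟩
  ext x
  obtain ⟨x, rfl⟩ := hXs x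
  rw [Module.End.mul_apply, Module.End.mul_apply, ← Module.End.mul_apply g X, hXg.eq,
    Module.End.mul_apply, hT, hT, ← Module.End.mul_apply, ← Module.End.mul_apply, mul_assoc,
    ← (hHg.pow_right i).eq, ← mul_assoc, hTg, mul_assoc]

end basics
end SpTwo

namespace SpTwo
open Polynomial

theorem aeval_pow_two_pow {K : Type*} [Field K] [Algebra (ZMod 2) K] (x : K) (b : (ZMod 2)[X])
    (k : ℕ) : aeval (x ^ 2 ^ k) b = (aeval x b) ^ 2 ^ k := by
  induction k generalizing x with
  | zero => simp
  | succ k ih =>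
    rw [pow_succ 2 k, pow_mul, ← expand_aeval 2, ZMod.expand_card, map_pow, ih, ← pow_mul]

theorem irr_dvd_expand (p : (ZMod 2)[X]) (hp : Irreducible p) (a e' m k : ℕ)
    (hdvd : p ∣ X ^ (2 ^ a * e') - 1) (hmod : m ≡ 2 ^ k [MOD e']) (b : (ZMod 2)[X]) :
    p ∣ expand (ZMod 2) m b ↔ p ∣ b := by
  have : Fact (Irreducible p) := ⟨hp⟩
  have : CharP (AdjoinRoot p) 2 :=
    charP_of_injective_algebraMap (algebraMap (ZMod 2) (AdjoinRoot p)).injective 2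
  have key : ∀ c : (ZMod 2)[X], p ∣ c ↔ aeval (AdjoinRoot.root p) c = 0 := by
    intro c
    rw [AdjoinRoot.aeval_eq, AdjoinRoot.mk_eq_zero]
  have h1 : (AdjoinRoot.root p) ^ (2 ^ a * e') = 1 := by
    have := (key _).1 hdvd
    simpa [sub_eq_zero] using this
  rw [ExpChar.pow_prime_pow_mul_eq_one_iff 2] at h1
  have h2 : (AdjoinRoot.root p) ^ m = (AdjoinRoot.root p) ^ 2 ^ k := by
    rw [pow_eq_pow_mod m h1, pow_eq_pow_mod (2 ^ k) h1, hmod]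
  rw [key, key, expand_aeval, h2, aeval_pow_two_pow]
  simp

theorem irr_pow_dvd_expand (p : (ZMod 2)[X]) (hp : Irreducible p) (a e' m k : ℕ) (hN : 2 ^ a * e' ≠ 0)
    (hdvd : p ∣ X ^ (2 ^ a * e') - 1) (hm : Odd m) (hmod : m ≡ 2 ^ k [MOD e'])
    (e : ℕ) (b : (ZMod 2)[X]) :
    p ^ e ∣ expand (ZMod 2) m b ↔ p ^ e ∣ b := by
  have h1 := irr_dvd_expand p hp a e' m k hdvd hmod
  obtain ⟨r, hr⟩ := (h1 p).2 dvd_rfl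
  have hpr : Prime p := hp.prime
  have hX : ¬ p ∣ X := by
    intro h
    have h2 : p ∣ X ^ (2 ^ a * e') := dvd_pow h hN
    have := dvd_sub h2 hdvd
    rw [sub_sub_cancel] at this
    exact hp.not_isUnit (isUnit_of_dvd_one this)
  have hrp : ¬ p ∣ r := by
    rintro ⟨q, rfl⟩
    have hd := congrArg derivative hr
    rw [derivative_expand] at hd
    have h3 : p ∣ derivative (p * (p * q)) := by
      rw [derivative_mul, derivative_mul]
      exact dvd_add (Dvd.intro_left _ (by ring : derivative p * q * p = derivative p * (p * q)))
        (Dvd.intro _ rfl)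
    rw [← hd] at h3
    have hmm : (m : (ZMod 2)[X]) = 1 := by
      obtain ⟨j, rfl⟩ := hm
      push_cast
      rw [show (2 : (ZMod 2)[X]) = 0 from CharTwo.two_eq_zero]; simp
    rw [hmm, one_mul] at h3
    rcases hpr.dvd_or_dvd h3 with h4 | h4
    · rw [h1] at h4
      have hsep : p.Separable := PerfectField.separable_of_irreducible hp
      have := hsep.isUnit_of_dvd' dvd_rfl h4
      exact hp.not_isUnit this
    · exact hX (hpr.dvd_of_dvd_pow h4)
  induction e generalizing b with
  | zero => simp
  | succ e ih =>
    constructor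
    · intro h
      obtain ⟨c, rfl⟩ := (ih b).1 ((pow_dvd_pow p (Nat.le_succ e)).trans h)
      rw [map_mul, map_pow, hr, mul_pow, mul_assoc, pow_succ] at h
      have h5 := (mul_dvd_mul_iff_left (pow_ne_zero e hp.ne_zero)).1 h
      rcases hpr.dvd_or_dvd h5 with h6 | h6
      · exact absurd (hpr.dvd_of_dvd_pow h6) hrp
      · rw [pow_succ]
        exact mul_dvd_mul_left _ ((h1 c).1 h6)
    · rintro ⟨c, rfl⟩
      rw [map_mul, map_pow, hr, mul_pow, mul_assoc]
      exact Dvd.intro _ rfl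

theorem gl {V : Type} [AddCommGroup V] [Module (ZMod 2) V] [FiniteDimensional (ZMod 2) V]
    (g : Module.End (ZMod 2) V) (a e' m k : ℕ) (hN : 2 ^ a * e' ≠ 0) (hg : g ^ (2 ^ a * e') = 1)
    (hm : Odd m) (hmod : m ≡ 2 ^ k [MOD e']) :
    ∃ T₀ : Module.End (ZMod 2) V, Function.Injective T₀ ∧ T₀ * g = g ^ m * T₀ := by
  have hpoly : aeval g (X ^ (2 ^ a * e') - 1 : (ZMod 2)[X]) = 0 := by simp [hg]
  have hne : (X ^ (2 ^ a * e') - 1 : (ZMod 2)[X]) ≠ 0 := 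
    (monic_X_pow_sub_C (1 : ZMod 2) hN).ne_zero
  have hkill : ∀ x : Module.AEval' g, (X ^ (2 ^ a * e') - 1 : (ZMod 2)[X]) • x = 0 := by
    intro x
    obtain ⟨y, rfl⟩ := (Module.AEval'.of g).surjective x
    rw [← Module.AEval.of_aeval_smul, hpoly, zero_smul, map_zero]
  have htors : Module.IsTorsion (ZMod 2)[X] (Module.AEval' g) := by
    intro x
    exact ⟨⟨_, mem_nonZeroDivisors_of_ne_zero hne⟩, hkill x⟩
  have : Module.Finite (ZMod 2)[X] (Module.AEval' g) := inferInstance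
  obtain ⟨ι, _, p, hp, e, ⟨f⟩⟩ := Module.equiv_directSum_of_isTorsion htors
  classical
  have hdv : ∀ i, e i ≠ 0 → p i ∣ X ^ (2 ^ a * e') - 1 := by
    intro i hi
    have h1 := hkill (f.symm (DirectSum.lof (ZMod 2)[X] ι (fun i => (ZMod 2)[X] ⧸ Submodule.span (ZMod 2)[X] {p i ^ e i}) i (Submodule.Quotient.mk 1)))
    rw [← map_smul, LinearEquiv.map_eq_zero_iff, ← map_smul] at h1
    have h2 := congrArg (fun z => DirectSum.component (ZMod 2)[X] ι _ i z) h1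
    simp only [DirectSum.component.lof_self, map_zero] at h2
    rw [← Submodule.Quotient.mk_smul, Submodule.Quotient.mk_eq_zero, smul_eq_mul, mul_one] at h2
    exact (dvd_pow_self _ hi).trans (Ideal.mem_span_singleton.1 h2)
  have hcomap : ∀ i, Ideal.comap (expand (ZMod 2) m : (ZMod 2)[X] →ₐ[ZMod 2] (ZMod 2)[X]).toRingHom (Ideal.span {p i ^ e i}) = Ideal.span {p i ^ e i} := by
    intro i
    ext b
    rw [Ideal.mem_comap, Ideal.mem_span_singleton, Ideal.mem_span_singleton]
    by_cases hi : e i = 0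
    · simp [hi]
    · exact irr_pow_dvd_expand (p i) (hp i) a e' m k hN (hdv i hi) hm hmod (e i) b
  let σ : ∀ i, ((ZMod 2)[X] ⧸ Ideal.span {p i ^ e i}) →+* ((ZMod 2)[X] ⧸ Ideal.span {p i ^ e i}) :=
    fun i => Ideal.quotientMap _ _ (hcomap i).ge
  have hσ : ∀ i, Function.Injective (σ i) := fun i => Ideal.quotientMap_injective' (hcomap i).le
  let S : (DirectSum ι fun i => (ZMod 2)[X] ⧸ Submodule.span (ZMod 2)[X] {p i ^ e i}) →+ 
     (DirectSum ι fun i => (ZMod 2)[X] ⧸ Submodule.span (ZMod 2)[X] {p i ^ e i}) :=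
    DirectSum.map fun i => ((σ i : _ →+* _) : _ →+ _)
  have hS : Function.Injective S := (DirectSum.map_injective _).2 hσ
  have hSX : ∀ x, S ((X : (ZMod 2)[X]) • x) = (X ^ m : (ZMod 2)[X]) • S x := by
    intro x
    ext i
    change σ i ((X : (ZMod 2)[X]) • x i) = (X ^ m : (ZMod 2)[X]) • σ i (x i)
    obtain ⟨y, hy⟩ := Ideal.Quotient.mk_surjective (x i)
    rw [← hy]
    change σ i (Ideal.Quotient.mk _ (X * y)) = Ideal.Quotient.mk _ (X ^ m * expand (ZMod 2) m y)
    simp [σ]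
  let T : V →+ V := 
    ((Module.AEval'.of g).symm.toAddEquiv.toAddMonoidHom.comp
      (f.symm.toAddEquiv.toAddMonoidHom.comp S)).comp
      (f.toAddEquiv.toAddMonoidHom.comp (Module.AEval'.of g).toAddEquiv.toAddMonoidHom)
  have hT : ∀ x, T x = (Module.AEval'.of g).symm (f.symm (S (f (Module.AEval'.of g x)))) := fun x => rfl
  refine ⟨AddMonoidHom.toZModLinearMap 2 T, ?_, ?_⟩
  · intro x y h
    simp only [AddMonoidHom.coe_toZModLinearMap, hT] at h
    exact (Module.AEval'.of g).injective (f.injective (hS (f.symm.injective ((Module.AEval'.of g).symm.injective h))))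
  · ext x
    simp only [AddMonoidHom.coe_toZModLinearMap, hT, Module.End.mul_apply]
    have : Module.AEval'.of g (g x) = (X : (ZMod 2)[X]) • Module.AEval'.of g x := by
      rw [Module.AEval'.X_smul_of]
    rw [this, map_smul, hSX, map_smul]
    rw [LinearEquiv.symm_apply_eq]
    rw [show g ^ m = aeval g (X ^ m : (ZMod 2)[X]) by simp, ← Module.End.smul_def,
      Module.AEval.of_aeval_smul, LinearEquiv.apply_symm_apply]

end SpTwo

namespace SpTwo
open Polynomial

theorem poly_two : (2 : (ZMod 2)[X]) = 0 := CharTwo.two_eq_zero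

theorem poly_split (p : (ZMod 2)[X]) : ∃ (c : ZMod 2) (q : (ZMod 2)[X]), p = C c + X * q :=
  ⟨p.coeff 0, p.divX, by rw [add_comm]; exact (X_mul_divX_add p).symm⟩

theorem zmod_two_cases (c : ZMod 2) : c = 0 ∨ c = 1 := by revert c; decide

/-- Chebyshev like polynomials describing the powers of `u`. -/
noncomputable def bp : ℕ → (ZMod 2)[X]
  | 0 => 0
  | 1 => 1
  | (i + 2) => bp i + X * bp (i + 1)

theorem bp_double (j : ℕ) :
    bp (2 * j) = X * bp j ^ 2 ∧ bp (2 * j + 1) = (bp j + bp (j + 1)) ^ 2 := by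
  induction j with
  | zero => simp [bp]
  | succ j ih =>
    obtain ⟨h1, h2⟩ := ih
    have e1 : bp (2 * (j + 1)) = X * bp (j + 1) ^ 2 := by
      rw [show 2 * (j + 1) = 2 * j + 2 by ring, bp, h1, h2]
      linear_combination (X * bp j ^ 2 + X * bp j * bp (j + 1)) * poly_two
    refine ⟨e1, ?_⟩
    rw [show 2 * (j + 1) + 1 = 2 * j + 1 + 2 by ring, bp, h2,
      show 2 * j + 1 + 1 = 2 * (j + 1) by ring, e1, show j + 1 + 1 = j + 2 by ring, bp]
    linear_combination (-(X * bp (j + 1) * (bp j + bp (j + 1)))) * poly_two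

theorem bp_sum (j : ℕ) : ∃ q, bp j + bp (j + 1) = 1 + X * q := by
  induction j with
  | zero => exact ⟨0, by simp [bp]⟩
  | succ j ih =>
    obtain ⟨q, hq⟩ := ih
    refine ⟨q + bp (j + 1), ?_⟩
    rw [show j + 1 + 1 = j + 2 by ring, bp]
    linear_combination hq

section
variable {V : Type} [AddCommGroup V] [Module (ZMod 2) V]

theorem u_sq (u u' : Module.End (ZMod 2) V) (h : u' * u = 1) : u * u = 1 + (u + u') * u := by
  rw [add_mul, h, add_comm (u * u), ← add_assoc, end_add_self, zero_add]

theorem comm_t (u u' : Module.End (ZMod 2) V) (h1 : u * u' = 1) (h2 : u' * u = 1)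
    (p : (ZMod 2)[X]) : Commute u (aeval (u + u') p) := by
  have h : Commute u (u + u') :=
    (Commute.refl u).add_right (by rw [Commute, SemiconjBy, h1, h2])
  induction p using Polynomial.induction_on' with
  | add p q hp hq => rw [map_add]; exact hp.add_right hq
  | monomial n a =>
    rw [aeval_monomial]
    exact (Algebra.commute_algebraMap_right a u).mul_right (h.pow_right n)

theorem comm_t' (u u' : Module.End (ZMod 2) V) (h1 : u * u' = 1) (h2 : u' * u = 1)
    (p : (ZMod 2)[X]) : Commute u' (aeval (u + u') p) := by
  rw [add_comm]; exact comm_t u' u h2 h1 p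

theorem u_pow_bp (u u' : Module.End (ZMod 2) V) (h1 : u * u' = 1) (h2 : u' * u = 1) (i : ℕ) :
    u ^ (i + 1) = aeval (u + u') (bp i) + aeval (u + u') (bp (i + 1)) * u := by
  induction i with
  | zero => simp [bp]
  | succ i ih =>
    rw [pow_succ, ih, add_mul, mul_assoc, u_sq u u' h2, bp]
    simp only [map_add, map_mul, aeval_X, mul_add, mul_one, add_mul]
    have : aeval (u + u') (bp (i + 1)) * (u * u + u' * u) = (u * aeval (u + u') (bp (i + 1)) + u' * aeval (u + u') (bp (i + 1))) * u := by
      rw [(comm_t u u' h1 h2 _).eq, (comm_t' u u' h1 h2 _).eq]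
      simp only [mul_add, add_mul, mul_assoc]
    simp only [mul_add, add_mul] at this ⊢
    rw [this]
    abel

/-- The odd powers of `u`. -/
theorem exists_f (j : ℕ) : ∃ f c q : (ZMod 2)[X], f = 1 + X * q ∧
    ∀ u u' : Module.End (ZMod 2) V, u * u' = 1 → u' * u = 1 →
      u ^ (2 * j + 1) = aeval (u + u') c + aeval (u + u') (f ^ 2) * u ∧
      u ^ (2 * j + 1) + u' ^ (2 * j + 1) = aeval (u + u') (X * f ^ 2) := by
  obtain ⟨q, hq⟩ := bp_sum j
  have key : ∀ u u' : Module.End (ZMod 2) V, u * u' = 1 → u' * u = 1 →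
      u ^ (2 * j + 1) = aeval (u + u') (bp (2 * j)) + aeval (u + u') ((1 + X * q) ^ 2) * u := by
    intro u u' h1 h2
    rw [u_pow_bp u u' h1 h2, (bp_double j).2, hq]
  refine ⟨1 + X * q, bp (2 * j), q, rfl, fun u u' h1 h2 => ⟨key u u' h1 h2, ?_⟩⟩
  rw [key u u' h1 h2, key u' u h2 h1, add_comm u' u]
  rw [map_mul, aeval_X, add_mul, (comm_t u u' h1 h2 _).eq, (comm_t' u u' h1 h2 _).eq]
  have := end_add_self (aeval (u + u') (bp (2 * j)))
  rw [add_add_add_comm, this, zero_add]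

end

/-- Lemma F. -/
theorem lemF (l : ℕ) (hl : 1 ≤ l) (lam : (ZMod 2)[X] →ₗ[ZMod 2] ZMod 2)
    (h0 : ∀ p, X ^ l ∣ p → lam p = 0) (h1 : lam (X ^ (l - 1)) = 1) (j d : ℕ) (hj : j + d = l)
    (psi : (ZMod 2)[X] →ₗ[ZMod 2] ZMod 2) (hpsi : ∀ p, X ^ j ∣ p → psi p = 0) :
    ∃ k, ∀ p, psi p = lam (X ^ d * k * p) := by
  induction j generalizing d psi with
  | zero => exact ⟨0, fun p => by rw [hpsi p (by simp)]; simp⟩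
  | succ j ih =>
    set c := psi (X ^ j) with hc
    obtain ⟨k, hk⟩ := ih (d + 1) (by omega)
      (psi - lam ∘ₗ LinearMap.mulLeft (ZMod 2) (C c * X ^ d)) (by
      rintro p ⟨q, rfl⟩
      obtain ⟨a, r, rfl⟩ := poly_split q
      have e1 : X ^ j * (C a + X * r) = a • X ^ j + X ^ (j + 1) * r := by
        rw [smul_eq_C_mul]; ring
      have e2 : C c * X ^ d * (X ^ j * (C a + X * r)) = (c * a) • X ^ (l - 1) + X ^ l * (C c * r) := by
        rw [smul_eq_C_mul, ← hj, show j + 1 + d - 1 = j + d by omega, C_mul]; ring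
      rw [LinearMap.sub_apply, LinearMap.comp_apply, LinearMap.mulLeft_apply, e2, e1]
      rw [map_add, map_add, map_smul, map_smul, hpsi _ (Dvd.intro _ rfl), h0 _ (Dvd.intro _ rfl), h1,
        ← hc]
      simp [mul_comm])
    refine ⟨C c + X * k, fun p => ?_⟩
    have := hk p
    rw [LinearMap.sub_apply, sub_eq_iff_eq_add, LinearMap.comp_apply, LinearMap.mulLeft_apply,
      ← map_add] at this
    rw [this]
    congr 1
    ring

theorem lemF2 (l : ℕ) (hl : 1 ≤ l) (lam : (ZMod 2)[X] →ₗ[ZMod 2] ZMod 2)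
    (h0 : ∀ p, X ^ l ∣ p → lam p = 0) (h1 : lam (X ^ (l - 1)) = 1)
    (psi : (ZMod 2)[X] →ₗ[ZMod 2] ZMod 2) (hpsi : ∀ p, X ^ (l - 2) ∣ p → psi p = 0) :
    ∃ k, ∀ p, psi p = lam (X ^ 2 * k * p) := by
  by_cases h : 2 ≤ l
  · exact lemF l hl lam h0 h1 (l - 2) 2 (by omega) psi hpsi
  · refine ⟨0, fun p => ?_⟩
    rw [hpsi p]
    · simp
    · rw [show l - 2 = 0 by omega]; simp

theorem artinP (k : (ZMod 2)[X]) (n : ℕ) : ∃ L : (ZMod 2)[X], L + L ^ 2 = k + k ^ 2 ^ n := by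
  induction n with
  | zero => exact ⟨0, by linear_combination (-k) * poly_two⟩
  | succ n ih =>
    obtain ⟨L, hL⟩ := ih
    refine ⟨L + k ^ 2 ^ n, ?_⟩
    rw [pow_succ 2 n, pow_mul]
    linear_combination hL + (k ^ 2 ^ n + L * k ^ 2 ^ n) * poly_two

theorem lemN0 (k : (ZMod 2)[X]) (l : ℕ) : ∃ a b : (ZMod 2)[X],
    X ^ l ∣ a ^ 2 + b ^ 2 + X * a * b - (1 + X ^ 2 * (X * k)) := by
  obtain ⟨L, hL⟩ := artinP (X * k) l
  refine ⟨1, X * L, ?_⟩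
  have : (1 : (ZMod 2)[X]) ^ 2 + (X * L) ^ 2 + X * 1 * (X * L) - (1 + X ^ 2 * (X * k)) =
      X ^ 2 * (X * k) ^ 2 ^ l := by
    linear_combination X ^ 2 * hL
  rw [this, mul_pow]
  refine Dvd.dvd.mul_left (Dvd.dvd.mul_right (pow_dvd_pow _ Nat.lt_two_pow_self.le) _) _

/-- Lemma N. -/
theorem lemN (k : (ZMod 2)[X]) (l : ℕ) : ∃ a b : (ZMod 2)[X],
    X ^ l ∣ a ^ 2 + b ^ 2 + X * a * b - (1 + X ^ 2 * k) := by
  rcases Nat.eq_zero_or_pos l with rfl | hl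
  · exact ⟨0, 0, by simp⟩
  obtain ⟨c, r, rfl⟩ := poly_split k
  rcases zmod_two_cases c with rfl | rfl
  · simpa using lemN0 r l
  · set I : (ZMod 2)[X] := (1 + X) ^ (2 ^ l - 2) with hI
    have hI2 : (1 + X) ^ 2 * I = 1 + X ^ 2 ^ l := by
      have h2 : 2 ≤ 2 ^ l := by
        calc 2 = 2 ^ 1 := rfl
          _ ≤ 2 ^ l := Nat.pow_le_pow_right (by norm_num) hl
      rw [hI, ← pow_add, show 2 + (2 ^ l - 2) = 2 ^ l by omega, add_pow_char_pow, one_pow]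
    obtain ⟨a, b, q, hq⟩ := lemN0 (r * I) l
    obtain ⟨z, hz⟩ : (X : (ZMod 2)[X]) ^ l ∣ X ^ 2 ^ l := pow_dvd_pow _ Nat.lt_two_pow_self.le
    refine ⟨(1 + X) * a, (1 + X) * b, (1 + X) ^ 2 * q + X ^ 3 * r * z, ?_⟩
    rw [C_1]
    linear_combination (1 + X) ^ 2 * hq + X ^ 3 * r * hI2 + X ^ 3 * r * hz + X * poly_two

theorem comp_close (q n : (ZMod 2)[X]) (hn : X ^ 2 ∣ n - 1) (p : (ZMod 2)[X]) (i : ℕ)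
    (hp : X ^ i ∣ p) : X ^ (i + 2) ∣ p.comp (X * (1 + X * q) ^ 2) * n - p := by
  have hf : X ^ 2 ∣ (1 + X * q) ^ 2 - 1 := ⟨q ^ 2, by linear_combination X * q * poly_two⟩
  have hfi : ∀ i : ℕ, X ^ 2 ∣ ((1 + X * q) ^ 2) ^ i - 1 := by
    intro i
    have h := sub_dvd_pow_sub_pow ((1 + X * q) ^ 2) 1 i
    rw [one_pow] at h
    exact hf.trans h
  have h2 : ∀ p : (ZMod 2)[X], X ^ 2 ∣ p.comp (X * (1 + X * q) ^ 2) - p := by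
    intro p
    induction p using Polynomial.induction_on' with
    | add p r hp hr =>
      rw [add_comp, add_sub_add_comm]; exact dvd_add hp hr
    | monomial i a =>
      rw [← C_mul_X_pow_eq_monomial, mul_comp, C_comp, X_pow_comp, mul_pow]
      have : C a * (X ^ i * ((1 + X * q) ^ 2) ^ i) - C a * X ^ i =
        (C a * X ^ i) * (((1 + X * q) ^ 2) ^ i - 1) := by ring
      rw [this]
      exact (hfi i).mul_left _
  obtain ⟨r, rfl⟩ := hp
  rw [mul_comp, X_pow_comp, mul_pow, pow_add]
  have : X ^ i * ((1 + X * q) ^ 2) ^ i * r.comp (X * (1 + X * q) ^ 2) * n - X ^ i * r =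
    X ^ i * ((((1 + X * q) ^ 2) ^ i - 1) * (r.comp (X * (1 + X * q) ^ 2) * n) +
      r.comp (X * (1 + X * q) ^ 2) * (n - 1) + (r.comp (X * (1 + X * q) ^ 2) - r)) := by ring
  rw [this]
  exact mul_dvd_mul_left _ (dvd_add (dvd_add ((hfi i).mul_right _) (hn.mul_left _)) (h2 r))

end SpTwo

namespace SpTwo
open Polynomial

section
variable {V : Type} [AddCommGroup V] [Module (ZMod 2) V]

/-- An isometry `u` of an alternating form together with its inverse. -/
structure IsoPair (B : LinearMap.BilinForm (ZMod 2) V) (u u' : Module.End (ZMod 2) V) : Prop where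
  alt : ∀ x, B x x = 0
  h1 : u * u' = 1
  h2 : u' * u = 1
  iso : ∀ x y, B (u x) (u y) = B x y

/-- The functional `p ↦ B (v, p (t) u v)`. -/
noncomputable def lam (B : LinearMap.BilinForm (ZMod 2) V) (u u' : Module.End (ZMod 2) V) (v : V) :
    (ZMod 2)[X] →ₗ[ZMod 2] ZMod 2 :=
  (B v) ∘ₗ (LinearMap.applyₗ (u v)) ∘ₗ (aeval (u + u')).toLinearMap

/-- The map `(a, b) ↦ a (t) v + b (t) u v`. -/
noncomputable def pim (u u' : Module.End (ZMod 2) V) (v : V) :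
    ((ZMod 2)[X] × (ZMod 2)[X]) →ₗ[ZMod 2] V :=
  LinearMap.coprod ((LinearMap.applyₗ v) ∘ₗ (aeval (u + u')).toLinearMap)
    ((LinearMap.applyₗ (u v)) ∘ₗ (aeval (u + u')).toLinearMap)

theorem lam_apply (B : LinearMap.BilinForm (ZMod 2) V) (u u' : Module.End (ZMod 2) V) (v : V)
    (p : (ZMod 2)[X]) : lam B u u' v p = B v (aeval (u + u') p (u v)) := rfl

theorem pim_apply (u u' : Module.End (ZMod 2) V) (v : V) (a b : (ZMod 2)[X]) :
    pim u u' v (a, b) = aeval (u + u') a v + aeval (u + u') b (u v) := rfl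

variable {B : LinearMap.BilinForm (ZMod 2) V} {u u' : Module.End (ZMod 2) V}

theorem IsoPair.symm (P : IsoPair B u u') : ∀ x y, B x y = B y x := alt_symm B P.alt

theorem IsoPair.adj (P : IsoPair B u u') (x y : V) : B (u x) y = B x (u' y) := by
  rw [← P.iso x, ← Module.End.mul_apply, P.h1]; rfl

theorem IsoPair.adj' (P : IsoPair B u u') (x y : V) : B (u' x) y = B x (u y) := by
  rw [P.symm, ← P.adj, P.symm]

theorem IsoPair.pow (P : IsoPair B u u') (m : ℕ) : IsoPair B (u ^ m) (u' ^ m) := by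
  have hc : Commute u u' := by rw [Commute, SemiconjBy, P.h1, P.h2]
  refine ⟨P.alt, ?_, ?_, ?_⟩
  · rw [← hc.mul_pow, P.h1, one_pow]
  · rw [← hc.symm.mul_pow, P.h2, one_pow]
  · induction m with
    | zero => simp
    | succ n ih => intro x y; rw [pow_succ', Module.End.mul_apply, Module.End.mul_apply, P.iso, ih]

theorem IsoPair.adjt (P : IsoPair B u u') (p : (ZMod 2)[X]) (x y : V) :
    B (aeval (u + u') p x) y = B x (aeval (u + u') p y) := by
  induction p using Polynomial.induction_on generalizing x y with
  | C a => simp [Module.algebraMap_end_apply]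
  | add p q hp hq => simp only [map_add, LinearMap.add_apply, hp, hq]
  | monomial n a ih =>
    have e : aeval (u + u') (C a * X ^ (n + 1)) = aeval (u + u') (C a * X ^ n) * (u + u') := by
      rw [pow_succ, ← mul_assoc, map_mul, aeval_X]
    have e' : aeval (u + u') (C a * X ^ (n + 1)) = (u + u') * aeval (u + u') (C a * X ^ n) := by
      rw [e, add_mul, mul_add, (comm_t u u' P.h1 P.h2 _).eq, (comm_t' u u' P.h1 P.h2 _).eq]
    rw [e, Module.End.mul_apply, ih, ← e, e']
    simp only [Module.End.mul_apply, LinearMap.add_apply, map_add, P.adj, P.adj']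
    rw [add_comm]

theorem IsoPair.altt (P : IsoPair B u u') (p : (ZMod 2)[X]) (x : V) :
    B x (aeval (u + u') p x) = 0 := by
  obtain ⟨c, q, rfl⟩ := poly_split p
  rw [map_add, map_mul, aeval_X, aeval_C, LinearMap.add_apply, map_add, Module.algebraMap_end_apply,
    map_smul, P.alt, smul_zero, zero_add, Module.End.mul_apply, LinearMap.add_apply, map_add]
  have e : B x (u' (aeval (u + u') q x)) = B x (u (aeval (u + u') q x)) := by
    rw [← P.adj, P.symm, P.adjt, ← Module.End.mul_apply, ← (comm_t u u' P.h1 P.h2 _).eq,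
      Module.End.mul_apply]
  rw [e]
  exact CharTwo.add_self_eq_zero _

theorem IsoPair.gramI (P : IsoPair B u u') (v : V) (a b c d : (ZMod 2)[X]) :
    B (pim u u' v (a, b)) (pim u u' v (c, d)) = lam B u u' v (a * d + b * c) := by
  rw [pim_apply, pim_apply, lam_apply]
  have e1 : B (aeval (u + u') a v) (aeval (u + u') c v) = 0 := by
    rw [P.adjt, ← Module.End.mul_apply, ← map_mul, P.altt]
  have e2 : B (aeval (u + u') b (u v)) (aeval (u + u') d (u v)) = 0 := by
    rw [P.adjt, ← Module.End.mul_apply, ← map_mul, P.altt]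
  have e3 : B (aeval (u + u') a v) (aeval (u + u') d (u v)) = B v (aeval (u + u') (a * d) (u v)) := by
    rw [P.adjt, ← Module.End.mul_apply, ← map_mul]
  have e4 : B (aeval (u + u') b (u v)) (aeval (u + u') c v) = B v (aeval (u + u') (b * c) (u v)) := by
    rw [P.symm, P.adjt, ← Module.End.mul_apply, ← map_mul, mul_comm]
  simp only [map_add, LinearMap.add_apply, e1, e2, e3, e4]
  ring

theorem IsoPair.pim_sh (P : IsoPair B u u') (v : V) (a b : (ZMod 2)[X]) :
    u (pim u u' v (a, b)) = pim u u' v (b, a + X * b) := by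
  rw [pim_apply, pim_apply, map_add]
  simp only [← Module.End.mul_apply]
  rw [(comm_t u u' P.h1 P.h2 _).eq, ← mul_assoc, (comm_t u u' P.h1 P.h2 _).eq, mul_assoc,
    u_sq u u' P.h2, map_add, map_mul, aeval_X, mul_add, mul_one, add_mul]
  have : (u + u') * aeval (u + u') b = aeval (u + u') b * (u + u') := by
    rw [add_mul, mul_add, (comm_t u u' P.h1 P.h2 _).eq, (comm_t' u u' P.h1 P.h2 _).eq]
  rw [this]
  simp only [LinearMap.add_apply, add_mul, mul_add, mul_assoc]
  abel

theorem IsoPair.pim_mul (P : IsoPair B u u') (v : V) (r a b : (ZMod 2)[X]) :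
    aeval (u + u') r (pim u u' v (a, b)) = pim u u' v (r * a, r * b) := by
  simp only [pim_apply, map_add, map_mul, Module.End.mul_apply]

theorem IsoPair.lamN (P : IsoPair B u u') (v : V) (a b r : (ZMod 2)[X]) :
    lam B u u' (pim u u' v (a, b)) r = lam B u u' v (r * (a ^ 2 + b ^ 2 + X * a * b)) := by
  rw [lam_apply, P.pim_sh, P.pim_mul, P.gramI]
  congr 1; ring

theorem IsoPair.lamm (P : IsoPair B u u') (j : ℕ) (v : V) (a b f c : (ZMod 2)[X])
    (hf1 : u ^ (2 * j + 1) = aeval (u + u') c + aeval (u + u') (f ^ 2) * u)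
    (hf2 : u ^ (2 * j + 1) + u' ^ (2 * j + 1) = aeval (u + u') (X * f ^ 2)) (p : (ZMod 2)[X]) :
    lam B (u ^ (2 * j + 1)) (u' ^ (2 * j + 1)) (pim u u' v (a, b)) p =
      lam B u u' v (p.comp (X * f ^ 2) * (f ^ 2 * (a ^ 2 + b ^ 2 + X * a * b))) := by
  rw [lam_apply, hf2, ← aeval_comp, hf1]
  rw [LinearMap.add_apply, map_add, map_add, ← Module.End.mul_apply, ← map_mul, P.altt, zero_add]
  rw [← Module.End.mul_apply, ← mul_assoc, ← map_mul, Module.End.mul_apply, ← lam_apply, P.lamN,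
    mul_assoc]

/-- The first kind of block. -/
theorem blockI [FiniteDimensional (ZMod 2) V] (hnd : ∀ y, (∀ x, B x y = 0) → y = 0)
    (P : IsoPair B u u') (j l : ℕ) (hl : 1 ≤ l) (v : V)
    (h0 : ∀ p, X ^ l ∣ p → lam B u u' v p = 0) (h1 : lam B u u' v (X ^ (l - 1)) = 1)
    (hsurj : Function.Surjective (pim u u' v)) :
    ∃ T : Module.End (ZMod 2) V, T * u = u ^ (2 * j + 1) * T ∧ ∀ x y, B (T x) (T y) = B x y := by
  obtain ⟨f, c, q, hfq, hf⟩ := exists_f (V := V) j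
  obtain ⟨hf1, hf2⟩ := hf u u' P.h1 P.h2
  have hff : X ^ 2 ∣ f ^ 2 - 1 := ⟨q ^ 2, by rw [hfq]; linear_combination X * q * poly_two⟩
  let psi : (ZMod 2)[X] →ₗ[ZMod 2] ZMod 2 :=
    lam B u u' v ∘ₗ LinearMap.mulRight (ZMod 2) (f ^ 2) ∘ₗ (aeval (X * f ^ 2)).toLinearMap
  have hpsi : ∀ p, psi p = lam B u u' v (p.comp (X * f ^ 2) * f ^ 2) := fun p => rfl
  have hdiff : ∀ i p, X ^ i ∣ p → l ≤ i + 2 → psi p = lam B u u' v p := by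
    intro i p hp hi
    rw [hpsi, ← sub_eq_zero, ← map_sub]
    apply h0
    have := comp_close q (f ^ 2) hff p i hp
    rw [← hfq] at this
    exact (pow_dvd_pow _ hi).trans this
  have hpsi0 : ∀ p, X ^ l ∣ p → psi p = 0 := fun p hp => by
    rw [hdiff l p hp (by omega), h0 p hp]
  have hpsi1 : psi (X ^ (l - 1)) = 1 := by
    rw [hdiff (l - 1) _ dvd_rfl (by omega), h1]
  obtain ⟨k, hk⟩ := lemF2 l hl psi hpsi0 hpsi1 (lam B u u' v - psi) (by
    intro p hp
    rw [LinearMap.sub_apply, hdiff (l - 2) p hp (by omega), sub_self])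
  obtain ⟨a, b, hab⟩ := lemN (f ^ 4 * k.comp (X * f ^ 2)) l
  have hlam : ∀ p, lam B (u ^ (2 * j + 1)) (u' ^ (2 * j + 1)) (pim u u' v (a, b)) p =
      lam B u u' v p := by
    intro p
    rw [P.lamm j v a b f c hf1 hf2]
    have h3 := hk p
    rw [LinearMap.sub_apply, sub_eq_iff_eq_add, ← map_add, hpsi] at h3
    rw [h3, ← sub_eq_zero, ← map_sub]
    apply h0
    have : p.comp (X * f ^ 2) * (f ^ 2 * (a ^ 2 + b ^ 2 + X * a * b)) -
      (X ^ 2 * k * p + p).comp (X * f ^ 2) * f ^ 2 = p.comp (X * f ^ 2) * f ^ 2 *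
        (a ^ 2 + b ^ 2 + X * a * b - (1 + X ^ 2 * (f ^ 4 * k.comp (X * f ^ 2)))) := by
      simp only [mul_comp, add_comp, X_pow_comp]
      ring
    rw [this]
    exact hab.mul_left _
  obtain ⟨T, hT, hTB⟩ := gram B hnd (pim u u' v)
    (pim (u ^ (2 * j + 1)) (u' ^ (2 * j + 1)) (pim u u' v (a, b))) hsurj (by
      rintro ⟨x1, x2⟩ ⟨y1, y2⟩
      rw [(P.pow _).gramI, P.gramI, hlam])
  refine ⟨T, ?_, hTB⟩
  ext x
  obtain ⟨⟨x1, x2⟩, rfl⟩ := hsurj x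
  rw [Module.End.mul_apply, Module.End.mul_apply, hT, P.pim_sh, hT, (P.pow _).pim_sh]

end
end SpTwo

namespace SpTwo
open Polynomial

section
variable {V : Type} [AddCommGroup V] [Module (ZMod 2) V]
variable {B : LinearMap.BilinForm (ZMod 2) V} {u u' : Module.End (ZMod 2) V}

theorem IsoPair.polyu (P : IsoPair B u u') (q : (ZMod 2)[X]) : ∃ a b : (ZMod 2)[X],
    aeval u q = aeval (u + u') a + aeval (u + u') b * u ∧ a.eval 0 + b.eval 0 = q.eval 1 := by
  induction q using Polynomial.induction_on with
  | C c => exact ⟨C c, 0, by simp⟩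
  | add p q hp hq =>
    obtain ⟨a, b, h1, h2⟩ := hp
    obtain ⟨c, d, h3, h4⟩ := hq
    refine ⟨a + c, b + d, ?_, ?_⟩
    · simp only [map_add, h1, h3, add_mul]; abel
    · simp only [eval_add, ← h2, ← h4]; ring
  | monomial n c ih =>
    obtain ⟨a, b, h1, h2⟩ := ih
    refine ⟨b, a + X * b, ?_, ?_⟩
    · rw [pow_succ, ← mul_assoc, map_mul, aeval_X, h1, add_mul, mul_assoc, u_sq u u' P.h2,
        mul_comm X b, map_add, map_mul, aeval_X, mul_add, mul_one]
      simp only [add_mul, mul_add, mul_assoc]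
      abel
    · rw [pow_succ, ← mul_assoc, eval_mul, ← h2]; simp [add_comm]

theorem norm_close (a b : (ZMod 2)[X]) (h : a.eval 0 + b.eval 0 = 1) :
    X ^ 2 ∣ a ^ 2 + b ^ 2 + X * a * b - 1 := by
  obtain ⟨c, r, rfl⟩ := poly_split a
  obtain ⟨d, s, rfl⟩ := poly_split b
  simp only [eval_add, eval_C, eval_mul, eval_X, zero_mul, add_zero] at h
  rcases zmod_two_cases c with rfl | rfl
  · rw [zero_add] at h
    subst h
    refine ⟨r ^ 2 + s ^ 2 + r + X * r * s, ?_⟩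
    simp only [C_0, C_1]
    linear_combination X * s * poly_two
  · have hd : d = 0 := by simpa using h
    subst hd
    refine ⟨r ^ 2 + s ^ 2 + s + X * r * s, ?_⟩
    simp only [C_0, C_1]
    linear_combination X * r * poly_two

theorem pow_shift (j : ℕ) : ∃ z : (ZMod 2)[X], (X + 1) ^ (2 * j + 1) + 1 = X * (1 + X * z) := by
  induction j with
  | zero => exact ⟨0, by linear_combination poly_two⟩
  | succ j ih =>
    obtain ⟨z, hz⟩ := ih
    refine ⟨z + X + X ^ 2 * z + 1, ?_⟩
    rw [show 2 * (j + 1) + 1 = 2 * j + 1 + 2 by ring, pow_add]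
    linear_combination (X + 1) ^ 2 * hz + (X ^ 3 * z - X) * poly_two

theorem IsoPair.cross (P : IsoPair B u u') (nu : ℕ) (hnu : u' = u ^ nu) (v y : V)
    (a b c d : (ZMod 2)[X]) :
    B (pim u u' v (a, b)) (pim u u' y (c, d)) =
      B v (aeval u ((a * c).comp (X + X ^ nu) + (a * d).comp (X + X ^ nu) * X +
        (b * c).comp (X + X ^ nu) * X ^ nu + (b * d).comp (X + X ^ nu)) y) := by
  have ht : aeval u (X + X ^ nu : (ZMod 2)[X]) = u + u' := by simp [hnu]
  simp only [map_add, aeval_comp, map_mul, map_pow, aeval_X] at ht ⊢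
  rw [ht, ← hnu]
  rw [pim_apply, pim_apply]
  have e : ∀ (p : (ZMod 2)[X]) z, B (aeval (u + u') p (u v)) z = B v (u' (aeval (u + u') p z)) := by
    intro p z
    rw [P.adjt, P.adj]
  simp only [map_add, LinearMap.add_apply, e, P.adjt, Module.End.mul_apply]
  have e1 : ∀ z, u' (aeval (u + u') b (aeval (u + u') c z)) =
      aeval (u + u') b (aeval (u + u') c (u' z)) := by
    intro z
    have := LinearMap.congr_fun (comm_t' u u' P.h1 P.h2 (b * c)).eq z
    simpa only [Module.End.mul_apply, map_mul] using this
  have e2 : ∀ z, u' (aeval (u + u') b (aeval (u + u') d (u z))) =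
      aeval (u + u') b (aeval (u + u') d z) := by
    intro z
    have : u' * aeval (u + u') (b * d) * u = aeval (u + u') (b * d) := by
      rw [(comm_t' u u' P.h1 P.h2 _).eq, mul_assoc, P.h2, mul_one]
    have := LinearMap.congr_fun this z
    simpa only [Module.End.mul_apply, map_mul] using this
  rw [e1, e2]
  ring

theorem IsoPair.crossII (P : IsoPair B u u') (j nu : ℕ) (hnu : u' = u ^ nu) (k : ℕ) (hk : 1 ≤ k)
    (hw : (u + 1) ^ k = 0) (v v' : V) (hvv : B v (((u + 1) ^ (k - 1)) v') = 1) :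
    ∃ a b : (ZMod 2)[X], X ^ 2 ∣ a ^ 2 + b ^ 2 + X * a * b - 1 ∧
      ∀ x y, B (pim (u ^ (2 * j + 1)) (u' ^ (2 * j + 1)) v x)
        (pim (u ^ (2 * j + 1)) (u' ^ (2 * j + 1)) (pim u u' v' (a, b)) y) =
        B (pim u u' v x) (pim u u' v' y) := by
  set um := u ^ (2 * j + 1) with hum
  obtain ⟨z, hz⟩ := pow_shift j
  have hwm : um + 1 = aeval (u + 1) (X * (1 + X * z)) := by
    rw [← hz]
    simp only [map_add, map_pow, aeval_X, map_one, add_assoc, end_add_self, add_zero, hum]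
  let phi : (ZMod 2)[X] →ₗ[ZMod 2] ZMod 2 :=
    (B v) ∘ₗ (LinearMap.applyₗ v') ∘ₗ (aeval (u + 1)).toLinearMap
  let psi : (ZMod 2)[X] →ₗ[ZMod 2] ZMod 2 :=
    (B v) ∘ₗ (LinearMap.applyₗ v') ∘ₗ (aeval (um + 1)).toLinearMap
  have hphi : ∀ p, phi p = B v (aeval (u + 1) p v') := fun p => rfl
  have hpsi : ∀ p, psi p = B v (aeval (um + 1) p v') := fun p => rfl
  have hpp : ∀ p, psi p = phi (p.comp (X * (1 + X * z))) := by
    intro p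
    rw [hpsi, hphi, aeval_comp, hwm]
  have hphi0 : ∀ p, X ^ k ∣ p → phi p = 0 := by
    rintro p ⟨q, rfl⟩
    rw [hphi, map_mul, map_pow, aeval_X, hw, zero_mul, LinearMap.zero_apply, map_zero]
  have hphi1 : phi (X ^ (k - 1)) = 1 := by
    rw [hphi, map_pow, aeval_X, hvv]
  have hpsi0 : ∀ p, X ^ k ∣ p → psi p = 0 := by
    rintro p ⟨q, rfl⟩
    rw [hpp]
    apply hphi0
    rw [mul_comp, X_pow_comp, mul_pow, mul_assoc]
    exact Dvd.intro _ rfl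
  have hpsi1 : psi (X ^ (k - 1)) = 1 := by
    rw [hpp, ← hphi1, ← sub_eq_zero, ← map_sub]
    apply hphi0
    have h := sub_dvd_pow_sub_pow (1 + X * z) 1 (k - 1)
    rw [one_pow, add_sub_cancel_left] at h
    obtain ⟨r, hr⟩ := h
    refine ⟨z * r, ?_⟩
    rw [X_pow_comp, mul_pow]
    have : X ^ k = X ^ (k - 1) * (X : (ZMod 2)[X]) := by rw [← pow_succ, Nat.sub_add_cancel hk]
    rw [this]
    linear_combination X ^ (k - 1) * hr
  obtain ⟨h, hh⟩ := lemF k hk psi hpsi0 hpsi1 k 0 (by omega) phi hphi0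
  have hh0 : h.eval 0 = 1 := by
    obtain ⟨c, r, hc⟩ := poly_split h
    have h3 := hh (X ^ (k - 1))
    have e : X ^ 0 * h * X ^ (k - 1) = c • X ^ (k - 1) + X ^ k * r := by
      have : X ^ k = X ^ (k - 1) * (X : (ZMod 2)[X]) := by rw [← pow_succ, Nat.sub_add_cancel hk]
      rw [this, hc, smul_eq_C_mul]; ring
    rw [e, map_add, map_smul, hpsi1, hphi1, hpsi0 _ (Dvd.intro _ rfl)] at h3
    rw [hc]
    simpa using h3.symm
  obtain ⟨a, b, hab, hab0⟩ := P.polyu (h.comp (X ^ (2 * j + 1) + 1))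
  refine ⟨a, b, norm_close a b ?_, ?_⟩
  · rw [hab0, eval_comp]
    simp only [eval_add, eval_pow, eval_X, one_pow, eval_one]
    rw [CharTwo.add_self_eq_zero, hh0]
  · have hv1 : pim u u' v' (a, b) = aeval (um + 1) h v' := by
      rw [pim_apply]
      have := LinearMap.congr_fun hab v'
      rw [aeval_comp] at this
      simp only [map_add, map_pow, aeval_X, map_one, LinearMap.add_apply, Module.End.mul_apply] at this
      exact this.symm
    have key : ∀ Q : (ZMod 2)[X], B v (aeval um Q (aeval (um + 1) h v')) = B v (aeval u Q v') := by
      intro Q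
      have e1 : aeval um Q = aeval (um + 1) (Q.comp (X + 1)) := by
        rw [aeval_comp]
        simp [add_assoc, end_add_self]
      have e2 : aeval u Q = aeval (u + 1) (Q.comp (X + 1)) := by
        rw [aeval_comp]
        simp [add_assoc, end_add_self]
      rw [e1, e2, ← hphi, hh, hpsi, ← Module.End.mul_apply, ← map_mul, pow_zero, one_mul, mul_comm h]
    rintro ⟨x1, x2⟩ ⟨y1, y2⟩
    have hnum : u' ^ (2 * j + 1) = um ^ nu := by
      rw [hum, hnu, ← pow_mul, ← pow_mul, mul_comm]
    rw [(P.pow (2 * j + 1)).cross nu hnum, P.cross nu hnu, ← hum, hv1, key]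

theorem IsoPair.w_sq (P : IsoPair B u u') : (u + 1) ^ 2 = u * (u + u') := by
  rw [mul_add, P.h1, sq, add_mul, mul_add, one_mul, mul_one, add_assoc, ← add_assoc u u,
    end_add_self, zero_add]

end
end SpTwo

namespace SpTwo
open Polynomial

section
variable {V : Type} [AddCommGroup V] [Module (ZMod 2) V]
variable {B : LinearMap.BilinForm (ZMod 2) V} {u u' : Module.End (ZMod 2) V}

/-- The auxiliary bilinear form on pairs of pairs of polynomials. -/
noncomputable def formD (m1 m2 : (ZMod 2)[X] →ₗ[ZMod 2] ZMod 2) :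
    LinearMap.BilinForm (ZMod 2) (((ZMod 2)[X] × (ZMod 2)[X]) × ((ZMod 2)[X] × (ZMod 2)[X])) :=
  LinearMap.mk₂ (ZMod 2) (fun x y => m1 (x.1.1 * y.1.2 + x.1.2 * y.1.1) +
      m2 (x.2.1 * y.2.2 + x.2.2 * y.2.1))
    (by
      intro x y z
      simp only [Prod.fst_add, Prod.snd_add, add_mul, map_add]
      ring)
    (by
      intro c x y
      simp only [Prod.smul_fst, Prod.smul_snd, smul_mul_assoc, map_add, map_smul, smul_add])
    (by
      intro x y z
      simp only [Prod.fst_add, Prod.snd_add, mul_add, map_add]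
      ring)
    (by
      intro c x y
      simp only [Prod.smul_fst, Prod.smul_snd, mul_smul_comm, map_add, map_smul, smul_add])

theorem formD_apply (m1 m2 : (ZMod 2)[X] →ₗ[ZMod 2] ZMod 2) (a b a' b' c d c' d' : (ZMod 2)[X]) :
    formD m1 m2 ((a, b), (a', b')) ((c, d), (c', d')) =
      m1 (a * d + b * c) + m2 (a' * d' + b' * c') := rfl

/-- Division by `X`, as a linear map. -/
noncomputable def divXl : (ZMod 2)[X] →ₗ[ZMod 2] (ZMod 2)[X] where
  toFun := divX
  map_add' _ _ := divX_add
  map_smul' c p := by simp [smul_eq_C_mul]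

theorem divXl_X_mul (p : (ZMod 2)[X]) : divXl (X * p) = p := by
  ext i
  simp [divXl, coeff_divX]

theorem blockII [FiniteDimensional (ZMod 2) V] (hnd : ∀ y, (∀ x, B x y = 0) → y = 0)
    (P : IsoPair B u u') (j nu : ℕ) (hnu : u' = u ^ nu) (k : ℕ) (hk : 1 ≤ k)
    (hw : (u + 1) ^ k = 0) (v v' : V) (hvv : B v (((u + 1) ^ (k - 1)) v') = 1)
    (s : ℕ) (hs : 2 * s ≤ k - 1)
    (H1 : ∀ x p, X ^ s ∣ p → lam B u u' x p = 0)
    (hsurj : Function.Surjective (LinearMap.coprod (pim u u' v) (pim u u' v')))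
    (H2 : ∀ a b a' b', pim u u' v (a, b) + pim u u' v' (a', b') = 0 →
      X ^ s ∣ a ∧ X ^ s ∣ b ∧ X ^ s ∣ a' ∧ X ^ s ∣ b')
    (H3 : ∀ x, ((u + 1) ^ (k - 1)) x = 0 → ∃ y, x = (u + 1) y) :
    ∃ T : Module.End (ZMod 2) V, T * u = u ^ (2 * j + 1) * T ∧ ∀ x y, B (T x) (T y) = B x y := by
  obtain ⟨f, c, q, hfq, hf⟩ := exists_f (V := V) j
  obtain ⟨hf1, hf2⟩ := hf u u' P.h1 P.h2
  have hff : X ^ 2 ∣ f ^ 2 - 1 := ⟨q ^ 2, by rw [hfq]; linear_combination X * q * poly_two⟩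
  obtain ⟨α, β, hN, hcross⟩ := P.crossII j nu hnu k hk hw v v' hvv
  set um := u ^ (2 * j + 1) with hum
  set um' := u' ^ (2 * j + 1) with hum'
  set v1 := pim u u' v' (α, β) with hv1
  have Pm : IsoPair B um um' := P.pow _
  -- the difference functionals
  have hpim1 : pim u u' v (1, 0) = v := by simp [pim_apply]
  have hlam1 : ∀ p, lam B um um' v p = lam B u u' v (p.comp (X * f ^ 2) * f ^ 2) := by
    intro p
    have := P.lamm j v 1 0 f c hf1 hf2 p
    rw [hpim1] at this
    rw [this]
    congr 1; ring
  have hlam2 : ∀ p, lam B um um' v1 p =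
      lam B u u' v' (p.comp (X * f ^ 2) * (f ^ 2 * (α ^ 2 + β ^ 2 + X * α * β))) := by
    intro p
    rw [hv1, P.lamm j v' α β f c hf1 hf2 p]
  have hn2 : X ^ 2 ∣ f ^ 2 * (α ^ 2 + β ^ 2 + X * α * β) - 1 := by
    have : f ^ 2 * (α ^ 2 + β ^ 2 + X * α * β) - 1 =
      (f ^ 2 - 1) * (α ^ 2 + β ^ 2 + X * α * β) + (α ^ 2 + β ^ 2 + X * α * β - 1) := by ring
    rw [this]
    exact dvd_add (hff.mul_right _) hN
  set psi1 := lam B um um' v - lam B u u' v with hpsi1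
  set psi2 := lam B um um' v1 - lam B u u' v' with hpsi2
  have hk1 : ∀ p, X ^ (s - 2) ∣ p → psi1 p = 0 := by
    intro p hp
    rw [hpsi1, LinearMap.sub_apply, hlam1, ← map_sub]
    apply H1
    have := comp_close q (f ^ 2) hff p _ hp
    rw [← hfq] at this
    exact (pow_dvd_pow _ (by omega)).trans this
  have hk2 : ∀ p, X ^ (s - 2) ∣ p → psi2 p = 0 := by
    intro p hp
    rw [hpsi2, LinearMap.sub_apply, hlam2, ← map_sub]
    apply H1
    have := comp_close q _ hn2 p _ hp
    rw [← hfq] at this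
    exact (pow_dvd_pow _ (by omega)).trans this
  have hmu : ∀ psi : (ZMod 2)[X] →ₗ[ZMod 2] ZMod 2, (∀ p, X ^ (s - 2) ∣ p → psi p = 0) →
      ∀ p, X ^ s ∣ p → psi (divXl (divXl p)) = 0 := by
    rintro psi hpsi p ⟨r, rfl⟩
    by_cases h2 : 2 ≤ s
    · obtain ⟨s', rfl⟩ := Nat.exists_eq_add_of_le h2
      rw [show (X : (ZMod 2)[X]) ^ (2 + s') * r = X * (X * (X ^ s' * r)) by ring, divXl_X_mul,
        divXl_X_mul]
      apply hpsi
      rw [show 2 + s' - 2 = s' by omega]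
      exact Dvd.intro _ rfl
    · apply hpsi
      rw [show s - 2 = 0 by omega, pow_zero]
      exact one_dvd _
  set mu1 := psi1 ∘ₗ divXl ∘ₗ divXl with hmu1
  set mu2 := psi2 ∘ₗ divXl ∘ₗ divXl with hmu2
  have hm1 : ∀ p, X ^ s ∣ p → mu1 p = 0 := hmu psi1 hk1
  have hm2 : ∀ p, X ^ s ∣ p → mu2 p = 0 := hmu psi2 hk2
  have hm1' : ∀ p, mu1 (X ^ 2 * p) = psi1 p := by
    intro p
    rw [hmu1, LinearMap.comp_apply, LinearMap.comp_apply, sq, mul_assoc, divXl_X_mul, divXl_X_mul]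
  have hm2' : ∀ p, mu2 (X ^ 2 * p) = psi2 p := by
    intro p
    rw [hmu2, LinearMap.comp_apply, LinearMap.comp_apply, sq, mul_assoc, divXl_X_mul, divXl_X_mul]
  set π := LinearMap.coprod (pim u u' v) (pim u u' v') with hπ
  have hπa : ∀ a b a' b', π ((a, b), (a', b')) = pim u u' v (a, b) + pim u u' v' (a', b') :=
    fun _ _ _ _ => rfl
  set D := formD mu1 mu2 with hD
  have hDker : ∀ x, π x = 0 → ∀ y, D x y = 0 := by
    rintro ⟨⟨a, b⟩, ⟨a', b'⟩⟩ hx ⟨⟨c, d⟩, ⟨c', d'⟩⟩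
    rw [hπa] at hx
    obtain ⟨i1, i2, i3, i4⟩ := H2 _ _ _ _ hx
    rw [hD, formD_apply, hm1 _ (dvd_add (i1.mul_right _) (i2.mul_right _)),
      hm2 _ (dvd_add (i3.mul_right _) (i4.mul_right _)), add_zero]
  have hDsymm : ∀ x y, D x y = D y x := by
    rintro ⟨⟨a, b⟩, ⟨a', b'⟩⟩ ⟨⟨c, d⟩, ⟨c', d'⟩⟩
    rw [hD, formD_apply, formD_apply]
    congr 2 <;> ring
  obtain ⟨σ, hσ⟩ := LinearMap.exists_rightInverse_of_surjective π (LinearMap.range_eq_top.2 hsurj)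
  have hσ' : ∀ x, π (σ x) = x := fun x => LinearMap.congr_fun hσ x
  have hDπ : ∀ x y, π x = π y → ∀ z, D x z = D y z := by
    intro x y hxy z
    rw [← sub_eq_zero, ← LinearMap.sub_apply, ← map_sub]
    exact hDker _ (by rw [map_sub, hxy, sub_self]) z
  obtain ⟨K, hK⟩ := riesz B hnd (D.comp σ σ)
  simp only [LinearMap.BilinForm.comp_apply] at hK
  have hKD : ∀ x y, B (π x) (K (π y)) = D x y := by
    intro x y
    rw [hK, hDπ (σ (π x)) x (hσ' _), hDsymm, hDπ (σ (π y)) y (hσ' _), hDsymm]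
  have hKB : ∀ x y, B (K x) y = B x (K y) := by
    intro x y
    rw [P.symm, hK, hK, hDsymm]
  have hπu : ∀ a b a' b', u (π ((a, b), (a', b'))) = π ((b, a + X * b), (b', a' + X * b')) := by
    intro a b a' b'
    rw [hπa, hπa, map_add, P.pim_sh, P.pim_sh]
  have hπt : ∀ r a b a' b', aeval (u + u') r (π ((a, b), (a', b'))) =
      π ((r * a, r * b), (r * a', r * b')) := by
    intro r a b a' b'
    rw [hπa, hπa, map_add, P.pim_mul, P.pim_mul]
  have huK : Commute u K := by
    ext y
    refine sub_eq_zero.1 (hnd _ fun x => ?_)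
    obtain ⟨x, rfl⟩ : ∃ z, u z = x := ⟨u' x, by rw [← Module.End.mul_apply, P.h1]; rfl⟩
    rw [map_sub, Module.End.mul_apply, Module.End.mul_apply, P.iso]
    obtain ⟨⟨⟨a, b⟩, ⟨a', b'⟩⟩, rfl⟩ := hsurj x
    obtain ⟨⟨⟨c, d⟩, ⟨c', d'⟩⟩, rfl⟩ := hsurj y
    rw [hπu, hπu, hKD, hKD, hD, formD_apply, formD_apply, sub_eq_zero]
    congr 2
    · linear_combination (-(X * b * d)) * poly_two
    · linear_combination (-(X * b' * d')) * poly_two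
  have hu'K : Commute u' K := by
    have : u' * (u * K) * u' = u' * (K * u) * u' := by rw [huK.eq]
    rw [← mul_assoc, P.h2, one_mul, mul_assoc, mul_assoc, P.h1, mul_one] at this
    exact this.symm
  have htK : ∀ r : (ZMod 2)[X], Commute (aeval (u + u') r) K := by
    intro r
    have h : Commute K (u + u') := huK.symm.add_right hu'K.symm
    induction r using Polynomial.induction_on' with
    | add p q hp hq => rw [map_add]; exact hp.add_left hq
    | monomial n a =>
      rw [aeval_monomial]
      exact (Algebra.commute_algebraMap_left a K).mul_left (h.symm.pow_left n)
  have hKs : ∀ y, aeval (u + u') (X ^ s : (ZMod 2)[X]) (K y) = 0 := by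
    intro y
    refine hnd _ fun x => ?_
    obtain ⟨⟨⟨a, b⟩, ⟨a', b'⟩⟩, rfl⟩ := hsurj x
    obtain ⟨⟨⟨c, d⟩, ⟨c', d'⟩⟩, rfl⟩ := hsurj y
    rw [← P.adjt, hπt, hKD, hD, formD_apply, hm1, hm2, add_zero]
    · exact ⟨a' * d' + b' * c', by ring⟩
    · exact ⟨a * d + b * c, by ring⟩
  have hut : Commute u (u + u') := by
    have := comm_t u u' P.h1 P.h2 X
    rwa [aeval_X] at this
  have hu't : Commute u' (u + u') := by
    have := comm_t' u u' P.h1 P.h2 X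
    rwa [aeval_X] at this
  have hKw : ∀ y, ∃ z, K y = (u + 1) z := by
    intro y
    apply H3
    obtain ⟨e, he⟩ := Nat.exists_eq_add_of_le hs
    rw [he, add_comm (2 * s), pow_add, pow_mul, P.w_sq, hut.mul_pow, Module.End.mul_apply,
      Module.End.mul_apply]
    have := hKs y
    rw [map_pow, aeval_X] at this
    rw [this, map_zero, map_zero]
  have hwK : Commute (u + 1) K := huK.add_left (Commute.one_left _)
  have hKnil : IsNilpotent K := by
    refine ⟨k, ?_⟩
    have : ∀ i y, ∃ z, (K ^ i) y = ((u + 1) ^ i) z := by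
      intro i
      induction i with
      | zero => exact fun y => ⟨y, rfl⟩
      | succ i ih =>
        intro y
        obtain ⟨z, hz⟩ := ih y
        obtain ⟨z', hz'⟩ := hKw z
        refine ⟨z', ?_⟩
        rw [pow_succ', Module.End.mul_apply, hz, ← Module.End.mul_apply, ← (hwK.pow_left i).eq,
          Module.End.mul_apply, hz', ← Module.End.mul_apply, ← pow_succ]
    ext y
    obtain ⟨z, hz⟩ := this k y
    rw [hz, hw]; rfl
  have hX2 : ∀ x y, B (π x) (((u + u') * (u + u')) (K (π y))) = formD psi1 psi2 x y := by
    rintro ⟨⟨a, b⟩, ⟨a', b'⟩⟩ ⟨⟨c, d⟩, ⟨c', d'⟩⟩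
    have e : (u + u') * (u + u') = aeval (u + u') (X ^ 2 : (ZMod 2)[X]) := by simp [sq]
    rw [e, ← P.adjt, hπt, hKD, hD, formD_apply, formD_apply, ← hm1', ← hm2']
    congr 2 <;> ring
  have htK1 : Commute (u + u') K := huK.add_left hu'K
  obtain ⟨Y, hYu, hYs, hYB⟩ := solveX B hnd u (u * (u + u')) (u' * (u + u')) 1
    ((u + u') * (u + u')) K
    (by
      intro x y
      have := P.adjt X x
      simp only [aeval_X] at this
      rw [Module.End.mul_apply, P.adj, this, ← Module.End.mul_apply, hu't.eq])
    (fun _ _ => rfl) hKB (Commute.one_right _) huK ((Commute.refl u).mul_right hut)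
    (Commute.one_right _) (huK.mul_left htK1) (Commute.one_right _) (hu'K.mul_left htK1)
    (Commute.one_left _) (by rw [← add_mul])
    (by
      rw [mul_one, mul_assoc, ← mul_assoc (u + u') u, ← hut.eq, mul_assoc, ← mul_assoc u' u, P.h2,
        one_mul])
    hKnil
  set p1 := LinearMap.coprod (pim um um' v) (pim um um' v1) with hp1
  have hp1a : ∀ a b a' b', p1 ((a, b), (a', b')) = pim um um' v (a, b) + pim um um' v1 (a', b') :=
    fun _ _ _ _ => rfl
  have hsur : Function.Surjective (Y ∘ₗ π) := by
    rw [LinearMap.coe_comp]; exact hYs.comp hsurj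
  obtain ⟨T, hT, hTB⟩ := gram B hnd (Y ∘ₗ π) p1 hsur (by
    rintro ⟨⟨a, b⟩, ⟨a', b'⟩⟩ ⟨⟨c, d⟩, ⟨c', d'⟩⟩
    rw [LinearMap.comp_apply, LinearMap.comp_apply, hYB, hX2, formD_apply, hp1a, hp1a, hπa, hπa]
    simp only [map_add, LinearMap.add_apply]
    rw [P.symm (pim um um' v1 (a', b')) (pim um um' v (c, d)), hcross, hcross,
      P.symm (pim u u' v' (a', b')) (pim u u' v (c, d)), P.gramI, P.gramI, Pm.gramI, Pm.gramI,
      hpsi1, hpsi2]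
    simp only [map_add, LinearMap.sub_apply]
    ring)
  refine ⟨T, ?_, hTB⟩
  ext x
  obtain ⟨⟨⟨a, b⟩, ⟨a', b'⟩⟩, rfl⟩ := hsur x
  rw [Module.End.mul_apply, Module.End.mul_apply, hT, LinearMap.comp_apply, ← Module.End.mul_apply u,
    hYu.eq, Module.End.mul_apply, hπu, ← LinearMap.comp_apply Y, hT, hp1a, hp1a, map_add, Pm.pim_sh,
    Pm.pim_sh]

end
end SpTwo

namespace SpTwo
open Polynomial

section
variable {V : Type} [AddCommGroup V] [Module (ZMod 2) V]
variable {B : LinearMap.BilinForm (ZMod 2) V} {u u' : Module.End (ZMod 2) V}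

/-- Gluing isometries along an orthogonal decomposition. -/
theorem glue [FiniteDimensional (ZMod 2) V] (hnd : ∀ y, (∀ x, B x y = 0) → y = 0)
    (hsym : ∀ x y, B x y = B y x) (m : ℕ)
    (U W : Submodule (ZMod 2) V) (horth : ∀ x ∈ U, ∀ y ∈ W, B x y = 0) (hsup : U ⊔ W = ⊤)
    (hU : ∀ x ∈ U, u x ∈ U) (hW : ∀ x ∈ W, u x ∈ W)
    (hTU : ∃ T : Module.End (ZMod 2) U, T * u.restrict hU = (u.restrict hU) ^ m * T ∧
      ∀ x y, B (T x : V) (T y : V) = B (x : V) (y : V))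
    (hTW : ∃ T : Module.End (ZMod 2) W, T * u.restrict hW = (u.restrict hW) ^ m * T ∧
      ∀ x y, B (T x : V) (T y : V) = B (x : V) (y : V)) :
    ∃ T : Module.End (ZMod 2) V, T * u = u ^ m * T ∧ ∀ x y, B (T x) (T y) = B x y := by
  obtain ⟨T1, h1, h1'⟩ := hTU
  obtain ⟨T2, h2, h2'⟩ := hTW
  have hsurj : Function.Surjective (LinearMap.coprod U.subtype W.subtype) := by
    rw [← LinearMap.range_eq_top, LinearMap.range_coprod, Submodule.range_subtype,
      Submodule.range_subtype, hsup]
  obtain ⟨T, hT, hTB⟩ := gram B hnd (LinearMap.coprod U.subtype W.subtype)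
    (LinearMap.coprod (U.subtype ∘ₗ T1) (W.subtype ∘ₗ T2)) hsurj (by
      rintro ⟨x1, x2⟩ ⟨y1, y2⟩
      simp only [LinearMap.coprod_apply, LinearMap.comp_apply, Submodule.subtype_apply, map_add,
        LinearMap.add_apply, h1', h2']
      rw [horth _ (T1 x1).2 _ (T2 y2).2, horth _ x1.2 _ y2.2, hsym (T2 x2 : V) (T1 y1 : V), hsym (x2 : V) (y1 : V),
        horth _ (T1 y1).2 _ (T2 x2).2, horth _ y1.2 _ x2.2])
  refine ⟨T, ?_, hTB⟩
  ext x
  obtain ⟨⟨x1, x2⟩, rfl⟩ := hsurj x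
  have e : u (LinearMap.coprod U.subtype W.subtype (x1, x2)) =
      LinearMap.coprod U.subtype W.subtype (u.restrict hU x1, u.restrict hW x2) := by
    simp [LinearMap.coprod_apply]
  rw [Module.End.mul_apply, Module.End.mul_apply, e, hT, hT]
  have e1 := LinearMap.congr_fun h1 x1
  have e2 := LinearMap.congr_fun h2 x2
  rw [Module.End.mul_apply, Module.End.mul_apply, Module.End.pow_restrict] at e1 e2
  simp only [LinearMap.coprod_apply, LinearMap.comp_apply, Submodule.subtype_apply, map_add]
  rw [e1, e2]
  rfl

theorem perp_sup [FiniteDimensional (ZMod 2) V] (hsym : ∀ x y, B x y = B y x)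
    (U : Submodule (ZMod 2) V) (hU : ∀ y ∈ U, (∀ x ∈ U, B x y = 0) → y = 0) :
    ∃ W : Submodule (ZMod 2) V, (∀ y, y ∈ W ↔ ∀ x ∈ U, B x y = 0) ∧ U ⊔ W = ⊤ := by
  let b : U →ₗ[ZMod 2] Module.Dual (ZMod 2) U := (B.restrict U).flip
  have hb : ∀ y x, b y x = B (x : V) (y : V) := fun _ _ => rfl
  have hinj : Function.Injective b := by
    rw [← LinearMap.ker_eq_bot, LinearMap.ker_eq_bot']
    intro y hy
    refine Subtype.ext (hU y y.2 fun x hx => ?_)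
    have := LinearMap.congr_fun hy ⟨x, hx⟩
    simpa [hb] using this
  have hsurj : Function.Surjective b :=
    (LinearMap.injective_iff_surjective_of_finrank_eq_finrank
      Subspace.dual_finrank_eq.symm).1 hinj
  let W : Submodule (ZMod 2) V := LinearMap.ker ((LinearMap.lcomp (ZMod 2) (ZMod 2) U.subtype) ∘ₗ B.flip)
  have hW : ∀ y, y ∈ W ↔ ∀ x ∈ U, B x y = 0 := by
    intro y
    rw [LinearMap.mem_ker]
    constructor
    · intro h x hx
      exact LinearMap.congr_fun h ⟨x, hx⟩
    · intro h
      ext x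
      exact h x x.2
  refine ⟨W, hW, ?_⟩
  rw [eq_top_iff]
  intro z _
  obtain ⟨y, hy⟩ := hsurj ((B.flip z) ∘ₗ U.subtype)
  rw [show z = y + (z - y) by abel]
  refine Submodule.add_mem_sup y.2 ((hW _).2 fun x hx => ?_)
  have := LinearMap.congr_fun hy ⟨x, hx⟩
  rw [hb] at this
  rw [map_sub, this]
  simp

theorem IsoPair.restrict (P : IsoPair B u u') (U : Submodule (ZMod 2) V)
    (hU : ∀ x ∈ U, u x ∈ U) (hU' : ∀ x ∈ U, u' x ∈ U) :
    IsoPair (B.restrict U) (u.restrict hU) (u'.restrict hU') := by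
  refine ⟨fun x => P.alt x, ?_, ?_, fun x y => P.iso x y⟩
  · ext x
    exact LinearMap.congr_fun P.h1 (x : V)
  · ext x
    exact LinearMap.congr_fun P.h2 (x : V)

theorem hom_aeval {W : Type} [AddCommGroup W] [Module (ZMod 2) W] (f : W →ₗ[ZMod 2] V)
    (g : Module.End (ZMod 2) W) (h : Module.End (ZMod 2) V) (hfg : ∀ x, f (g x) = h (f x))
    (p : (ZMod 2)[X]) (x : W) : f (aeval g p x) = aeval h p (f x) := by
  have hp : ∀ (n : ℕ) x, f ((g ^ n) x) = (h ^ n) (f x) := by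
    intro n
    induction n with
    | zero => simp
    | succ n ih => intro x; rw [pow_succ', Module.End.mul_apply, hfg, ih, pow_succ', Module.End.mul_apply]
  induction p using Polynomial.induction_on' with
  | add p q hp hq => simp [hp, hq]
  | monomial n a => simp [aeval_monomial, hp, Module.algebraMap_end_apply]

theorem hom_pim {W : Type} [AddCommGroup W] [Module (ZMod 2) W] (f : W →ₗ[ZMod 2] V)
    (g g' : Module.End (ZMod 2) W) (hfg : ∀ x, f (g x) = u (f x)) (hfg' : ∀ x, f (g' x) = u' (f x))
    (v : W) (x : (ZMod 2)[X] × (ZMod 2)[X]) : f (pim g g' v x) = pim u u' (f v) x := by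
  obtain ⟨a, b⟩ := x
  have : ∀ x, f ((g + g') x) = (u + u') (f x) := by intro x; simp [hfg, hfg']
  rw [pim_apply, pim_apply, map_add, hom_aeval f _ _ this, hom_aeval f _ _ this, hfg]

theorem hom_wpow {W : Type} [AddCommGroup W] [Module (ZMod 2) W] (f : W →ₗ[ZMod 2] V)
    (g : Module.End (ZMod 2) W) (hfg : ∀ x, f (g x) = u (f x)) (n : ℕ) (x : W) :
    f (((g + 1) ^ n) x) = ((u + 1) ^ n) (f x) := by
  have := hom_aeval f g u hfg ((X + 1) ^ n) x
  simpa using this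

theorem IsoPair.wt (P : IsoPair B u u') (i e : ℕ) (h : (u + 1) ^ (2 * i + e + 1) = 0) :
    (u + 1) ^ (2 * i + e) = (u + u') ^ i * (u + 1) ^ e := by
  have hut : Commute u (u + u') := by
    have := comm_t u u' P.h1 P.h2 X
    rwa [aeval_X] at this
  have h1 : u * (u + 1) ^ (2 * i + e) = (u + 1) ^ (2 * i + e) := by
    rw [pow_succ', add_mul, one_mul] at h
    have := congrArg (fun z => z + (u + 1) ^ (2 * i + e)) h
    simpa [add_assoc, end_add_self] using this
  have h2 : u' * (u + 1) ^ (2 * i + e) = (u + 1) ^ (2 * i + e) := by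
    conv_lhs => rw [← h1]
    rw [← mul_assoc, P.h2, one_mul]
  have h3 : ∀ n : ℕ, u' ^ n * (u + 1) ^ (2 * i + e) = (u + 1) ^ (2 * i + e) := by
    intro n
    induction n with
    | zero => simp
    | succ n ih => rw [pow_succ, mul_assoc, h2, ih]
  rw [← h3 i, pow_add, pow_mul, P.w_sq, hut.mul_pow, mul_assoc, ← mul_assoc,
    (P.pow i).h2, one_mul]

theorem IsoPair.tpow_zero (P : IsoPair B u u') (i : ℕ) (h : (u + 1) ^ (2 * i) = 0) :
    (u + u') ^ i = 0 := by
  have hut : Commute u (u + u') := by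
    have := comm_t u u' P.h1 P.h2 X
    rwa [aeval_X] at this
  rw [pow_mul, P.w_sq, hut.mul_pow] at h
  have := congrArg (fun z => u' ^ i * z) h
  simpa only [mul_zero, ← mul_assoc, (P.pow i).h2, one_mul] using this

theorem blockI' [FiniteDimensional (ZMod 2) V] (hnd : ∀ y, (∀ x, B x y = 0) → y = 0)
    (P : IsoPair B u u') (j k : ℕ) (hk : 1 ≤ k) (v : V) (hw : (u + 1) ^ k = 0)
    (hv : B v (((u + 1) ^ (k - 1)) v) = 1)
    (hsurj : Function.Surjective (pim u u' v)) :
    ∃ T : Module.End (ZMod 2) V, T * u = u ^ (2 * j + 1) * T ∧ ∀ x y, B (T x) (T y) = B x y := by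
  rcases Nat.even_or_odd' k with ⟨l, rfl | rfl⟩
  · have hl : 1 ≤ l := by omega
    obtain ⟨i, rfl⟩ := Nat.exists_eq_add_of_le' hl
    have h1 := P.wt i 1 (by rw [← hw]; congr 1)
    rw [show 2 * (i + 1) - 1 = 2 * i + 1 by omega, h1, pow_one] at hv
    have h2 := P.tpow_zero (i + 1) hw
    have e := P.altt (X ^ i) v
    simp only [map_pow, aeval_X] at e
    refine blockI hnd P j (i + 1) hl v ?_ ?_ hsurj
    · rintro p ⟨q, rfl⟩
      rw [lam_apply, map_mul, map_pow, aeval_X, h2, zero_mul, LinearMap.zero_apply, map_zero]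
    · rw [lam_apply, Nat.add_sub_cancel, map_pow, aeval_X]
      rw [mul_add, mul_one, LinearMap.add_apply, map_add, e, add_zero, Module.End.mul_apply] at hv
      exact hv
  · exfalso
    have h1 := P.wt l 0 hw
    rw [add_zero, pow_zero, mul_one] at h1
    rw [Nat.add_sub_cancel, h1] at hv
    have e := P.altt (X ^ l) v
    simp only [map_pow, aeval_X] at e
    rw [e] at hv
    exact absurd hv (by decide)

theorem IsoPair.decomp (P : IsoPair B u u') (U : Submodule (ZMod 2) V)
    (hU : ∀ x ∈ U, u x ∈ U) (hU' : ∀ x ∈ U, u' x ∈ U) (v : V) (hv : v ∈ U) (a b : (ZMod 2)[X]) :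
    ∃ z ∈ U, pim u u' v (a, b) = (a.eval 0 + b.eval 0) • v + (u + 1) (b.eval 0 • v + (u + 1) z) := by
  have haev : ∀ (p : (ZMod 2)[X]), ∀ x ∈ U, aeval (u + u') p x ∈ U := by
    intro p
    induction p using Polynomial.induction_on with
    | C c => intro x hx; simpa [Module.algebraMap_end_apply] using U.smul_mem c hx
    | add p q hp hq =>
      intro x hx; rw [map_add]; exact U.add_mem (hp x hx) (hq x hx)
    | monomial n c ih =>
      intro x hx
      rw [pow_succ, ← mul_assoc, map_mul, aeval_X, Module.End.mul_apply]
      exact ih _ (U.add_mem (hU x hx) (hU' x hx))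
  obtain ⟨c, r, rfl⟩ := poly_split a
  obtain ⟨d, s, rfl⟩ := poly_split b
  have hpm : pim u u' v (r, s) ∈ U := by
    rw [pim_apply]; exact U.add_mem (haev _ _ hv) (haev _ _ (hU _ hv))
  refine ⟨u' (pim u u' v (r, s)), hU' _ hpm, ?_⟩
  have e1 : pim u u' v (C c + X * r, C d + X * s) =
      c • v + d • u v + (u + u') (pim u u' v (r, s)) := by
    simp only [pim_apply, map_add, map_mul, aeval_X, aeval_C, LinearMap.add_apply,
      Module.algebraMap_end_apply, Module.End.mul_apply]
    abel
  have e2 : (u + 1) ((u + 1) (u' (pim u u' v (r, s)))) = (u + u') (pim u u' v (r, s)) := by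
    have hut' : Commute u' (u + u') := by
      have := comm_t' u u' P.h1 P.h2 X
      rwa [aeval_X] at this
    have : (u + 1) ^ 2 * u' = u + u' := by
      rw [P.w_sq, mul_assoc, ← hut'.eq, ← mul_assoc, P.h1, one_mul]
    rw [← this]
    simp only [sq, Module.End.mul_apply]
  rw [map_add, e2, e1]
  simp only [eval_add, eval_C, eval_mul, eval_X, zero_mul, add_zero, LinearMap.add_apply, map_smul,
    Module.End.one_apply, add_smul, smul_add]
  have := two_smul_zero (d • v)
  calc c • v + d • u v + (u (pim u u' v (r, s)) + u' (pim u u' v (r, s)))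
      = c • v + (d • v + d • v) + d • u v + (u (pim u u' v (r, s)) + u' (pim u u' v (r, s))) := by
        rw [this, add_zero]
    _ = _ := by abel

end
end SpTwo

namespace SpTwo
open Polynomial

section
variable {V : Type} [AddCommGroup V] [Module (ZMod 2) V]
variable {B : LinearMap.BilinForm (ZMod 2) V} {u u' : Module.End (ZMod 2) V}

theorem ev_dvd (p : (ZMod 2)[X]) (h : p.eval 0 = 0) : X ∣ p := by
  rw [X_dvd_iff, coeff_zero_eq_eval_zero, h]

/-- Symmetry of the top form. -/
theorem top_symm (w : Module.End (ZMod 2) V) (Hx : ∀ x, B x (w x) = 0) (x y : V) :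
    B x (w y) = B y (w x) := by
  have := Hx (x + y)
  simp only [map_add, LinearMap.add_apply, Hx, zero_add, add_zero] at this
  rcases zmod_two_cases (B x (w y)) with h | h <;> rcases zmod_two_cases (B y (w x)) with h' | h' <;>
    simp_all

theorem top_indep (w : Module.End (ZMod 2) V) (Hx : ∀ x, B x (w x) = 0) (v v' : V)
    (hvv : B v (w v') = 1) (c c' : ZMod 2) (h : w (c • v + c' • v') = 0) : c = 0 ∧ c' = 0 := by
  rw [map_add, map_smul, map_smul] at h
  have h1 := congrArg (B v) h
  have h2 := congrArg (B v') h
  rw [map_add, map_smul, map_smul, Hx, hvv] at h1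
  rw [map_add, map_smul, map_smul, Hx, top_symm w Hx, hvv] at h2
  constructor
  · simpa using h2
  · simpa using h1

theorem wpow_kill (k : ℕ) (hk : 1 ≤ k) (hw : (u + 1) ^ k = 0) (z : V) :
    ((u + 1) ^ (k - 1)) ((u + 1) z) = 0 := by
  rw [← Module.End.mul_apply, ← pow_succ, Nat.sub_add_cancel hk, hw]; rfl

theorem IsoPair.H1 (P : IsoPair B u u') (k : ℕ) (hk : 1 ≤ k) (hw : (u + 1) ^ k = 0)
    (Hx : ∀ x, B x (((u + 1) ^ (k - 1)) x) = 0) (x : V) (p : (ZMod 2)[X])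
    (hp : X ^ ((k - 1) / 2) ∣ p) : lam B u u' x p = 0 := by
  obtain ⟨r, rfl⟩ := hp
  rcases Nat.even_or_odd' k with ⟨l, rfl | rfl⟩
  · obtain ⟨i, rfl⟩ := Nat.exists_eq_add_of_le' (show 1 ≤ l by omega)
    have h1 := P.wt i 1 (by rw [← hw]; congr 1)
    have h2 := P.tpow_zero (i + 1) hw
    have hx := Hx x
    rw [show 2 * (i + 1) - 1 = 2 * i + 1 by omega, h1, pow_one, mul_add, mul_one,
      LinearMap.add_apply, map_add] at hx
    have e := P.altt (X ^ i) x
    simp only [map_pow, aeval_X] at e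
    rw [e, add_zero] at hx
    rw [show (2 * (i + 1) - 1) / 2 = i by omega]
    obtain ⟨c, q, rfl⟩ := poly_split r
    rw [lam_apply, show X ^ i * (C c + X * q) = C c * X ^ i + q * X ^ (i + 1) by ring, map_add,
      map_mul, map_mul, map_pow, map_pow, aeval_X, h2, mul_zero, add_zero, aeval_C,
      Module.End.mul_apply, Module.algebraMap_end_apply, map_smul, ← Module.End.mul_apply, hx,
      smul_zero]
  · have h1 := P.wt l 0 hw
    rw [add_zero, pow_zero, mul_one] at h1
    have h3 : (u + u') ^ l * u = (u + u') ^ l := by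
      rw [pow_succ, h1, mul_add, mul_one] at hw
      have := congrArg (fun z => z + (u + u') ^ l) hw
      simpa [add_assoc, end_add_self] using this
    rw [show (2 * l + 1 - 1) / 2 = l by omega]
    have e := P.altt (r * X ^ l) x
    rw [lam_apply, mul_comm, ← Module.End.mul_apply, map_mul, map_pow, aeval_X, mul_assoc, h3]
    simpa using e

theorem IsoPair.H2 (P : IsoPair B u u') (k : ℕ) (hk : 1 ≤ k) (hw : (u + 1) ^ k = 0)
    (Hx : ∀ x, B x (((u + 1) ^ (k - 1)) x) = 0) (v v' : V)
    (hvv : B v (((u + 1) ^ (k - 1)) v') = 1) (a b a' b' : (ZMod 2)[X])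
    (h : pim u u' v (a, b) + pim u u' v' (a', b') = 0) (i : ℕ) (hi : 2 * i ≤ k - 1) :
    X ^ i ∣ a ∧ X ^ i ∣ b ∧ X ^ i ∣ a' ∧ X ^ i ∣ b' := by
  induction i with
  | zero => simp
  | succ i ih =>
    obtain ⟨⟨a1, rfl⟩, ⟨b1, rfl⟩, ⟨a1', rfl⟩, ⟨b1', rfl⟩⟩ := ih (by omega)
    rw [← P.pim_mul, ← P.pim_mul, ← map_add, map_pow, aeval_X] at h
    have hut : Commute u (u + u') := by
      have := comm_t u u' P.h1 P.h2 X
      rwa [aeval_X] at this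
    have hk2 : ∀ n, 2 * i ≤ n → ((u + 1) ^ n) (pim u u' v (a1, b1) + pim u u' v' (a1', b1')) = 0 := by
      intro n hn
      rw [← Nat.sub_add_cancel hn, pow_add, pow_mul, P.w_sq, hut.mul_pow, Module.End.mul_apply,
        Module.End.mul_apply, h, map_zero, map_zero]
    obtain ⟨z, -, hz⟩ := P.decomp ⊤ (by simp) (by simp) v (by simp) a1 b1
    obtain ⟨z', -, hz'⟩ := P.decomp ⊤ (by simp) (by simp) v' (by simp) a1' b1'
    have e1 := hk2 (k - 1) (by omega)
    have e2 := hk2 (k - 2) (by omega)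
    rw [hz, hz'] at e1 e2
    have i1 := top_indep _ Hx v v' hvv (a1.eval 0 + b1.eval 0) (a1'.eval 0 + b1'.eval 0) (by
      rw [← e1]
      simp only [map_add, wpow_kill k hk hw]
      abel)
    rw [i1.1, i1.2, zero_smul, zero_smul, zero_add, zero_add] at e2
    have i2 := top_indep _ Hx v v' hvv (b1.eval 0) (b1'.eval 0) (by
      have hs : (u + 1) ^ (k - 1) = (u + 1) ^ (k - 2) * (u + 1) := by
        rw [← pow_succ]; congr 1; omega
      have hk' : ∀ z, ((u + 1) ^ (k - 2)) ((u + 1) ((u + 1) z)) = 0 := by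
        intro z
        rw [← Module.End.mul_apply, ← hs, wpow_kill k hk hw]
      simp only [map_add, hk', add_zero] at e2
      rw [← Module.End.mul_apply, ← Module.End.mul_apply, ← hs] at e2
      rw [map_add, e2])
    have j1 : a1.eval 0 = 0 := by simpa [i2.1] using i1.1
    have j2 : a1'.eval 0 = 0 := by simpa [i2.2] using i1.2
    simp only [pow_succ]
    exact ⟨mul_dvd_mul_left _ (ev_dvd _ j1), mul_dvd_mul_left _ (ev_dvd _ i2.1),
      mul_dvd_mul_left _ (ev_dvd _ j2), mul_dvd_mul_left _ (ev_dvd _ i2.2)⟩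

/-- Elements of the span of `v, v'` killed by the top power lie in the image of `u + 1`. -/
theorem IsoPair.H3 (P : IsoPair B u u') (U : Submodule (ZMod 2) V)
    (hU : ∀ x ∈ U, u x ∈ U) (hU' : ∀ x ∈ U, u' x ∈ U) (k : ℕ) (hk : 1 ≤ k) (hw : (u + 1) ^ k = 0)
    (Hx : ∀ x, B x (((u + 1) ^ (k - 1)) x) = 0) (v v' : V) (hv : v ∈ U) (hv' : v' ∈ U)
    (hvv : B v (((u + 1) ^ (k - 1)) v') = 1) (a b a' b' : (ZMod 2)[X])
    (h1 : B v (((u + 1) ^ (k - 1)) (pim u u' v (a, b) + pim u u' v' (a', b'))) = 0)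
    (h2 : B v' (((u + 1) ^ (k - 1)) (pim u u' v (a, b) + pim u u' v' (a', b'))) = 0) :
    ∃ z ∈ U, pim u u' v (a, b) + pim u u' v' (a', b') = (u + 1) z := by
  obtain ⟨z, hzU, hz⟩ := P.decomp U hU hU' v hv a b
  obtain ⟨z', hzU', hz'⟩ := P.decomp U hU hU' v' hv' a' b'
  rw [hz, hz'] at h1 h2 ⊢
  have hvv' : B v' (((u + 1) ^ (k - 1)) v) = 1 := by rw [top_symm _ Hx, hvv]
  simp only [map_add, wpow_kill k hk hw, add_zero, map_smul, Hx, hvv, smul_zero, zero_add] at h1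
  simp only [map_add, wpow_kill k hk hw, add_zero, map_smul, Hx, hvv', smul_zero, zero_add] at h2
  have j1 : a'.eval 0 + b'.eval 0 = 0 := by simpa using h1
  have j2 : a.eval 0 + b.eval 0 = 0 := by simpa using h2
  rw [j1, j2, zero_smul, zero_smul, zero_add, zero_add, ← map_add]
  have hw1 : ∀ x ∈ U, (u + 1) x ∈ U := fun x hx => U.add_mem (hU x hx) hx
  exact ⟨_, U.add_mem (U.add_mem (U.smul_mem _ hv) (hw1 _ hzU))
    (U.add_mem (U.smul_mem _ hv') (hw1 _ hzU')), rfl⟩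

theorem blockII' [FiniteDimensional (ZMod 2) V] (hnd : ∀ y, (∀ x, B x y = 0) → y = 0)
    (P : IsoPair B u u') (j nu : ℕ) (hnu : u' = u ^ nu) (k : ℕ) (hk : 1 ≤ k)
    (hw : (u + 1) ^ k = 0)
    (Hx : ∀ x, B x (((u + 1) ^ (k - 1)) x) = 0) (v v' : V)
    (hvv : B v (((u + 1) ^ (k - 1)) v') = 1)
    (hsurj : Function.Surjective (LinearMap.coprod (pim u u' v) (pim u u' v'))) :
    ∃ T : Module.End (ZMod 2) V, T * u = u ^ (2 * j + 1) * T ∧ ∀ x y, B (T x) (T y) = B x y := by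
  refine blockII hnd P j nu hnu k hk hw v v' hvv ((k - 1) / 2) (by omega)
    (fun x p hp => P.H1 k hk hw Hx x p hp) hsurj
    (fun a b a' b' h => P.H2 k hk hw Hx v v' hvv a b a' b' h _ (by omega)) ?_
  intro x hx
  obtain ⟨⟨⟨a, b⟩, ⟨a', b'⟩⟩, rfl⟩ := hsurj x
  rw [LinearMap.coprod_apply] at hx ⊢
  obtain ⟨z, -, hz⟩ := P.H3 ⊤ (by simp) (by simp) k hk hw Hx v v' (by simp) (by simp) hvv a b a' b'
    (by rw [hx, map_zero]) (by rw [hx, map_zero])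
  exact ⟨z, hz⟩

theorem IsoPair.adjw (P : IsoPair B u u') (n : ℕ) (x y : V) :
    B x (((u + 1) ^ n) y) = B (((u' + 1) ^ n) x) y := by
  induction n generalizing x y with
  | zero => simp
  | succ n ih =>
    rw [pow_succ, Module.End.mul_apply, ih, pow_succ', Module.End.mul_apply]
    simp [P.adj']

theorem IsoPair.nondeg (P : IsoPair B u u') (U : Submodule (ZMod 2) V)
    (hU' : ∀ x ∈ U, u' x ∈ U) (k : ℕ) (hk : 1 ≤ k) (hw : (u + 1) ^ k = 0)
    (Hz : ∀ z ∈ U, (∀ x ∈ U, B x (((u + 1) ^ (k - 1)) z) = 0) → ∃ z' ∈ U, z = (u + 1) z')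
    (y : V) (hy : y ∈ U) (h : ∀ x ∈ U, B x y = 0) : y = 0 := by
  have hw' : ∀ n : ℕ, ∀ x ∈ U, ((u' + 1) ^ n) x ∈ U := by
    intro n
    induction n with
    | zero => simp
    | succ n ih =>
      intro x hx
      rw [pow_succ, Module.End.mul_apply]
      exact ih _ (U.add_mem (hU' x hx) hx)
  have key : ∀ i, i ≤ k → ∃ z ∈ U, y = ((u + 1) ^ i) z := by
    intro i
    induction i with
    | zero => intro _; exact ⟨y, hy, by simp⟩
    | succ i ih =>
      intro hi
      obtain ⟨z, hz, rfl⟩ := ih (by omega)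
      obtain ⟨z', hz', rfl⟩ := Hz z hz (by
        intro x hx
        have : k - 1 = (k - 1 - i) + i := by omega
        rw [this, pow_add, Module.End.mul_apply, P.adjw]
        exact h _ (hw' _ _ hx))
      exact ⟨z', hz', by rw [pow_succ, Module.End.mul_apply]⟩
  obtain ⟨z, -, rfl⟩ := key k le_rfl
  rw [hw]; rfl

end
end SpTwo

namespace SpTwo
open Polynomial

/-- The unipotent statement for spaces of dimension less than `d`. -/
def UnipBelow (j nu d : ℕ) : Prop :=
  ∀ (V : Type) [AddCommGroup V] [Module (ZMod 2) V] [FiniteDimensional (ZMod 2) V]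
    (B : LinearMap.BilinForm (ZMod 2) V) (u u' : Module.End (ZMod 2) V),
    Module.finrank (ZMod 2) V < d → (∀ y, (∀ x, B x y = 0) → y = 0) → IsoPair B u u' →
    u' = u ^ nu → IsNilpotent (u + 1) →
    ∃ T : Module.End (ZMod 2) V, T * u = u ^ (2 * j + 1) * T ∧ ∀ x y, B (T x) (T y) = B x y

section
variable {V : Type} [AddCommGroup V] [Module (ZMod 2) V]
variable {B : LinearMap.BilinForm (ZMod 2) V} {u u' : Module.End (ZMod 2) V}

theorem restrict_nu (nu : ℕ) (hnu : u' = u ^ nu) (U : Submodule (ZMod 2) V)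
    (hU : ∀ x ∈ U, u x ∈ U) (hU' : ∀ x ∈ U, u' x ∈ U) :
    u'.restrict hU' = (u.restrict hU) ^ nu := by
  subst hnu
  rw [Module.End.pow_restrict]

theorem restrict_wpow (U : Submodule (ZMod 2) V)
    (hU : ∀ x ∈ U, u x ∈ U) (n : ℕ) (x : U) :
    (((u.restrict hU + 1) ^ n) x : V) = ((u + 1) ^ n) (x : V) :=
  hom_wpow U.subtype (u.restrict hU) (fun _ => rfl) n x

theorem restrict_nil (U : Submodule (ZMod 2) V)
    (hU : ∀ x ∈ U, u x ∈ U) (n : ℕ) (h : (u + 1) ^ n = 0) : (u.restrict hU + 1) ^ n = 0 := by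
  ext x
  rw [restrict_wpow, h]; rfl

theorem IsoPair.step [FiniteDimensional (ZMod 2) V] (hnd : ∀ y, (∀ x, B x y = 0) → y = 0)
    (P : IsoPair B u u') (j nu : ℕ) (hnu : u' = u ^ nu) (hnil : IsNilpotent (u + 1))
    (IH : UnipBelow j nu (Module.finrank (ZMod 2) V))
    (U : Submodule (ZMod 2) V) (hU : ∀ x ∈ U, u x ∈ U) (hU' : ∀ x ∈ U, u' x ∈ U)
    (hUnd : ∀ y ∈ U, (∀ x ∈ U, B x y = 0) → y = 0) (v : V) (hv : v ∈ U) (hv0 : v ≠ 0)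
    (hT : ∃ T : Module.End (ZMod 2) U, T * u.restrict hU = (u.restrict hU) ^ (2 * j + 1) * T ∧
      ∀ x y, B.restrict U (T x) (T y) = B.restrict U x y) :
    ∃ T : Module.End (ZMod 2) V, T * u = u ^ (2 * j + 1) * T ∧ ∀ x y, B (T x) (T y) = B x y := by
  obtain ⟨W, hW, hsup⟩ := perp_sup P.symm U hUnd
  have hWu : ∀ x ∈ W, u x ∈ W := fun y hy => (hW _).2 fun x hx => by
    rw [← P.adj']; exact (hW y).1 hy _ (hU' x hx)
  have hWu' : ∀ x ∈ W, u' x ∈ W := fun y hy => (hW _).2 fun x hx => by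
    rw [← P.adj]; exact (hW y).1 hy _ (hU x hx)
  have hlt : Module.finrank (ZMod 2) W < Module.finrank (ZMod 2) V := by
    apply Submodule.finrank_lt
    rintro rfl
    exact hv0 (hUnd v hv fun x hx => (hW v).1 (by simp) x hx)
  refine glue hnd P.symm (2 * j + 1) U W (fun x hx y hy => (hW y).1 hy x hx) hsup hU hWu hT ?_
  obtain ⟨n, hn⟩ := hnil
  refine IH W (B.restrict W) (u.restrict hWu) (u'.restrict hWu') hlt ?_ (P.restrict W hWu hWu')
    (restrict_nu nu hnu W hWu hWu') ⟨n, restrict_nil W hWu n hn⟩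
  intro y hy
  refine Subtype.ext (hnd y fun x => ?_)
  have hx : x ∈ U ⊔ W := by rw [hsup]; trivial
  obtain ⟨a, ha, b, hb, rfl⟩ := Submodule.mem_sup.1 hx
  rw [map_add, LinearMap.add_apply, (hW y).1 y.2 a ha, zero_add]
  exact hy ⟨b, hb⟩

theorem stable_pow (nu : ℕ) (hnu : u' = u ^ nu) (U : Submodule (ZMod 2) V)
    (hU : ∀ x ∈ U, u x ∈ U) : ∀ x ∈ U, u' x ∈ U := by
  subst hnu
  induction nu with
  | zero => intro x hx; simpa using hx
  | succ n ih => intro x hx; rw [pow_succ', Module.End.mul_apply]; exact hU _ (ih x hx)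

theorem IsoPair.unip_step [FiniteDimensional (ZMod 2) V] (hnd : ∀ y, (∀ x, B x y = 0) → y = 0)
    (P : IsoPair B u u') (j nu : ℕ) (hnu : u' = u ^ nu) (hnil : IsNilpotent (u + 1))
    (IH : UnipBelow j nu (Module.finrank (ZMod 2) V)) :
    ∃ T : Module.End (ZMod 2) V, T * u = u ^ (2 * j + 1) * T ∧ ∀ x y, B (T x) (T y) = B x y := by
  classical
  rcases subsingleton_or_nontrivial V with hs | hs
  · exact ⟨1, LinearMap.ext fun x => Subsingleton.elim _ _, fun x y => rfl⟩
  obtain ⟨k, hk, hw, hmin⟩ : ∃ k, 1 ≤ k ∧ (u + 1) ^ k = 0 ∧ (u + 1) ^ (k - 1) ≠ 0 := by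
    refine ⟨Nat.find hnil, ?_, Nat.find_spec hnil, ?_⟩
    · rw [Nat.one_le_iff_ne_zero]
      intro h
      have := Nat.find_spec hnil
      rw [h, pow_zero] at this
      exact one_ne_zero this
    · apply Nat.find_min hnil
      have : Nat.find hnil ≠ 0 := by
        intro h
        have := Nat.find_spec hnil
        rw [h, pow_zero] at this
        exact one_ne_zero this
      omega
  by_cases hcase : ∃ v, B v (((u + 1) ^ (k - 1)) v) = 1
  · obtain ⟨v, hv⟩ := hcase
    let U := LinearMap.range (pim u u' v)
    have hU : ∀ x ∈ U, u x ∈ U := by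
      rintro _ ⟨⟨a, b⟩, rfl⟩
      exact ⟨_, (P.pim_sh v a b).symm⟩
    have hU' : ∀ x ∈ U, u' x ∈ U := stable_pow nu hnu U hU
    have hvU : v ∈ U := ⟨(1, 0), by simp [pim_apply]⟩
    have hv0 : v ≠ 0 := by rintro rfl; simp at hv
    have hUnd : ∀ y ∈ U, (∀ x ∈ U, B x y = 0) → y = 0 := by
      refine P.nondeg U hU' k hk hw ?_
      rintro _ ⟨⟨a, b⟩, rfl⟩ h
      obtain ⟨z, hzU, hz⟩ := P.decomp U hU hU' v hvU a b
      have h1 := h v hvU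
      rw [hz] at h1 ⊢
      simp only [map_add, wpow_kill k hk hw, add_zero, map_smul, hv] at h1
      have h2 : a.eval 0 + b.eval 0 = 0 := by simpa using h1
      rw [h2, zero_smul, zero_add]
      exact ⟨_, U.add_mem (U.smul_mem _ hvU) (U.add_mem (hU _ hzU) hzU), rfl⟩
    refine P.step hnd j nu hnu hnil IH U hU hU' hUnd v hvU hv0 ?_
    refine blockI' ?_ (P.restrict U hU hU') j k hk ⟨v, hvU⟩ (restrict_nil U hU k hw) ?_ ?_
    · intro y hy
      exact Subtype.ext (hUnd y y.2 fun x hx => hy ⟨x, hx⟩)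
    · change B v (((u.restrict hU + 1) ^ (k - 1)) (⟨v, hvU⟩ : U) : V) = 1
      rw [restrict_wpow, hv]
    · rintro ⟨_, ⟨x, rfl⟩⟩
      exact ⟨x, Subtype.ext (hom_pim U.subtype _ _ (fun _ => rfl) (fun _ => rfl) _ x)⟩
  · have Hx : ∀ x, B x (((u + 1) ^ (k - 1)) x) = 0 := by
      intro x
      rcases zmod_two_cases (B x (((u + 1) ^ (k - 1)) x)) with h | h
      · exact h
      · exact absurd ⟨x, h⟩ hcase
    obtain ⟨v, v', hvv⟩ : ∃ v v', B v (((u + 1) ^ (k - 1)) v') = 1 := by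
      by_contra hcon
      push Not at hcon
      apply hmin
      ext y
      refine hnd _ fun x => ?_
      rcases zmod_two_cases (B x (((u + 1) ^ (k - 1)) y)) with h | h
      · exact h
      · exact absurd h (hcon x y)
    let U := LinearMap.range (LinearMap.coprod (pim u u' v) (pim u u' v'))
    have hU : ∀ x ∈ U, u x ∈ U := by
      rintro _ ⟨⟨⟨a, b⟩, ⟨a', b'⟩⟩, rfl⟩
      refine ⟨((b, a + X * b), (b', a' + X * b')), ?_⟩
      rw [LinearMap.coprod_apply, LinearMap.coprod_apply, map_add, P.pim_sh, P.pim_sh]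
    have hU' : ∀ x ∈ U, u' x ∈ U := stable_pow nu hnu U hU
    have hvU : v ∈ U := ⟨((1, 0), 0), by simp [pim_apply]⟩
    have hvU' : v' ∈ U := ⟨(0, (1, 0)), by simp [pim_apply]⟩
    have hv0 : v ≠ 0 := by rintro rfl; simp at hvv
    have hUnd : ∀ y ∈ U, (∀ x ∈ U, B x y = 0) → y = 0 := by
      refine P.nondeg U hU' k hk hw ?_
      rintro _ ⟨⟨⟨a, b⟩, ⟨a', b'⟩⟩, rfl⟩ h
      exact P.H3 U hU hU' k hk hw Hx v v' hvU hvU' hvv a b a' b' (h v hvU) (h v' hvU')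
    refine P.step hnd j nu hnu hnil IH U hU hU' hUnd v hvU hv0 ?_
    refine blockII' ?_ (P.restrict U hU hU') j nu (restrict_nu nu hnu U hU hU') k hk
      (restrict_nil U hU k hw) ?_ ⟨v, hvU⟩ ⟨v', hvU'⟩ ?_ ?_
    · intro y hy
      exact Subtype.ext (hUnd y y.2 fun x hx => hy ⟨x, hx⟩)
    · intro x
      change B (x : V) (((u.restrict hU + 1) ^ (k - 1)) x : V) = 0
      rw [restrict_wpow, Hx]
    · change B v (((u.restrict hU + 1) ^ (k - 1)) (⟨v', hvU'⟩ : U) : V) = 1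
      rw [restrict_wpow, hvv]
    · rintro ⟨_, ⟨⟨x, x'⟩, rfl⟩⟩
      refine ⟨(x, x'), Subtype.ext ?_⟩
      have e1 := hom_pim (u := u) (u' := u') U.subtype (u.restrict hU) (u'.restrict hU')
        (fun _ => rfl) (fun _ => rfl) ⟨v, hvU⟩ x
      have e2 := hom_pim (u := u) (u' := u') U.subtype (u.restrict hU) (u'.restrict hU')
        (fun _ => rfl) (fun _ => rfl) ⟨v', hvU'⟩ x'
      exact congrArg₂ (· + ·) e1 e2

end

theorem unipBelow (j nu d : ℕ) : UnipBelow j nu d := by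
  induction d with
  | zero => intro V _ _ _ B u u' h; omega
  | succ d ih =>
    intro V _ _ _ B u u' h hnd P hnu hnil
    refine P.unip_step hnd j nu hnu hnil ?_
    intro V' _ _ _ B' u1 u1' h'
    exact ih V' B' u1 u1' (by omega)

section
variable {V : Type} [AddCommGroup V] [Module (ZMod 2) V]
variable {B : LinearMap.BilinForm (ZMod 2) V} {u u' : Module.End (ZMod 2) V}

theorem IsoPair.unip [FiniteDimensional (ZMod 2) V] (hnd : ∀ y, (∀ x, B x y = 0) → y = 0)
    (P : IsoPair B u u') (j nu : ℕ) (hnu : u' = u ^ nu) (hnil : IsNilpotent (u + 1)) :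
    ∃ T : Module.End (ZMod 2) V, T * u = u ^ (2 * j + 1) * T ∧ ∀ x y, B (T x) (T y) = B x y :=
  unipBelow j nu _ V B u u' (Nat.lt_succ_self _) hnd P hnu hnil

end
end SpTwo

namespace SpTwo
open Polynomial

section
variable {V : Type} [AddCommGroup V] [Module (ZMod 2) V]
variable {B : LinearMap.BilinForm (ZMod 2) V} {u u' : Module.End (ZMod 2) V}

/-- Every isometry of finite order is conjugate to its odd powers congruent to powers of two. -/
theorem IsoPair.main [FiniteDimensional (ZMod 2) V] (hnd : ∀ y, (∀ x, B x y = 0) → y = 0)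
    (P : IsoPair B u u') (a e' m k : ℕ) (hN : 2 ^ a * e' ≠ 0) (hg : u ^ (2 ^ a * e') = 1)
    (hm : Odd m) (hmod : m ≡ 2 ^ k [MOD e']) :
    ∃ T : Module.End (ZMod 2) V, T * u = u ^ m * T ∧ ∀ x y, B (T x) (T y) = B x y := by
  have hnu : u' = u ^ (2 ^ a * e' - 1) := by
    have : u * u ^ (2 ^ a * e' - 1) = 1 := by
      rw [← pow_succ', Nat.sub_add_cancel (Nat.one_le_iff_ne_zero.2 hN), hg]
    calc u' = u' * (u * u ^ (2 ^ a * e' - 1)) := by rw [this, mul_one]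
      _ = _ := by rw [← mul_assoc, P.h2, one_mul]
  have hut : Commute u (u + u') := by
    have := comm_t u u' P.h1 P.h2 X
    rwa [aeval_X] at this
  obtain ⟨N, hN1, hC⟩ : ∃ N, 1 ≤ N ∧
      IsCompl (LinearMap.ker ((u + u') ^ N)) (LinearMap.range ((u + u') ^ N)) :=
    (((Filter.eventually_ge_atTop 1).and
      (LinearMap.eventually_isCompl_ker_pow_range_pow (u + u'))).exists)
  set U := LinearMap.ker ((u + u') ^ N) with hUdef
  set W := LinearMap.range ((u + u') ^ N) with hWdef
  have hU : ∀ x ∈ U, u x ∈ U := by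
    intro x hx
    rw [hUdef, LinearMap.mem_ker] at hx ⊢
    rw [← Module.End.mul_apply, ← (hut.pow_right N).eq, Module.End.mul_apply, hx, map_zero]
  have hW : ∀ x ∈ W, u x ∈ W := by
    rintro _ ⟨x, rfl⟩
    refine ⟨u x, ?_⟩
    rw [← Module.End.mul_apply, ← (hut.pow_right N).eq, Module.End.mul_apply]
  have hU' := stable_pow _ hnu U hU
  have hW' := stable_pow _ hnu W hW
  have horth : ∀ x ∈ U, ∀ y ∈ W, B x y = 0 := by
    rintro x hx _ ⟨y, rfl⟩
    have := P.adjt (X ^ N) x y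
    rw [map_pow, aeval_X] at this
    rw [← this, (LinearMap.mem_ker.1 hx), map_zero, LinearMap.zero_apply]
  have hsup : U ⊔ W = ⊤ := hC.sup_eq_top
  refine glue hnd P.symm m U W horth hsup hU hW ?_ ?_
  · obtain ⟨j, rfl⟩ := hm
    refine (P.restrict U hU hU').unip ?_ j _ (restrict_nu _ hnu U hU hU') ⟨2 * N, ?_⟩
    · intro y hy
      refine Subtype.ext (hnd y fun x => ?_)
      have hx : x ∈ U ⊔ W := by rw [hsup]; trivial
      obtain ⟨a, ha, b, hb, rfl⟩ := Submodule.mem_sup.1 hx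
      rw [map_add, LinearMap.add_apply, P.symm b, horth y y.2 b hb, add_zero]
      exact hy ⟨a, ha⟩
    · ext x
      rw [restrict_wpow, pow_mul, P.w_sq, hut.mul_pow, Module.End.mul_apply,
        LinearMap.mem_ker.1 x.2, map_zero]
      rfl
  · have PW := P.restrict W hW hW'
    have hgW : (u.restrict hW) ^ (2 ^ a * e') = 1 := by
      rw [Module.End.pow_restrict]
      ext x
      exact LinearMap.congr_fun hg (x : V)
    obtain ⟨T₀, hT₀, hTg⟩ := gl (u.restrict hW) a e' m k hN hgW hm hmod
    have hinj : Function.Injective (u.restrict hW + u'.restrict hW') := by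
      rw [← LinearMap.ker_eq_bot, LinearMap.ker_eq_bot']
      intro x hx
      have hx1 : (u + u') (x : V) = 0 := congrArg Subtype.val hx
      have hx2 : (x : V) ∈ U := by
        rw [hUdef, LinearMap.mem_ker, ← Nat.sub_add_cancel hN1, pow_succ, Module.End.mul_apply, hx1,
          map_zero]
      exact Subtype.ext (Submodule.disjoint_def.1 hC.disjoint _ hx2 x.2)
    have hunit : IsUnit (u.restrict hW + u'.restrict hW') := by
      rw [LinearMap.isUnit_iff_ker_eq_bot, LinearMap.ker_eq_bot]
      exact hinj
    obtain ⟨s, hs⟩ := hunit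
    refine oth (B.restrict W) PW.alt ?_ (u.restrict hW) (u'.restrict hW') (↑s⁻¹) PW.h1 PW.h2 PW.iso
      (by rw [← hs]; exact s.inv_mul) (by rw [← hs]; exact s.mul_inv) m T₀ hT₀ hTg
    intro y hy
    refine Subtype.ext (hnd y fun x => ?_)
    have hx : x ∈ U ⊔ W := by rw [hsup]; trivial
    obtain ⟨a, ha, b, hb, rfl⟩ := Submodule.mem_sup.1 hx
    rw [map_add, LinearMap.add_apply, horth a ha y y.2, zero_add]
    exact hy ⟨b, hb⟩

end
end SpTwo

namespace SpTwo
open Polynomial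

theorem iso_iff {ι : Type} [Fintype ι] [DecidableEq ι] (J M : Matrix ι ι (ZMod 2)) :
    (∀ x y, Matrix.toBilin' J (Matrix.toLin' M x) (Matrix.toLin' M y) = Matrix.toBilin' J x y) ↔
      Matrix.transpose M * J * M = J := by
  have hc := Matrix.toBilin'_comp J M M
  constructor
  · intro h
    apply (Matrix.toBilin' (R₁ := ZMod 2) (n := ι)).injective
    rw [← hc]
    exact LinearMap.ext fun x => LinearMap.ext fun y => h x y
  · intro h x y
    rw [h] at hc
    exact LinearMap.congr_fun (LinearMap.congr_fun hc x) y

theorem sp_conj (n : ℕ) (g : Matrix.symplecticGroup (Fin n) (ZMod 2)) (a e' m k : ℕ)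
    (hN : 2 ^ a * e' ≠ 0) (hg : g ^ (2 ^ a * e') = 1)
    (hm : Odd m) (hmod : m ≡ 2 ^ k [MOD e']) :
    ∃ S : Matrix.symplecticGroup (Fin n) (ZMod 2), S * g * S⁻¹ = g ^ m := by
  set J := Matrix.J (Fin n) (ZMod 2) with hJ
  let B : LinearMap.BilinForm (ZMod 2) (Fin n ⊕ Fin n → ZMod 2) := Matrix.toBilin' J
  have hB : ∀ x y, B x y = x ⬝ᵥ (J.mulVec y) := fun x y => Matrix.toBilin'_apply' J x y
  have halt : ∀ x, B x x = 0 := by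
    intro x
    rw [hB, hJ, Matrix.J, Matrix.fromBlocks_mulVec]
    simp [dotProduct, Fintype.sum_sum_type, ← Finset.sum_add_distrib, Matrix.neg_mulVec]
    exact Finset.sum_eq_zero fun i _ => by rw [mul_comm]; exact CharTwo.add_self_eq_zero _
  have hnd : ∀ y, (∀ x, B x y = 0) → y = 0 := by
    intro y hy
    have h0 : J.mulVec y = 0 := by
      refine dotProduct_eq_zero _ fun x => ?_
      rw [dotProduct_comm, ← hB, hy]
    have h1 : J.mulVec (J.mulVec y) = 0 := by rw [h0, Matrix.mulVec_zero]
    rw [Matrix.mulVec_mulVec, Matrix.J_squared, Matrix.neg_mulVec, Matrix.one_mulVec] at h1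
    simpa using h1
  have hiso : ∀ M : Matrix (Fin n ⊕ Fin n) (Fin n ⊕ Fin n) (ZMod 2),
      (∀ x y, B (Matrix.toLin' M x) (Matrix.toLin' M y) = B x y) ↔
      M ∈ Matrix.symplecticGroup (Fin n) (ZMod 2) := by
    intro M
    rw [SymplecticGroup.mem_iff']
    exact iso_iff J M
  have hmul : ∀ x y : Matrix.symplecticGroup (Fin n) (ZMod 2),
      Matrix.toLin' x.1 * Matrix.toLin' y.1 =
      Matrix.toLin' (x * y).1 := by
    intro x y
    rw [Submonoid.coe_mul, Matrix.toLin'_mul]; rfl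
  have hone : Matrix.toLin' (1 : Matrix.symplecticGroup (Fin n) (ZMod 2)).1 = 1 := by
    rw [Submonoid.coe_one, Matrix.toLin'_one]; rfl
  have hpow : ∀ (x : Matrix.symplecticGroup (Fin n) (ZMod 2)) (i : ℕ),
      (Matrix.toLin' x.1 : Module.End (ZMod 2) _) ^ i =
      Matrix.toLin' (x ^ i).1 := by
    intro x i
    induction i with
    | zero => rw [pow_zero, pow_zero, hone]
    | succ i ih => rw [pow_succ, ih, hmul, pow_succ]
  have P : IsoPair B (Matrix.toLin' g.1)
      (Matrix.toLin' (g⁻¹).1) :=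
    ⟨halt, by rw [hmul, mul_inv_cancel, hone], by rw [hmul, inv_mul_cancel, hone], (hiso _).2 g.2⟩
  obtain ⟨T, hT, hTB⟩ := P.main hnd a e' m k hN (by rw [hpow, hg, hone]) hm hmod
  obtain ⟨M, rfl⟩ := Matrix.toLin'.surjective T
  have hM := (hiso M).1 hTB
  refine ⟨⟨M, hM⟩, ?_⟩
  rw [mul_inv_eq_iff_eq_mul]
  rw [hpow] at hT
  have h2 := (hmul ⟨M, hM⟩ g).symm.trans (hT.trans (hmul (g ^ m) ⟨M, hM⟩))
  exact Subtype.ext (Matrix.toLin'.injective h2)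

theorem two_dvd_exponent (n : ℕ) (hn : 1 ≤ n) :
    2 ∣ Monoid.exponent (Matrix.symplecticGroup (Fin n) (ZMod 2)) := by
  have h : orderOf (SymplecticGroup.symJ (Fin n) (ZMod 2)) = 2 := by
    apply orderOf_eq_prime
    · apply Subtype.ext
      rw [sq, Submonoid.coe_mul, SymplecticGroup.coe_J, Matrix.J_squared, Submonoid.coe_one]
      ext i j
      rw [Matrix.neg_apply, ZMod.neg_eq_self_mod_two]
    · intro h
      have h1 := congrArg Subtype.val h
      rw [SymplecticGroup.coe_J, Submonoid.coe_one] at h1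
      have h2 := congrFun (congrFun h1 (Sum.inl ⟨0, hn⟩)) (Sum.inl ⟨0, hn⟩)
      simp [Matrix.J] at h2
  have h' := Monoid.order_dvd_exponent (SymplecticGroup.symJ (Fin n) (ZMod 2))
  exact h.symm.dvd.trans h'

end SpTwo

theorem galois_action_trivial_on_odd_characters (n : ℕ) (hn : 1 ≤ n)
    (V : FDRep ℂ (Matrix.symplecticGroup (Fin n) (ZMod 2)))
    (hV : CategoryTheory.Simple V)
    (hodd : Odd (Module.finrank ℂ V))
    (m k : ℕ)
    (hm : Nat.Coprime m (Monoid.exponent (Matrix.symplecticGroup (Fin n) (ZMod 2))))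
    (hmod : m ≡ 2 ^ k
      [MOD ordCompl[2] (Monoid.exponent (Matrix.symplecticGroup (Fin n) (ZMod 2)))]) :
    ∀ g : Matrix.symplecticGroup (Fin n) (ZMod 2),
      V.character (g ^ m) = V.character g := by
  intro g
  have hfin : Finite (Matrix.symplecticGroup (Fin n) (ZMod 2)) := Subtype.finite
  have h0 : Monoid.exponent (Matrix.symplecticGroup (Fin n) (ZMod 2)) ≠ 0 :=
    Monoid.exponent_ne_zero_of_finite
  have hoddm : Odd m := by
    rw [← Nat.coprime_two_right]
    exact hm.coprime_dvd_right (SpTwo.two_dvd_exponent n hn)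
  have hs := Nat.ordProj_mul_ordCompl_eq_self
    (Monoid.exponent (Matrix.symplecticGroup (Fin n) (ZMod 2))) 2
  obtain ⟨S, hS⟩ := SpTwo.sp_conj n g _ _ m k (by rw [hs]; exact h0)
    (by rw [hs]; exact Monoid.pow_exponent_eq_one g) hoddm hmod
  rw [← hS, FDRep.char_conj]
end

section
/- Let n ≥ 2 and let R be a Sylow 2-subgroup of Sp_{2n}(F_2). Then the abelianization R/[R,R] is isomorphic, as a group, to the elementary abelian group (ZMod 2)^(n+1). -/
set_option linter.all false

open Matrix

namespace SympAb

/-- The symplectic group over `𝔽₂`. -/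
abbrev G (n : ℕ) := Matrix.symplecticGroup (Fin n) (ZMod 2)

/-- Position of a basis vector in the ordering `e_0, …, e_{n-1}, f_{n-1}, …, f_0`. -/
def rho (n : ℕ) : Fin n ⊕ Fin n → ℕ := Sum.elim (fun i => i.val) (fun i => 2 * n - 1 - i.val)

@[simp] lemma rho_inl {n : ℕ} (i : Fin n) : rho n (Sum.inl i) = i.val := rfl
@[simp] lemma rho_inr {n : ℕ} (i : Fin n) : rho n (Sum.inr i) = 2 * n - 1 - i.val := rfl

lemma rho_lt {n : ℕ} (x : Fin n ⊕ Fin n) : rho n x < 2 * n := by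
  rcases x with i | i <;> simp <;> omega

lemma rho_inj {n : ℕ} {x y : Fin n ⊕ Fin n} (h : rho n x = rho n y) : x = y := by
  rcases x with i | i <;> rcases y with j | j <;> simp at h ⊢ <;> omega

/-- The stabilizer of the standard flag. -/
def U (n : ℕ) : Subgroup (G n) where
  carrier := {M | BlockTriangular M.1 (rho n)}
  mul_mem' {a b} ha hb := by
    change BlockTriangular (a.1 * b.1) (rho n)
    exact BlockTriangular.mul ha hb
  one_mem' := by
    change BlockTriangular (1 : Matrix _ _ _) (rho n)
    exact blockTriangular_one
  inv_mem' {a} ha := by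
    change BlockTriangular (a⁻¹).1 (rho n)
    rw [SymplecticGroup.coe_inv']
    have : Invertible a.1 := invertibleOfIsUnitDet _ (SymplecticGroup.symplectic_det a.2)
    exact blockTriangular_inv_of_blockTriangular ha

lemma mem_U {n : ℕ} {M : G n} : M ∈ U n ↔ BlockTriangular M.1 (rho n) := Iff.rfl

lemma zmod_unit : ∀ a b : ZMod 2, a * b = 1 → a = 1 ∧ b = 1 := by decide

/-- Block description of elements of `U`. -/
lemma U_blocks {n : ℕ} (M : G n) (hM : M ∈ U n) :
    ∃ A B D : Matrix (Fin n) (Fin n) (ZMod 2), M.1 = fromBlocks A B 0 D ∧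
      (∀ i j, j < i → A i j = 0) ∧ (∀ i j, i < j → D i j = 0) ∧
      (∀ i, A i i = 1) ∧ (∀ i, D i i = 1) ∧ Aᵀ * D = 1 ∧ Bᵀ * D = Dᵀ * B := by
  have hC : M.1.toBlocks₂₁ = 0 := by
    ext i j
    exact hM (show rho n (Sum.inl j) < rho n (Sum.inr i) by simp; omega)
  have hM1 : M.1 = fromBlocks M.1.toBlocks₁₁ M.1.toBlocks₁₂ 0 M.1.toBlocks₂₂ := by
    rw [← hC, fromBlocks_toBlocks]
  have hmem := M.2
  rw [hM1, SymplecticGroup.fromBlocks_mem_iff] at hmem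
  obtain ⟨-, h2, h3⟩ := hmem
  have hA : ∀ i j, j < i → M.1.toBlocks₁₁ i j = 0 := fun i j h =>
    hM (show rho n (Sum.inl j) < rho n (Sum.inl i) by simpa using h)
  have hD : ∀ i j, i < j → M.1.toBlocks₂₂ i j = 0 := fun i j h =>
    hM (show rho n (Sum.inr j) < rho n (Sum.inr i) by simp; omega)
  have h3' : M.1.toBlocks₁₁ᵀ * M.1.toBlocks₂₂ = 1 := by simpa using h3
  have hd : ∀ i, M.1.toBlocks₁₁ i i = 1 ∧ M.1.toBlocks₂₂ i i = 1 := by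
    intro i
    apply zmod_unit
    have := congrFun (congrFun h3' i) i
    rw [mul_apply, Finset.sum_eq_single i] at this
    · simpa using this
    · intro k _ hk
      rcases lt_or_gt_of_ne hk with h | h
      · rw [hD k i h, mul_zero]
      · rw [transpose_apply, hA k i h, zero_mul]
    · simp
  exact ⟨_, _, _, hM1, hA, hD, fun i => (hd i).1, fun i => (hd i).2, h3', h2⟩

lemma U_diag {n : ℕ} (M : G n) (hM : M ∈ U n) (x) : M.1 x x = 1 := by
  obtain ⟨A, B, D, h, -, -, hA, hD, -⟩ := U_blocks M hM
  rw [h]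
  rcases x with i | i
  · exact hA i
  · exact hD i

lemma pow_strict {n : ℕ} (N : Matrix (Fin n ⊕ Fin n) (Fin n ⊕ Fin n) (ZMod 2))
    (hN : ∀ x y, rho n y < rho n x + 1 → N x y = 0) (k : ℕ) :
    ∀ x y, rho n y < rho n x + k → (N ^ k) x y = 0 := by
  induction k with
  | zero =>
    intro x y h
    rw [pow_zero, one_apply_ne]
    rintro rfl
    omega
  | succ k ih =>
    intro x y h
    rw [pow_succ, mul_apply]
    apply Finset.sum_eq_zero
    intro z _
    by_cases hz : rho n z < rho n x + k
    · rw [ih x z hz, zero_mul]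
    · rw [hN z y (by omega), mul_zero]

lemma U_isPGroup (n : ℕ) [NeZero n] : IsPGroup 2 (U n) := by
  rintro ⟨M, hM⟩
  refine ⟨2 * n, ?_⟩
  apply Subtype.ext
  apply Subtype.ext
  change M.1 ^ (2 ^ (2 * n)) = 1
  have hN : M.1 = 1 + (M.1 - 1) := by abel
  rw [hN, add_pow_char_pow_of_commute (p := 2) _ (Commute.one_left _), one_pow]
  convert add_zero (1 : Matrix (Fin n ⊕ Fin n) (Fin n ⊕ Fin n) (ZMod 2))
  ext x y
  apply pow_strict
  · intro x y h
    by_cases hxy : x = y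
    · subst hxy
      simp [U_diag M hM]
    · rw [Matrix.sub_apply, one_apply_ne hxy, sub_zero]
      apply hM
      have : rho n x ≠ rho n y := fun h => hxy (rho_inj h)
      omega
  · have := rho_lt y
    have := Nat.lt_two_pow_self (n := 2 * n)
    omega

/-- The root element of `e_i - e_j`. -/
def t {n : ℕ} (i j : Fin n) (h : i < j) : U n :=
  ⟨⟨fromBlocks (1 + single i j 1) 0 0 (1 + single j i 1), by
    rw [SymplecticGroup.fromBlocks_mem_iff]
    refine ⟨by simp, by simp, ?_⟩
    have h2 : single j i (1 : ZMod 2) + single j i 1 = 0 := by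
      rw [← single_add, show (1 + 1 : ZMod 2) = 0 from by decide, single_zero]
    simp [mul_add, add_mul, h.ne, add_assoc, h2]⟩, by
    rw [mem_U]
    rintro (a | a) (b | b) hab
    · simp at hab
      have : a ≠ b := by omega
      simp [this, single_apply]
      omega
    · rfl
    · rfl
    · simp at hab
      have : a ≠ b := by omega
      simp [this, single_apply]
      omega⟩

/-- The unipotent element attached to a symmetric matrix. -/
def u {n : ℕ} (S : Matrix (Fin n) (Fin n) (ZMod 2)) (h : Sᵀ = S) : U n :=
  ⟨⟨fromBlocks 1 S 0 1, by
    rw [SymplecticGroup.fromBlocks_mem_iff]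
    simp [h]⟩, by
    rw [mem_U]
    rintro (a | a) (b | b) hab
    · simp at hab
      have : a ≠ b := by omega
      simp [this]
    · simp at hab
      omega
    · rfl
    · simp at hab
      have : a ≠ b := by omega
      simp [this]⟩

lemma t_val {n : ℕ} (i j : Fin n) (h : i < j) :
    (t i j h).1.1 = fromBlocks (1 + single i j 1) 0 0 (1 + single j i 1) := rfl

lemma u_val {n : ℕ} (S : Matrix (Fin n) (Fin n) (ZMod 2)) (h : Sᵀ = S) :
    (u S h).1.1 = fromBlocks 1 S 0 1 := rfl

/-- Fixed points on successive quotients of the flag. -/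
lemma flag_step {n : ℕ} (k : ℕ) (v : Fin n ⊕ Fin n → ZMod 2)
    (hv : ∀ M ∈ U n, ∀ x, k ≤ rho n x → (M.1 *ᵥ v) x = v x) :
    ∀ x, k + 1 ≤ rho n x → v x = 0 := by
  rintro (i | i) hx
  · simp at hx
    have h := hv _ (t ⟨i.1 - 1, by omega⟩ i (Fin.lt_def.2 (by simp; omega))).2
      (Sum.inl ⟨i.1 - 1, by omega⟩) (by simp; omega)
    rw [t_val, fromBlocks_mulVec] at h
    simpa [add_mulVec, single_mulVec] using h
  · simp at hx
    by_cases hi : i.1 + 1 < n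
    · have h := hv _ (t i ⟨i.1 + 1, hi⟩ (Fin.lt_def.2 (by simp))).2
        (Sum.inr ⟨i.1 + 1, hi⟩) (by simp; omega)
      rw [t_val, fromBlocks_mulVec] at h
      simpa [add_mulVec, single_mulVec] using h
    · have h := hv _ (u (single i i 1) (by simp)).2
        (Sum.inl i) (by simp; omega)
      rw [u_val, fromBlocks_mulVec] at h
      simpa [add_mulVec, single_mulVec] using h

lemma normalizer_flag {n : ℕ} (g : G n) (hg : ∀ M ∈ U n, g⁻¹ * M * g ∈ U n) (k : ℕ) :
    ∀ v : Fin n ⊕ Fin n → ZMod 2, (∀ x, k ≤ rho n x → v x = 0) →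
      ∀ x, k ≤ rho n x → (g.1 *ᵥ v) x = 0 := by
  induction k with
  | zero =>
    intro v hv x _
    have : v = 0 := funext fun x => hv x (Nat.zero_le _)
    simp [this]
  | succ k ih =>
    intro v hv
    apply flag_step
    intro M hM x hx
    have hM' := hg M hM
    have e : M.1 *ᵥ (g.1 *ᵥ v) - g.1 *ᵥ v = g.1 *ᵥ ((g⁻¹ * M * g).1 *ᵥ v - v) := by
      rw [mulVec_sub, mulVec_mulVec, mulVec_mulVec]
      have : M.1 * g.1 = g.1 * (g⁻¹ * M * g).1 := by
        change (M * g).1 = (g * (g⁻¹ * M * g)).1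
        congr 1
        group
      rw [this]
    rw [← sub_eq_zero]
    change (M.1 *ᵥ (g.1 *ᵥ v) - g.1 *ᵥ v) x = 0
    rw [e]
    apply ih _ _ x hx
    intro y hy
    rw [Pi.sub_apply, mulVec, dotProduct, Finset.sum_eq_single y, U_diag _ hM', one_mul, sub_self]
    · intro z _ hz
      have : rho n z ≠ rho n y := fun h => hz (rho_inj h)
      by_cases h : rho n z < rho n y
      · rw [hM' h, zero_mul]
      · rw [hv z (by omega), mul_zero]
    · simp

lemma normalizer_U (n : ℕ) : Subgroup.normalizer (U n : Set (G n)) = U n := by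
  apply le_antisymm _ Subgroup.le_normalizer
  intro g hg
  rw [Subgroup.mem_normalizer_iff''] at hg
  intro x y hxy
  have := normalizer_flag g (fun M hM => (hg M).1 hM) (rho n y + 1) (Pi.single y 1) (by
    intro z hz
    apply Pi.single_eq_of_ne
    rintro rfl
    omega) x hxy
  simpa using this

/-- `U` as a Sylow subgroup. -/
lemma exists_sylow (n : ℕ) [NeZero n] : ∃ P : Sylow 2 (G n), (P : Subgroup (G n)) = U n := by
  obtain ⟨P, hP⟩ := (U_isPGroup n).exists_le_sylow
  refine ⟨P, ?_⟩
  have : Fact (Nat.Prime 2) := ⟨Nat.prime_two⟩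
  have : Group.IsNilpotent P := P.isPGroup'.isNilpotent
  have hnc : NormalizerCondition P := Group.normalizerCondition_of_isNilpotent
  rw [normalizerCondition_iff_only_full_group_self_normalizing] at hnc
  have := hnc ((U n).subgroupOf P) (by
    apply le_antisymm _ Subgroup.le_normalizer
    intro g hg
    rw [Subgroup.mem_subgroupOf, ← normalizer_U n, Subgroup.mem_normalizer_iff]
    rw [Subgroup.mem_normalizer_iff] at hg
    have h1 : ∀ h ∈ U n, (g : G n) * h * (g : G n)⁻¹ ∈ U n := fun h hh => by
      have := (hg ⟨h, hP hh⟩).1 (by simpa [Subgroup.mem_subgroupOf] using hh)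
      simpa [Subgroup.mem_subgroupOf] using this
    have hgi := inv_mem (show g ∈ Subgroup.normalizer ((U n).subgroupOf P : Set P) from Subgroup.mem_normalizer_iff.2 hg)
    rw [Subgroup.mem_normalizer_iff] at hgi
    have h2 : ∀ h ∈ U n, (g : G n)⁻¹ * h * (g : G n) ∈ U n := fun h hh => by
      have := (hgi ⟨h, hP hh⟩).1 (by simpa [Subgroup.mem_subgroupOf] using hh)
      simpa [Subgroup.mem_subgroupOf] using this
    intro h
    refine ⟨h1 h, fun hh => ?_⟩
    have := h2 _ hh
    simpa [mul_assoc] using this)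
  rw [Subgroup.subgroupOf_eq_top] at this
  exact le_antisymm this hP

lemma zmod_add_self (a : ZMod 2) : a + a = 0 := by revert a; decide

lemma single_add_self {n : ℕ} (i j : Fin n) :
    single i j (1 : ZMod 2) + single i j 1 = 0 := by
  rw [← single_add, show (1 + 1 : ZMod 2) = 0 from by decide, single_zero]

lemma mat_add_self {n : ℕ} (S : Matrix (Fin n) (Fin n) (ZMod 2)) : S + S = 0 := by
  ext i j
  exact zmod_add_self _

lemma U_ext {n : ℕ} {M N : U n} (h : M.1.1 = N.1.1) : M = N := Subtype.ext (Subtype.ext h)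

lemma U_mul_val {n : ℕ} (M N : U n) : (M * N).1.1 = M.1.1 * N.1.1 := rfl

lemma u_mul {n : ℕ} (S S' : Matrix (Fin n) (Fin n) (ZMod 2)) (h : Sᵀ = S) (h' : S'ᵀ = S') :
    u S h * u S' h' = u (S + S') (by rw [transpose_add, h, h']) := by
  apply U_ext
  rw [U_mul_val, u_val, u_val, u_val, fromBlocks_multiply]
  simp [add_comm]

lemma u_zero {n : ℕ} : u (0 : Matrix (Fin n) (Fin n) (ZMod 2)) transpose_zero = 1 := by
  apply U_ext
  rw [u_val, fromBlocks_one]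
  rfl

lemma u_sq {n : ℕ} (S : Matrix (Fin n) (Fin n) (ZMod 2)) (h : Sᵀ = S) : u S h * u S h = 1 := by
  rw [u_mul, ← u_zero]
  congr 1
  exact mat_add_self S

lemma t_sq {n : ℕ} (i j : Fin n) (h : i < j) : t i j h * t i j h = 1 := by
  apply U_ext
  rw [U_mul_val, t_val, fromBlocks_multiply]
  simp [mul_add, add_mul, h.ne, h.ne', add_assoc, single_add_self]

/-- The commutator relation between root elements of type `A`. -/
lemma t_comm {n : ℕ} (i j k : Fin n) (h : i < j) (h' : j < k) :
    t i j h * t j k h' = t i k (h.trans h') * (t j k h' * t i j h) := by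
  have h3 := h.trans h'
  apply U_ext
  simp only [U_mul_val, t_val, fromBlocks_multiply]
  have e := single_add_self k i
  simp [mul_add, add_mul, h.ne, h.ne', h'.ne, h'.ne', h3.ne, h3.ne']
  constructor
  · abel
  · abel_nf
    simp [two_smul, single_add_self, mat_add_self]

/-- Conjugation of `u S` by a root element of type `A`. -/
lemma t_conj {n : ℕ} (i j : Fin n) (h : i < j) (S : Matrix (Fin n) (Fin n) (ZMod 2))
    (hS : Sᵀ = S) (S' : Matrix (Fin n) (Fin n) (ZMod 2)) (hS' : S'ᵀ = S')
    (e : (1 + single i j 1) * S = S' * (1 + single j i 1)) :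
    t i j h * u S hS = u S' hS' * t i j h := by
  apply U_ext
  simp only [U_mul_val, t_val, u_val, fromBlocks_multiply]
  simp only [e]
  simp

/-- The symmetric matrix `E_ij + E_ji`. -/
def sym {n : ℕ} (i j : Fin n) : Matrix (Fin n) (Fin n) (ZMod 2) := single i j 1 + single j i 1

lemma sym_t {n : ℕ} (i j : Fin n) : (sym i j)ᵀ = sym i j := by
  simp [sym, add_comm]

lemma diag_t {n : ℕ} (i : Fin n) :
    (single i i 1 : Matrix (Fin n) (Fin n) (ZMod 2))ᵀ = single i i 1 := by simp

section ab
variable {n : ℕ} {C : Type*} [CommGroup C] (q : U n →* C)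

lemma q_t_long (i j k : Fin n) (h : i < j) (h' : j < k) : q (t i k (h.trans h')) = 1 := by
  have := congrArg q (t_comm i j k h h')
  simp only [map_mul] at this
  rw [mul_comm (q (t i j h))] at this
  exact right_eq_mul.1 this

lemma q_diag_sym (i j : Fin n) (h : i < j) :
    q (u (single i i 1) (diag_t i)) * q (u (sym i j) (sym_t i j)) = 1 := by
  have := congrArg q (t_conj i j h (single j j 1) (diag_t j)
    (single j j 1 + (single i i 1 + sym i j)) (by rw [transpose_add, transpose_add, sym_t, diag_t, diag_t]) (by
      simp [sym, mul_add, add_mul, h.ne, h.ne']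
      abel_nf
      simp [two_smul, single_add_self, mat_add_self]))
  rw [← u_mul _ _ (diag_t j) (by rw [transpose_add, sym_t, diag_t]), ← u_mul _ _ (diag_t i) (sym_t i j)] at this
  simp only [map_mul] at this
  rw [mul_comm (q (t i j h)), mul_assoc, mul_assoc] at this
  have := mul_left_cancel this
  rw [← mul_assoc] at this
  exact right_eq_mul.1 this

lemma q_sym (i j k : Fin n) (h : i < j) (hk : k ≠ j) (hik : k ≠ i) :
    q (u (sym i k) (sym_t i k)) = 1 := by
  have := congrArg q (t_conj i j h (sym j k) (sym_t j k)
    (sym j k + sym i k) (by rw [transpose_add, sym_t, sym_t]) (by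
      simp [sym, mul_add, add_mul, h.ne, h.ne', hk, hk.symm, hik, hik.symm]
      abel_nf
      simp [two_smul, single_add_self, mat_add_self]))
  rw [← u_mul _ _ (sym_t j k) (sym_t i k)] at this
  simp only [map_mul] at this
  rw [mul_comm (q (t i j h)), mul_assoc] at this
  have := mul_left_cancel this
  exact right_eq_mul.1 this

end ab

section gen
variable {m : ℕ}

/-- Index type for the generators. -/
abbrev Idx (m : ℕ) := Fin (m + 1) ⊕ Bool

/-- The last but one index. -/
abbrev pp (m : ℕ) : Fin (m + 2) := (Fin.last m).castSucc
/-- The last index. -/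
abbrev qq (m : ℕ) : Fin (m + 2) := Fin.last (m + 1)

/-- The generators. -/
def gen : Idx m → U (m + 2)
  | Sum.inl i => t i.castSucc i.succ Fin.castSucc_lt_succ
  | Sum.inr false => u (single (qq m) (qq m) 1) (diag_t _)
  | Sum.inr true => u (single (pp m) (pp m) 1) (diag_t _)

lemma gen_sq (x : Idx m) : gen x * gen x = 1 := by
  rcases x with i | (_ | _)
  · exact t_sq _ _ Fin.castSucc_lt_succ
  · exact u_sq _ (diag_t _)
  · exact u_sq _ (diag_t _)

variable {C : Type*} [CommGroup C] (q : U (m + 2) →* C) (T : Subgroup C)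

lemma q_t_mem (hT : ∀ x : Idx m, q (gen x) ∈ T) (i j : Fin (m + 2)) (h : i < j) : q (t i j h) ∈ T := by
  by_cases hj : j.1 = i.1 + 1
  · have hi : i.1 < m + 1 := by omega
    have := hT (Sum.inl ⟨i.1, hi⟩)
    have e : t i j h = gen (m := m) (Sum.inl ⟨i.1, hi⟩) := by
      simp only [gen]
      congr 1
      ext
      simp [hj]
    rw [e]
    exact this
  · have h1 : i < (⟨i.1 + 1, by omega⟩ : Fin (m + 2)) := Fin.lt_def.2 (by simp)
    have h2 : (⟨i.1 + 1, by omega⟩ : Fin (m + 2)) < j := Fin.lt_def.2 (by simp; omega)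
    rw [q_t_long q i _ j h1 h2]
    exact one_mem _

lemma q_sym_mem (hT : ∀ x : Idx m, q (gen x) ∈ T) (i j : Fin (m + 2)) (h : i < j) : q (u (sym i j) (sym_t i j)) ∈ T := by
  by_cases hi : i.1 = m
  · have e1 : i = pp m := by ext; simp [hi]
    have h1 := q_diag_sym q i j h
    rw [eq_inv_of_mul_eq_one_right h1]
    subst e1
    exact inv_mem (hT (Sum.inr true))
  · by_cases hj : j = qq m
    · rw [q_sym q i (pp m) j (Fin.lt_def.2 (by simp; omega)) (by rw [hj]; simp [Fin.ext_iff]) h.ne']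
      exact one_mem _
    · rw [q_sym q i (qq m) j (Fin.lt_def.2 (by simp; omega)) hj h.ne']
      exact one_mem _

lemma q_diag_mem (hT : ∀ x : Idx m, q (gen x) ∈ T) (i : Fin (m + 2)) : q (u (single i i 1) (diag_t i)) ∈ T := by
  by_cases hi : i = qq m
  · subst hi
    exact hT (Sum.inr false)
  · have h := q_diag_sym q i (qq m) (Fin.lt_last_iff_ne_last.2 hi)
    rw [eq_inv_of_mul_eq_one_left h]
    exact inv_mem (q_sym_mem q T hT _ _ (Fin.lt_last_iff_ne_last.2 hi))

lemma q_u_mem (hT : ∀ x : Idx m, q (gen x) ∈ T) (S : Matrix (Fin (m + 2)) (Fin (m + 2)) (ZMod 2)) (hS : Sᵀ = S) :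
    q (u S hS) ∈ T := by
  let P : AddSubmonoid (Matrix (Fin (m + 2)) (Fin (m + 2)) (ZMod 2)) :=
    { carrier := {S | ∃ h : Sᵀ = S, q (u S h) ∈ T}
      zero_mem' := ⟨transpose_zero, by rw [u_zero, map_one]; exact one_mem _⟩
      add_mem' := by
        rintro a b ⟨ha, ha'⟩ ⟨hb, hb'⟩
        refine ⟨by rw [transpose_add, ha, hb], ?_⟩
        rw [← u_mul _ _ ha hb, map_mul]
        exact mul_mem ha' hb' }
  have key : S = ∑ i, ∑ j, if i < j then S i j • sym i j else
      if i = j then S i j • single i j 1 else 0 := by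
    ext a b
    simp only [Matrix.sum_apply]
    have hab : S a b = S b a := by rw [← transpose_apply S, hS]
    rcases lt_trichotomy a b with h | h | h
    · rw [Finset.sum_eq_single a, Finset.sum_eq_single b]
      · simp [h, sym, single_apply, h.ne]
      · intro j _ hj
        split_ifs with h1 h2
        · simp [sym, single_apply, hj, h.ne]
        · simp [single_apply, hj]
        · rfl
      · simp
      · intro i _ hi
        apply Finset.sum_eq_zero
        intro j _
        split_ifs with h1 h2
        · simp [sym, single_apply, hi]
          omega
        · simp [single_apply, hi]
        · rfl
      · simp
    · subst h
      rw [Finset.sum_eq_single a, Finset.sum_eq_single a]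
      · simp
      · intro j _ hj
        split_ifs with h1 h2
        · simp [sym, single_apply, hj]
        · simp [single_apply, hj]
        · rfl
      · simp
      · intro i _ hi
        apply Finset.sum_eq_zero
        intro j _
        split_ifs with h1 h2
        · simp [sym, single_apply, hi]
        · simp [single_apply, hi]
        · rfl
      · simp
    · rw [Finset.sum_eq_single b, Finset.sum_eq_single a]
      · simp [h, sym, single_apply, h.ne, hab]
      · intro j _ hj
        split_ifs with h1 h2
        · simp [sym, single_apply, hj, h.ne]
        · simp [single_apply]
          omega
        · rfl
      · simp
      · intro i _ hi
        apply Finset.sum_eq_zero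
        intro j _
        split_ifs with h1 h2
        · simp [sym, single_apply, hi]
          omega
        · simp [single_apply]
          omega
        · rfl
      · simp
  have hsmul : ∀ (c : ZMod 2) (X : Matrix (Fin (m + 2)) (Fin (m + 2)) (ZMod 2)), X ∈ P → c • X ∈ P := by
    intro c X hX
    have : c = 0 ∨ c = 1 := by revert c; decide
    rcases this with rfl | rfl
    · rw [zero_smul]; exact zero_mem _
    · rwa [one_smul]
  have : S ∈ P := by
    rw [key]
    refine sum_mem fun i _ => sum_mem fun j _ => ?_
    split_ifs with h1 h2
    · exact hsmul _ _ ⟨sym_t i j, q_sym_mem q T hT i j h1⟩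
    · subst h2
      exact hsmul _ _ ⟨diag_t i, q_diag_mem q T hT i⟩
    · exact zero_mem _
  obtain ⟨_, h⟩ := this
  exact h

/-- Row elimination for unitriangular matrices. -/
lemma q_A_mem (hT : ∀ x : Idx m, q (gen x) ∈ T) (k : ℕ) : ∀ A : Matrix (Fin (m + 2)) (Fin (m + 2)) (ZMod 2),
    (∀ i j, j < i → A i j = 0) → (∀ i, A i i = 1) →
    (Finset.univ.filter fun x : Fin (m + 2) × Fin (m + 2) => A x.1 x.2 ≠ 0).card ≤ k →
    ∃ (M : U (m + 2)) (D : _), M.1.1 = fromBlocks A 0 0 D ∧ q M ∈ T := by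
  induction k with
  | zero =>
    intro A _ h1 hk
    rw [Nat.le_zero, Finset.card_eq_zero] at hk
    have : ((0 : Fin (m + 2)), (0 : Fin (m + 2))) ∈ (Finset.univ.filter
      fun x : Fin (m + 2) × Fin (m + 2) => A x.1 x.2 ≠ 0) := by simp [h1]
    rw [hk] at this
    simp at this
  | succ k ih =>
    intro A h0 h1 hk
    by_cases hA : A = 1
    · refine ⟨1, 1, ?_, by rw [map_one]; exact one_mem _⟩
      rw [hA, fromBlocks_one]
      rfl
    · classical
      obtain ⟨i, ⟨j, hij, hne⟩, hmax⟩ : ∃ i, (∃ j, i < j ∧ A i j ≠ 0) ∧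
          ∀ a, i < a → ∀ j, a < j → A a j = 0 := by
        have hne : (Finset.univ.filter fun i : Fin (m + 2) => ∃ j, i < j ∧ A i j ≠ 0).Nonempty := by
          by_contra hcon
          rw [Finset.not_nonempty_iff_eq_empty, Finset.filter_eq_empty_iff] at hcon
          apply hA
          ext a b
          rcases lt_trichotomy a b with h | h | h
          · have := hcon (Finset.mem_univ a)
            push Not at this
            rw [this b h, one_apply_ne h.ne]
          · subst h
            rw [h1, one_apply_eq]
          · rw [h0 a b h, one_apply_ne h.ne']
        obtain ⟨i, hi⟩ := Finset.exists_maximal hne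
        refine ⟨i, (Finset.mem_filter.1 hi.1).2, ?_⟩
        intro a ha j haj
        by_contra hcon
        exact absurd (hi.2 (Finset.mem_filter.2 ⟨Finset.mem_univ a, j, haj, hcon⟩) ha.le) (not_le.2 ha)
      have hrow : ∀ b, A j b = (1 : Matrix (Fin (m + 2)) (Fin (m + 2)) (ZMod 2)) j b := by
        intro b
        rcases lt_trichotomy j b with h | h | h
        · rw [hmax j hij b h, one_apply_ne h.ne]
        · subst h
          rw [h1, one_apply_eq]
        · rw [h0 j b h, one_apply_ne h.ne']
      have hAij : A i j = 1 := by
        revert hne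
        generalize A i j = a
        revert a
        decide
      have hent : ∀ a b, (A + single i j 1 : Matrix (Fin (m + 2)) (Fin (m + 2)) (ZMod 2)) a b = if a = i ∧ b = j then 0 else A a b := by
        intro a b
        rw [Matrix.add_apply]
        split_ifs with h
        · rw [h.1, h.2, hAij, single_apply_same]
          decide
        · rw [single_apply_of_ne, add_zero]
          tauto
      obtain ⟨M, D, hM, hq⟩ := ih (A + single i j 1) (by
          intro a b hab
          rw [hent, h0 a b hab]
          simp) (by
          intro a
          rw [hent, h1, if_neg]
          rintro ⟨rfl, h⟩
          exact hij.ne h) (by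
          apply Nat.le_of_lt_succ
          refine lt_of_lt_of_le (Finset.card_lt_card ?_) hk
          rw [Finset.ssubset_iff_of_subset]
          · exact ⟨(i, j), by simp [hAij], by
              simp only [Finset.mem_filter, hent]
              simp⟩
          · intro x
            simp only [Finset.mem_filter, Finset.mem_univ, true_and, hent]
            split_ifs <;> simp)
      refine ⟨t i j hij * M, (1 + single j i 1) * D, ?_, ?_⟩
      · rw [U_mul_val, t_val, hM, fromBlocks_multiply]
        have e : single i j 1 * A = single i j (1 : ZMod 2) := by
          ext a b
          by_cases ha : a = i
          · subst ha
            simp [hrow, one_apply, single_apply]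
          · simp [ha, single_apply, Ne.symm ha]
        have e2 : (1 + single i j 1) * (A + single i j 1) = A := by
          rw [add_mul, mul_add, mul_add, e]
          simp [hij.ne', add_assoc, single_add_self]
        rw [e2]
        simp
      · rw [map_mul]
        exact mul_mem (q_t_mem q T hT i j hij) hq

lemma q_mem (hT : ∀ x : Idx m, q (gen x) ∈ T) (M : U (m + 2)) : q M ∈ T := by
  obtain ⟨A, B, D, hM, hA, -, hA1, -, hAD, hBD⟩ := U_blocks M.1 M.2
  obtain ⟨N, D', hN, hq⟩ := q_A_mem q T hT _ A hA hA1 le_rfl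
  have hS : (Dᵀ * B)ᵀ = Dᵀ * B := by
    rw [transpose_mul, transpose_transpose, hBD]
  have hDD : D' = D := by
    have := N.1.2
    rw [hN, SymplecticGroup.fromBlocks_mem_iff] at this
    have h3 : Aᵀ * D' = 1 := by simpa using this.2.2
    have h4 : D * Aᵀ = 1 := mul_eq_one_comm.1 hAD
    calc D' = (D * Aᵀ) * D' := by rw [h4, one_mul]
      _ = D := by rw [mul_assoc, h3, mul_one]
  have hADt : A * Dᵀ = 1 := by
    have h4 : D * Aᵀ = 1 := mul_eq_one_comm.1 hAD
    have := congrArg transpose h4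
    simpa using this
  have : M = N * u (Dᵀ * B) hS := by
    apply U_ext
    rw [U_mul_val, u_val, hN, hM, hDD, fromBlocks_multiply]
    simp [← mul_assoc, hADt]
  rw [this, map_mul]
  exact mul_mem hq (q_u_mem q T hT _ hS)

end gen

section hom
variable {m : ℕ}

lemma sum_pq (f : Fin (m + 2) → ZMod 2) (h : ∀ k, k < pp m → f k = 0) :
    ∑ k, f k = f (pp m) + f (qq m) := by
  rw [Fin.sum_univ_castSucc, Fin.sum_univ_castSucc, Finset.sum_eq_zero, zero_add]
  intro k _
  apply h
  exact Fin.castSucc_lt_castSucc_iff.2 (Fin.castSucc_lt_last k)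

lemma pq_lt : pp m < qq m := Fin.castSucc_lt_last _

/-- The explicit homomorphism to an elementary abelian group, as a function. -/
def phiFun (M : U (m + 2)) : Idx m → ZMod 2
  | Sum.inl i => M.1.1 (Sum.inl i.castSucc) (Sum.inl i.succ)
  | Sum.inr false => M.1.1 (Sum.inl (qq m)) (Sum.inr (qq m))
  | Sum.inr true => M.1.1 (Sum.inl (pp m)) (Sum.inr (pp m)) +
      M.1.1 (Sum.inl (pp m)) (Sum.inl (qq m)) * M.1.1 (Sum.inl (pp m)) (Sum.inr (qq m)) +
      M.1.1 (Sum.inl (pp m)) (Sum.inr (qq m))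

lemma arith : ∀ a b c d a' b' c' d' e' f' : ZMod 2, a' + f' = 0 → b' + d' * f' = e' →
    ((c' + a * e') + (c + b * f')) + (a' + a) * ((b' + a * d') + b) + ((b' + a * d') + b) =
      (c + a * b + b) + (c' + a' * b' + b') := by
  intro a b c d a' b' c' d' e' f' h1 h2
  have h0 : ∀ x y : ZMod 2, x + y = 0 → x = y := by decide
  have h2' : ∀ x : ZMod 2, x + x = 0 := by decide
  have h3 : ∀ x : ZMod 2, x * x = x := by decide
  have := h0 _ _ h1
  subst this h2
  linear_combination h2' (a * b') + h2' (a * a' * d') + h2' (a' * b) + d' * h3 a + h2' (a * d')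

lemma phi_mul (M N : U (m + 2)) : phiFun (M * N) = phiFun M + phiFun N := by
  obtain ⟨A, B, D, hM, hA, hD, hA1, hD1, hAD, hBD⟩ := U_blocks M.1 M.2
  obtain ⟨A', B', D', hN, hA', hD', hA1', hD1', hAD', hBD'⟩ := U_blocks N.1 N.2
  have hMN : (M * N).1.1 = fromBlocks (A * A') (A * B' + B * D') 0 (D * D') := by
    rw [U_mul_val, hM, hN, fromBlocks_multiply]
    simp
  have hpq := pq_lt (m := m)
  funext x
  rcases x with i | (_ | _)
  · simp only [phiFun, hMN, hM, hN, Pi.add_apply, fromBlocks_apply₁₁]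
    rw [mul_apply, Finset.sum_eq_add i.castSucc i.succ (Fin.castSucc_lt_succ).ne]
    · rw [hA1, hA1', one_mul, mul_one, add_comm]
    · intro k _ hk
      by_cases h1 : k < i.castSucc
      · rw [hA _ _ h1, zero_mul]
      · rw [hA' k, mul_zero]
        rw [not_lt] at h1
        have h2 := lt_of_le_of_ne h1 hk.1.symm
        rw [Fin.castSucc_lt_iff_succ_le] at h2
        exact lt_of_le_of_ne h2 hk.2.symm
    · simp
    · simp
  · simp only [phiFun, hMN, hM, hN, Pi.add_apply, fromBlocks_apply₁₂]
    rw [Matrix.add_apply, mul_apply, mul_apply, sum_pq, sum_pq]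
    · rw [hA _ _ hpq, hD' _ _ hpq, hA1, hD1']
      ring
    · intro k hk
      rw [hD' _ _ (hk.trans hpq), mul_zero]
    · intro k hk
      rw [hA _ _ (hk.trans hpq), zero_mul]
  · simp only [phiFun, hMN, hM, hN, Pi.add_apply, fromBlocks_apply₁₂, fromBlocks_apply₁₁]
    have r1 : A' (pp m) (qq m) + D' (qq m) (pp m) = 0 := by
      have := congrFun (congrFun hAD' (qq m)) (pp m)
      rw [mul_apply, sum_pq, one_apply_ne hpq.ne'] at this
      · simpa [hA1', hD1'] using this
      · intro k hk
        rw [hD' _ _ hk, mul_zero]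
    have r2 : B' (pp m) (qq m) + B' (qq m) (qq m) * D' (qq m) (pp m) = B' (qq m) (pp m) := by
      have := congrFun (congrFun hBD' (qq m)) (pp m)
      rw [mul_apply, sum_pq, mul_apply, sum_pq] at this
      · simpa [hD1', hD' _ _ hpq] using this
      · intro k hk
        rw [transpose_apply, hD' _ _ (hk.trans hpq), zero_mul]
      · intro k hk
        rw [hD' _ _ hk, mul_zero]
    have e1 : (A * B' + B * D') (pp m) (pp m) =
        (B' (pp m) (pp m) + A (pp m) (qq m) * B' (qq m) (pp m)) +
        (B (pp m) (pp m) + B (pp m) (qq m) * D' (qq m) (pp m)) := by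
      rw [Matrix.add_apply, mul_apply, mul_apply, sum_pq, sum_pq]
      · rw [hA1, hD1']
        ring
      · intro k hk
        rw [hD' _ _ hk, mul_zero]
      · intro k hk
        rw [hA _ _ hk, zero_mul]
    have e2 : (A * B' + B * D') (pp m) (qq m) =
        (B' (pp m) (qq m) + A (pp m) (qq m) * B' (qq m) (qq m)) + B (pp m) (qq m) := by
      rw [Matrix.add_apply, mul_apply, mul_apply, sum_pq, sum_pq]
      · rw [hA1, hD1', hD' _ _ hpq]
        ring
      · intro k hk
        rw [hD' _ _ (hk.trans hpq), mul_zero]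
      · intro k hk
        rw [hA _ _ hk, zero_mul]
    have e3 : (A * A') (pp m) (qq m) = A' (pp m) (qq m) + A (pp m) (qq m) := by
      rw [mul_apply, sum_pq]
      · rw [hA1, hA1']
        ring
      · intro k hk
        rw [hA _ _ hk, zero_mul]
    rw [e1, e2, e3]
    exact arith _ _ _ 0 _ _ _ _ _ _ r1 r2

/-- The explicit homomorphism. -/
def phi : U (m + 2) →* Multiplicative (Idx m → ZMod 2) :=
  MonoidHom.mk' (fun M => Multiplicative.ofAdd (phiFun M)) fun M N => by
    rw [phi_mul, ofAdd_add]

lemma phi_gen (x : Idx m) : phi (gen x) = Multiplicative.ofAdd (Pi.single x 1) := by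
  have hpq := pq_lt (m := m)
  change Multiplicative.ofAdd (phiFun (gen x)) = _
  congr 1
  funext y
  rcases x with i | (_ | _)
  · have hv : (gen (m := m) (Sum.inl i)).1.1 = _ := t_val i.castSucc i.succ Fin.castSucc_lt_succ
    rcases y with j | (_ | _)
    · simp only [phiFun, hv, fromBlocks_apply₁₁]
      rw [Matrix.add_apply, one_apply_ne (Fin.castSucc_lt_succ).ne, zero_add]
      by_cases h : i = j
      · subst h
        simp
      · rw [single_apply_of_ne, Pi.single_eq_of_ne]
        · simpa using Ne.symm h
        · simp [h]
    · simp [phiFun, hv]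
    · simp [phiFun, hv]
  · have hv : (gen (m := m) (Sum.inr false)).1.1 = _ := u_val (single (qq m) (qq m) 1) (diag_t _)
    rcases y with j | (_ | _)
    · simp [phiFun, hv, (Fin.castSucc_lt_succ (i := j)).ne]
    · simp [phiFun, hv]
    · simp [phiFun, hv, hpq.ne']
  · have hv : (gen (m := m) (Sum.inr true)).1.1 = _ := u_val (single (pp m) (pp m) 1) (diag_t _)
    rcases y with j | (_ | _)
    · simp [phiFun, hv, (Fin.castSucc_lt_succ (i := j)).ne]
    · simp [phiFun, hv, hpq.ne, hpq.ne']
    · simp [phiFun, hv, hpq.ne, hpq.ne']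

lemma pow_val_add {C : Type*} [CommGroup C] (g : C) (hg : g * g = 1) :
    ∀ a b : ZMod 2, g ^ (a + b).val = g ^ a.val * g ^ b.val := by
  intro a b
  have ha : a = 0 ∨ a = 1 := by revert a; decide
  have hb : b = 0 ∨ b = 1 := by revert b; decide
  rcases ha with rfl | rfl <;> rcases hb with rfl | rfl
  · simp
  · simp
  · simp
  · rw [show (1 + 1 : ZMod 2) = 0 from by decide]
    simp [ZMod.val_one, hg]

/-- The inverse homomorphism. -/
def psi : Multiplicative (Idx m → ZMod 2) →* Abelianization (U (m + 2)) :=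
  MonoidHom.mk' (fun v => ∏ x, (Abelianization.of (gen x)) ^ (Multiplicative.toAdd v x).val)
    fun v w => by
      rw [← Finset.prod_mul_distrib]
      refine Finset.prod_congr rfl fun x _ => ?_
      rw [toAdd_mul, Pi.add_apply]
      apply pow_val_add
      rw [← map_mul, gen_sq, map_one]

lemma psi_single (x : Idx m) :
    psi (Multiplicative.ofAdd (Pi.single x 1)) = Abelianization.of (gen x) := by
  change ∏ y, (Abelianization.of (gen y)) ^ ((Pi.single x 1 : Idx m → ZMod 2) y).val = _
  rw [Finset.prod_eq_single x]
  · simp [ZMod.val_one]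
  · intro y _ hy
    simp [Pi.single_eq_of_ne hy]
  · simp

lemma lift_psi (v : Multiplicative (Idx m → ZMod 2)) :
    Abelianization.lift phi (psi v) = v := by
  change Abelianization.lift phi
    (∏ x, (Abelianization.of (gen x)) ^ (Multiplicative.toAdd v x).val) = v
  rw [map_prod]
  simp only [map_pow, Abelianization.lift_apply_of, phi_gen]
  apply Multiplicative.toAdd.injective
  rw [toAdd_prod]
  funext y
  rw [Finset.sum_apply, Finset.sum_eq_single y]
  · simp
  · intro x _ hx
    simp [Pi.single_eq_of_ne hx.symm]
  · simp

lemma psi_surj : Function.Surjective (psi (m := m)) := by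
  intro c
  obtain ⟨M, rfl⟩ := QuotientGroup.mk_surjective c
  exact q_mem Abelianization.of (psi (m := m)).range
      (fun x => ⟨_, psi_single x⟩) M

end hom

end SympAb

/-- Let `n ≥ 2` and let `R` be a Sylow `2`-subgroup of `Sp_{2n}(𝔽₂)`. Then the
abelianization `R/[R,R]` is isomorphic to the elementary abelian group `(ZMod 2)^(n+1)`. -/
theorem abelianization_sylow_two_symplectic (n : ℕ) (hn : 2 ≤ n)
    (R : Sylow 2 (Matrix.symplecticGroup (Fin n) (ZMod 2))) :
    Nonempty (Abelianization R ≃* Multiplicative (Fin (n + 1) → ZMod 2)) := by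
  obtain ⟨m, rfl⟩ : ∃ m, n = m + 2 := ⟨n - 2, by omega⟩
  have : Fact (Nat.Prime 2) := ⟨Nat.prime_two⟩
  obtain ⟨P, hP⟩ := SympAb.exists_sylow (m + 2)
  have e1 : R ≃* SympAb.U (m + 2) := (R.equiv P).trans (MulEquiv.subgroupCongr hP)
  have e2 : Multiplicative (SympAb.Idx m → ZMod 2) ≃* Abelianization (SympAb.U (m + 2)) :=
    MulEquiv.ofBijective SympAb.psi
      ⟨Function.LeftInverse.injective SympAb.lift_psi, SympAb.psi_surj⟩
  have e3 : SympAb.Idx m ≃ Fin (m + 2 + 1) := Fintype.equivFinOfCardEq (by simp)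
  exact ⟨(e1.abelianizationCongr.trans e2.symm).trans
    (AddEquiv.toMultiplicative (LinearEquiv.funCongrLeft (ZMod 2) (ZMod 2) e3.symm).toAddEquiv)⟩
end
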